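/- Let M be a 3-connected excluded minor of \overline{BL} having a U_{2,4}-minor, with corank r*(M) \ge 3. Then there exists an element e of M with r(co(M\\e)) \ge r(M) \u2212 3 such that co(M\\e) is 3-connected and has a U_{2,4}-minor. -/

import Mathlib

/-!
The proof works in the dual. Write `r` for the rank function of `M✶` on the ground set `E`, which is
finite (`ExcludedMinorBL.finite`, a compactness argument by ultraproducts of graphs). The matroid
`co(M \ e)` is the dual of the simplification of `M✶ / e`, so it suffices to find `e` with the three
properties collected in `Works`: the 2-separations of `M✶ / e` have a side of rank at most one, a
`U₂,₄`-minor survives the contraction of `e`, and after removing at most three elements besides `e`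
no triangle through `e` is left. The lemma `transfer` turns these into the statement.

If `|E| = r(E) + 2`, then 3-connectivity makes the matroid uniform and every `e` works
(`works_of_card_eq`). Otherwise some deletion `M✶ \ x` keeps a `U₂,₄`-minor. Its dual `M / x` is a
proper minor of `M` which is not graphic, hence bicircular lift, and therefore `M✶ \ x` is the
truncation of the dual of a graphic matroid (`star`). This dual has a rank function `ρ` of rank
`r(E) + 1`, called a lift here, which is binary with the cut space of a graph as its cycle space.

Choose `x` and a dependent component `A` of the lift with `A` as large as possible. By maximality
and 3-connectivity all other elements of the lift are coloops (`exists_setup`).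

If `ρ(A) ≥ 3`, then a statement on the graph with edge set `A` (`graph_lemma`) provides `e ∈ A`, off
a prescribed element, whose contraction leaves `A` connected and such that the 3-cuts containing `e`
are stars of ends of `e`. Connectivity of the contraction gives the statement on separations
(`Setup.goal1`) and the `U₂,₄`-minor (`Setup.goal2`); the triangles of `M✶ \ x` through `e` are
3-cuts, so they are met by two elements, and `x` meets the remaining triangles (`Setup.goal3`).

If `ρ(A) = 2`, then `A` is a triangle. The only obstruction to an element of `A` is being spanned by
`x` and all but one of the coloops, and if all three elements of `A` were obstructed, then the lift
belonging to the deletion of one of them would have too small a rank (`Setup.exists_of_two`).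
-/

open Set Matroid

universe u

namespace BLFormal

/-! ### Matroid preliminaries -/

/-- A circuit of a matroid: a minimal dependent set. -/
def Circuit {α : Type u} (M : Matroid α) (C : Set α) : Prop := Minimal M.Dep C

/-- Deletion of a set of elements from a matroid. -/
def del {α : Type u} (M : Matroid α) (D : Set α) : Matroid α := M ↾ (M.E \ D)

/-- Contraction of a set of elements of a matroid, defined by duality. -/
def con {α : Type u} (M : Matroid α) (C : Set α) : Matroid α := (del M✶ C)✶

/-- `N` is a minor of `M` if it is obtained by a contraction followed by a deletion. -/
def IsMinor {α : Type u} (N M : Matroid α) : Prop := ∃ C D : Set α, N = del (con M C) D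

/-- `N` is a proper (strict) minor of `M`. -/
def IsStrictMinor {α : Type u} (N M : Matroid α) : Prop := IsMinor N M ∧ N ≠ M

/-- The rank of a set `X` in the matroid `M`, as an extended natural number:
the supremum of the cardinalities of the independent subsets of `X`. -/
noncomputable def eRk {α : Type u} (M : Matroid α) (X : Set α) : ℕ∞ :=
  ⨆ I : {I : Set α // M.Indep I ∧ I ⊆ X}, (I : Set α).encard

/-- The rank `r(M)` of a matroid, as an extended natural number. -/
noncomputable def eRank {α : Type u} (M : Matroid α) : ℕ∞ := eRk M M.E

/-- A loop of a matroid. -/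
def MLoop {α : Type u} (M : Matroid α) (e : α) : Prop := M.Dep {e}

/-- A coloop of a matroid: a loop of the dual. -/
def MColoop {α : Type u} (M : Matroid α) (e : α) : Prop := MLoop M✶ e

/-- A `k`-separation of a matroid: a partition `(X, Y)` of the ground set with
`|X|, |Y| ≥ k` and `r(X) + r(Y) - r(M) ≤ k - 1`. -/
def IsKSep {α : Type u} (M : Matroid α) (k : ℕ) (X Y : Set α) : Prop :=
  X ∪ Y = M.E ∧ Disjoint X Y ∧ (k : ℕ∞) ≤ X.encard ∧ (k : ℕ∞) ≤ Y.encard ∧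
    eRk M X + eRk M Y ≤ eRank M + ((k - 1 : ℕ) : ℕ∞)

/-- A matroid is connected if it has no 1-separation. -/
def MConnected {α : Type u} (M : Matroid α) : Prop := ¬ ∃ X Y, IsKSep M 1 X Y

/-- A matroid is 3-connected if it is connected and has no 2-separation. -/
def ThreeConnected {α : Type u} (M : Matroid α) : Prop :=
  MConnected M ∧ ¬ ∃ X Y, IsKSep M 2 X Y

/-- Two elements of a matroid form a series pair if no circuit contains exactly one
of them, and some circuit contains both. -/
def SeriesPair {α : Type u} (M : Matroid α) (e f : α) : Prop :=
  (∀ C, Circuit M C → (e ∈ C ↔ f ∈ C)) ∧ ∃ C, Circuit M C ∧ e ∈ C ∧ f ∈ C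

/-- A series class: a maximal set in which every two elements form a series pair. -/
def IsSeriesClass {α : Type u} (M : Matroid α) (S : Set α) : Prop :=
  Maximal (fun T => T.Nonempty ∧ ∀ e ∈ T, ∀ f ∈ T, SeriesPair M e f) S

/-- `N` is a cosimplification `co(M)` of `M`: it is obtained from `M` by contracting
all coloops and, in each series class, all but one element. -/
def IsCosimplification {α : Type u} (M N : Matroid α) : Prop :=
  ∃ D ⊆ M.E, N = con M D ∧ (∀ e, MColoop M e → e ∈ D) ∧
    ∀ S, IsSeriesClass M S → ∃ x ∈ S, S \ D = {x}

/-- `M` is isomorphic to the uniform matroid `U_{k, n}`: the ground set has `n` elements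
and the circuits are precisely the `(k+1)`-element subsets of the ground set. -/
def IsUnif {α : Type u} (k n : ℕ) (M : Matroid α) : Prop :=
  M.E.encard = n ∧ ∀ C, Circuit M C ↔ C ⊆ M.E ∧ C.encard = k + 1

/-- `M` has a `U_{2,4}`-minor. -/
def HasU24Minor {α : Type u} (M : Matroid α) : Prop := ∃ N, IsMinor N M ∧ IsUnif 2 4 N

/-- `M` is isomorphic to the direct sum `U_{2,4} ⊕ U_{0,1}` of `U_{2,4}` and a loop:
its ground set consists of a 4-element set `X` together with one further element `l`,
and its circuits are `{l}` and the 3-element subsets of `X`. -/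
def IsU24PlusLoop {α : Type u} (M : Matroid α) : Prop :=
  ∃ (X : Set α) (l : α), l ∉ X ∧ M.E = insert l X ∧ X.encard = 4 ∧
    ∀ C, Circuit M C ↔ (C = {l} ∨ (C ⊆ X ∧ C.encard = 3))

/-- `M` is isomorphic to the Fano matroid `F₇`: the rank-3 matroid represented over
`GF(2)` by the seven nonzero vectors of `GF(2)³`. -/
def IsFano {α : Type u} (M : Matroid α) : Prop :=
  ∃ v : α → (Fin 3 → ZMod 2),
    Set.BijOn v M.E {w | w ≠ 0} ∧
    ∀ I ⊆ M.E, (M.Indep I ↔ LinearIndependent (ZMod 2) (fun x : I => v x))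

/-! ### Graphs (with loops and parallel edges allowed) -/

/-- A graph on vertex type `V`, with edge set `E` living in the ambient edge type `α`;
each edge is sent to the unordered pair of its end-vertices. -/
structure Graph (V : Type u) (α : Type u) where
  E : Set α
  inc : α → Sym2 V

namespace Graph

variable {V : Type u} {α : Type u}

/-- The vertices incident with an edge set `C`. -/
def vertsOf (G : Graph V α) (C : Set α) : Set V := {v | ∃ e ∈ C, v ∈ G.inc e}

/-- The vertex set of a graph (we consider graphs without isolated vertices). -/
def verts (G : Graph V α) : Set V := G.vertsOf G.E

/-- Deletion of a set of edges from a graph. -/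
def delete (G : Graph V α) (D : Set α) : Graph V α := ⟨G.E \ D, G.inc⟩

/-- The degree of a vertex `v` in the edge set `C`, with loops counting twice. -/
noncomputable def deg (G : Graph V α) (C : Set α) (v : V) : ℕ :=
  {e ∈ C | v ∈ G.inc e}.ncard + {e ∈ C | G.inc e = Sym2.diag v}.ncard

/-- Two vertices are adjacent via an edge of `C`. -/
def AdjOn (G : Graph V α) (C : Set α) (u v : V) : Prop := ∃ e ∈ C, G.inc e = s(u, v)

/-- The subgraph with edge set `C` is connected. -/
def ConnectedOn (G : Graph V α) (C : Set α) : Prop :=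
  ∀ u ∈ G.vertsOf C, ∀ v ∈ G.vertsOf C, Relation.ReflTransGen (G.AdjOn C) u v

/-- `C` is a cycle of `G` : the edge set of a connected 2-regular subgraph. -/
def IsCycle (G : Graph V α) (C : Set α) : Prop :=
  C ⊆ G.E ∧ C.Finite ∧ C.Nonempty ∧ (∀ v ∈ G.vertsOf C, G.deg C v = 2) ∧ G.ConnectedOn C

/-- A graph is 2-edge-connected if each of its edges lies in a cycle. -/
def TwoEdgeConnected (G : Graph V α) : Prop := ∀ e ∈ G.E, ∃ C, G.IsCycle C ∧ e ∈ C

/-- A graph is connected if it has at least one vertex and any two of its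
vertices are joined by a path. -/
def Connected (G : Graph V α) : Prop := G.verts.Nonempty ∧ G.ConnectedOn G.E

/-- Delete a vertex from a graph (removing all edges incident with it). -/
def delVert (G : Graph V α) (v : V) : Graph V α := ⟨{e ∈ G.E | v ∉ G.inc e}, G.inc⟩

/-- A graph is 2-connected if it is connected and stays connected after the
deletion of any vertex. -/
def TwoConnected (G : Graph V α) : Prop :=
  G.Connected ∧ ∀ v ∈ G.verts, (G.delVert v).Connected

/-- `X` contains at least two (distinct) cycles of `G`. -/
def HasTwoCycles (G : Graph V α) (X : Set α) : Prop :=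
  ∃ C₁ C₂, G.IsCycle C₁ ∧ G.IsCycle C₂ ∧ C₁ ≠ C₂ ∧ C₁ ⊆ X ∧ C₂ ⊆ X

/-- The circuits of the bicircular lift matroid of `G`: edge sets containing at
least two cycles and minimal with this property. -/
def LiftCircuit (G : Graph V α) (X : Set α) : Prop :=
  Minimal (fun Y => Y ⊆ G.E ∧ G.HasTwoCycles Y) X

/-- Two edges of a graph form a series pair if no cycle contains exactly one of
them, and some cycle contains both. -/
def SeriesPair (G : Graph V α) (e f : α) : Prop :=
  (∀ C, G.IsCycle C → (e ∈ C ↔ f ∈ C)) ∧ ∃ C, G.IsCycle C ∧ e ∈ C ∧ f ∈ C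

end Graph

/-- `N` is the bicircular lift matroid `L(G)` of `G` : its ground set is `E(G)`
and its circuits are the lift circuits of `G`. -/
def IsLiftRep {V α : Type u} (G : Graph V α) (N : Matroid α) : Prop :=
  N.E = G.E ∧ ∀ C, Circuit N C ↔ G.LiftCircuit C

/-- `N` is the cycle matroid `M(G)` of `G` : its ground set is `E(G)` and its
circuits are the cycles of `G`. -/
def IsGraphicRep {V α : Type u} (G : Graph V α) (N : Matroid α) : Prop :=
  N.E = G.E ∧ ∀ C, Circuit N C ↔ G.IsCycle C

/-- A matroid is bicircular lift if it is (isomorphic to) `L(G)` for some graph `G`. -/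
def IsBicircularLift {α : Type u} (N : Matroid α) : Prop :=
  ∃ (V : Type u) (G : Graph V α), IsLiftRep G N

/-- A matroid is graphic if it is (isomorphic to) the cycle matroid of some graph. -/
def IsGraphic {α : Type u} (N : Matroid α) : Prop :=
  ∃ (V : Type u) (G : Graph V α), IsGraphicRep G N

/-- The class `BL-bar` of matroids that are graphic or bicircular lift. -/
def InBL {α : Type u} (N : Matroid α) : Prop := IsGraphic N ∨ IsBicircularLift N

/-- `M` is an excluded minor for the class `BL-bar`. -/
def ExcludedMinorBL {α : Type u} (M : Matroid α) : Prop :=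
  ¬ InBL M ∧ ∀ N, IsStrictMinor N M → InBL N

/-! ### Special graphs and subdivisions -/

/-- `G` is (a copy of) the complete graph `K₄`. -/
def IsK4 {V α : Type u} (G : Graph V α) : Prop :=
  ∃ v : Fin 4 → V, Function.Injective v ∧
    ∃ ed : {p : Sym2 (Fin 4) // ¬ p.IsDiag} → α, Function.Injective ed ∧
      G.E = Set.range ed ∧ ∀ p, G.inc (ed p) = Sym2.map v p.1

/-- `G` is (a copy of) the complete graph `K₅`. -/
def IsK5 {V α : Type u} (G : Graph V α) : Prop :=
  ∃ v : Fin 5 → V, Function.Injective v ∧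
    ∃ ed : {p : Sym2 (Fin 5) // ¬ p.IsDiag} → α, Function.Injective ed ∧
      G.E = Set.range ed ∧ ∀ p, G.inc (ed p) = Sym2.map v p.1

/-- `G` is (a copy of) the complete bipartite graph `K₃,₃`. -/
def IsK33 {V α : Type u} (G : Graph V α) : Prop :=
  ∃ a b : Fin 3 → V, Function.Injective a ∧ Function.Injective b ∧
    Set.range a ∩ Set.range b = ∅ ∧
    ∃ ed : Fin 3 × Fin 3 → α, Function.Injective ed ∧
      G.E = Set.range ed ∧ ∀ p, G.inc (ed p) = s(a p.1, b p.2)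

/-- `G` is (a copy of) the graph `K₂ⁿ` with two vertices joined by `n` parallel edges. -/
def IsK2n {V α : Type u} (n : ℕ) (G : Graph V α) : Prop :=
  ∃ u v : V, u ≠ v ∧ ∃ ed : Fin n → α, Function.Injective ed ∧
    G.E = Set.range ed ∧ ∀ i, G.inc (ed i) = s(u, v)

/-- `H` is obtained from `G` by subdividing a single edge. -/
def ElemSub {V α : Type u} (G H : Graph V α) : Prop :=
  ∃ e ∈ G.E, ∃ (f g : α) (u v w : V),
    G.inc e = s(u, v) ∧ w ∉ G.verts ∧ f ≠ g ∧
    f ∉ G.E \ {e} ∧ g ∉ G.E \ {e} ∧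
    H.E = (G.E \ {e}) ∪ {f, g} ∧
    H.inc f = s(u, w) ∧ H.inc g = s(w, v) ∧
    ∀ x ∈ G.E \ {e}, H.inc x = G.inc x

/-- `H` is a subdivision of `G` : it is obtained from `G` by repeatedly
subdividing edges. -/
def IsSubdivision {V α : Type u} (G H : Graph V α) : Prop :=
  Relation.ReflTransGen ElemSub G H

/-! ### 2-sums and simplification -/

/-- `N` is the 2-sum `N₁ ⊕₂ᵉ N₂` of `N₁` and `N₂` along `e`. -/
def Is2Sum {α : Type u} (N N₁ N₂ : Matroid α) (e : α) : Prop :=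
  N₁.E ∩ N₂.E = {e} ∧
  ¬ MLoop N₁ e ∧ ¬ MColoop N₁ e ∧ ¬ MLoop N₂ e ∧ ¬ MColoop N₂ e ∧
  N.E = (N₁.E ∪ N₂.E) \ {e} ∧
  ∀ C, Circuit N C ↔
    ((Circuit N₁ C ∧ e ∉ C) ∨ (Circuit N₂ C ∧ e ∉ C) ∨
      ∃ C₁ C₂, Circuit N₁ C₁ ∧ Circuit N₂ C₂ ∧ e ∈ C₁ ∧ e ∈ C₂ ∧
        C = (C₁ \ {e}) ∪ (C₂ \ {e}))

/-- `H` is a simplification `si(G)` of `G` : it is obtained from `G` by deleting all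
loops and all but one edge of each parallel class. -/
def IsSimplification {V α : Type u} (G H : Graph V α) : Prop :=
  H.inc = G.inc ∧ H.E ⊆ G.E ∧ (∀ e ∈ H.E, ¬ (G.inc e).IsDiag) ∧
    ∀ e ∈ G.E, ¬ (G.inc e).IsDiag → ∃! f, f ∈ H.E ∧ G.inc f = G.inc e

/-- `H` is 2-connected, or is obtained from a 2-connected graph and a single edge `K₂`
by identifying one end-vertex of the edge with a vertex of the 2-connected graph. -/
def TwoConnOrPendant {V α : Type u} (H : Graph V α) : Prop :=
  H.TwoConnected ∨
    ∃ (e : α) (u w : V), e ∈ H.E ∧ H.inc e = s(u, w) ∧ u ≠ w ∧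
      (H.delete {e}).TwoConnected ∧ u ∈ (H.delete {e}).verts ∧ w ∉ (H.delete {e}).verts

/-! ### Rank functions on finite sets -/

/-- The axioms of a matroid rank function on the finite subsets of `α`. -/
structure RankFn {α : Type u} [DecidableEq α] (r : Finset α → ℕ) : Prop where
  empty : r ∅ = 0
  unit : ∀ e X, r (insert e X) ≤ r X + 1
  mono : ∀ X Y, X ⊆ Y → r X ≤ r Y
  submod : ∀ X Y, r (X ∪ Y) + r (X ∩ Y) ≤ r X + r Y

namespace RankFn

variable {α : Type u} [DecidableEq α] {r : Finset α → ℕ}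

lemma sub (h : RankFn r) {A B X Y : Finset α} (hA : A ⊆ X ∪ Y) (hB : B ⊆ X ∩ Y) :
    r A + r B ≤ r X + r Y := by
  have := h.submod X Y
  have := h.mono _ _ hA
  have := h.mono _ _ hB
  omega

lemma union_le (h : RankFn r) (X Y : Finset α) : r (X ∪ Y) ≤ r X + r Y := by
  have := h.submod X Y
  omega

lemma le_card (h : RankFn r) (X : Finset α) : r X ≤ X.card := by
  induction X using Finset.induction_on with
  | empty => simp [h.empty]
  | insert e X he ih =>
    rw [Finset.card_insert_of_notMem he]
    have := h.unit e X
    omega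

lemma union_le_card (h : RankFn r) (X Y : Finset α) : r (X ∪ Y) ≤ r X + Y.card := by
  have := h.union_le X Y
  have := h.le_card Y
  omega

/-- Being spanned is monotone. -/
lemma cl_mono (h : RankFn r) {e : α} {X Y : Finset α} (he : r (insert e X) = r X) (hXY : X ⊆ Y) :
    r (insert e Y) = r Y := by
  have h1 := h.sub (A := insert e Y) (B := X) (X := insert e X) (Y := Y) (by grind) (by grind)
  have h2 := h.mono Y (insert e Y) (by grind)
  omega

lemma cl_union (h : RankFn r) {X Y : Finset α} (hY : ∀ e ∈ Y, r (insert e X) = r X) :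
    r (X ∪ Y) = r X := by
  induction Y using Finset.induction_on with
  | empty => simp
  | insert e Y he ih =>
    rw [Finset.union_insert, h.cl_mono (hY e (by simp)) Finset.subset_union_left]
    exact ih fun f hf => hY f (by simp [hf])

lemma indep_subset (h : RankFn r) {I J : Finset α} (hJ : r J = J.card) (hIJ : I ⊆ J) :
    r I = I.card := by
  have h1 := h.union_le_card I (J \ I)
  rw [Finset.union_sdiff_of_subset hIJ] at h1
  have h2 := Finset.card_sdiff_add_card_eq_card hIJ
  have h3 := h.le_card I
  omega

lemma exists_basis (h : RankFn r) {I X : Finset α} (hI : r I = I.card) (hIX : I ⊆ X) :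
    ∃ B, I ⊆ B ∧ B ⊆ X ∧ r B = B.card ∧ r B = r X := by
  obtain ⟨B, hB⟩ := Finset.exists_maximal (s := X.powerset.filter fun B => I ⊆ B ∧ r B = B.card)
    ⟨I, by simp [hIX, hI]⟩
  have hB1 := hB.1
  simp only [Finset.mem_filter, Finset.mem_powerset] at hB1
  refine ⟨B, hB1.2.1, hB1.1, hB1.2.2, ?_⟩
  rw [← h.cl_union (X := B) (Y := X), Finset.union_eq_right.2 hB1.1]
  intro e he
  by_contra hne
  have h1 := h.unit e B
  have h2 := h.mono B (insert e B) (by simp)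
  by_cases heB : e ∈ B
  · simp [heB] at hne
  have h3 := hB.2 (y := insert e B) (by
    simp only [Finset.mem_filter, Finset.mem_powerset, Finset.card_insert_of_notMem heB]
    refine ⟨by grind, by grind, by omega⟩) (by simp)
  exact heB (h3 (by simp))

lemma exists_insert_of_lt (h : RankFn r) {X Y : Finset α} (hlt : r X < r (X ∪ Y)) :
    ∃ e ∈ Y, r (insert e X) = r X + 1 := by
  by_contra! hc
  have := h.cl_union (X := X) (Y := Y) fun e he => by
    have := h.unit e X
    have := h.mono X (insert e X) (by simp)
    have := hc e he
    omega
  omega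

end RankFn

/-! ### Ranks of finite sets in a matroid -/

/-- The rank of a finite set in a matroid, as a natural number. -/
noncomputable def rk {α : Type u} (P : Matroid α) (X : Finset α) : ℕ := (P.eRk X).toNat

section

variable {α : Type u} {P : Matroid α} {E : Finset α}

lemma eRk_eq (P : Matroid α) (X : Set α) : eRk P X = P.eRk X := by
  apply le_antisymm
  · exact iSup_le fun I => I.2.1.encard_le_eRk_of_subset I.2.2
  · obtain ⟨I, hI⟩ := P.exists_isBasis' X
    rw [hI.eRk_eq_encard]
    exact le_iSup (fun I : {I : Set α // P.Indep I ∧ I ⊆ X} => (I : Set α).encard)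
      ⟨I, hI.indep, hI.subset⟩

lemma eRank_eq (P : Matroid α) : eRank P = P.eRank := by
  rw [eRank, eRk_eq, eRk_ground]

lemma rk_cast (P : Matroid α) (X : Finset α) : (rk P X : ℕ∞) = P.eRk X := by
  have h := P.eRk_le_encard X
  rw [Set.encard_coe_eq_coe_finsetCard] at h
  exact ENat.natCast_toNat (ne_top_of_le_ne_top (ENat.natCast_ne_top _) h)

lemma rk_rankFn [DecidableEq α] (P : Matroid α) : RankFn (rk P) where
  empty := by
    have := rk_cast P ∅
    simpa using this
  unit e X := by
    have := P.eRk_insert_le_add_one e X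
    rw [← Finset.coe_insert, ← rk_cast, ← rk_cast] at this
    exact_mod_cast this
  mono X Y h := by
    have := P.eRk_mono (Finset.coe_subset.2 h)
    rw [← rk_cast, ← rk_cast] at this
    exact_mod_cast this
  submod X Y := by
    have := P.eRk_inter_add_eRk_union_le X Y
    rw [← Finset.coe_inter, ← Finset.coe_union, ← rk_cast, ← rk_cast, ← rk_cast, ← rk_cast] at this
    have h2 : rk P (X ∩ Y) + rk P (X ∪ Y) ≤ rk P X + rk P Y := by exact_mod_cast this
    omega

lemma indep_iff_rk (P : Matroid α) (X : Finset α) : P.Indep X ↔ rk P X = X.card := by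
  rw [indep_iff_eRk_eq_encard_of_finite X.finite_toSet, ← rk_cast,
    Set.encard_coe_eq_coe_finsetCard]
  norm_cast

lemma rk_ground (hE : P.E = E) : (rk P E : ℕ∞) = P.eRank := by
  rw [rk_cast, ← hE, eRk_ground]

lemma rk_dual [DecidableEq α] (hE : P.E = E) {X : Finset α} (hX : X ⊆ E) :
    rk P✶ X + rk P E = rk P (E \ X) + X.card := by
  have h := P.eRk_dual_add_eRank X (by rw [hE]; exact_mod_cast hX)
  rw [hE, ← Finset.coe_sdiff, ← rk_cast, ← rk_cast, ← rk_ground hE,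
    Set.encard_coe_eq_coe_finsetCard] at h
  exact_mod_cast h

lemma rk_restrict {X : Finset α} {R : Set α} (hX : (X : Set α) ⊆ R) : rk (P ↾ R) X = rk P X := by
  rw [rk, rk, restrict_eRk_eq _ hX]

lemma rk_del {X : Finset α} {D : Set α} (hX : ∀ e ∈ X, e ∉ D) : rk (del P D) X = rk P X := by
  rw [rk, rk, del, restrict_eRk_eq', ← P.eRk_inter_ground X]
  congr 2
  ext e
  simp only [Set.mem_inter_iff, Finset.mem_coe, Set.mem_sdiff]
  grind

lemma del_ground (hE : P.E = E) [DecidableEq α] (D : Finset α) :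
    (del P D).E = ((E \ D : Finset α) : Set α) := by
  simp [del, hE]

lemma con_ground (hE : P.E = E) [DecidableEq α] (D : Finset α) :
    (con P D).E = ((E \ D : Finset α) : Set α) := by
  simp [con, del, hE]

lemma rk_con [DecidableEq α] (hE : P.E = E) {X C : Finset α} (hC : C ⊆ E) (hX : X ⊆ E \ C) :
    rk (con P C) X + rk P C = rk P (X ∪ C) := by
  have hEd : (del P✶ C).E = ((E \ C : Finset α) : Set α) := del_ground (by simpa using hE) C
  have h1 := rk_dual hEd hX
  change rk (con P C) X + _ = _ at h1
  rw [rk_del (by simp), rk_del (by grind)] at h1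
  have h2 := rk_dual (P := P) hE (X := E \ C) (by grind)
  have h3 := rk_dual (P := P) hE (X := (E \ C) \ X) (by grind)
  rw [show E \ (E \ C) = C by grind] at h2
  rw [show E \ ((E \ C) \ X) = X ∪ C by grind] at h3
  have h4 := Finset.card_sdiff_add_card_eq_card hX
  omega

lemma con_inter_ground (P : Matroid α) (C : Set α) : con P (C ∩ P.E) = con P C := by
  simp [con, del]

lemma del_inter_ground (P : Matroid α) (C : Set α) : del P (C ∩ P.E) = del P C := by
  simp [del]

end

/-! ### `U_{2,4}`-minors in terms of ranks -/

/-- A rank function restricted to the finite set `E` has a `U_{2,4}`-minor on the four elements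
of `Q`, obtained by contracting `K`. -/
def U24R {α : Type u} [DecidableEq α] (r : Finset α → ℕ) (E : Finset α) : Prop :=
  ∃ K Q, K ⊆ E ∧ Q ⊆ E ∧ Q.card = 4 ∧ r (K ∪ Q) ≤ r K + 2 ∧
    ∀ T ⊆ Q, T.card = 2 → r K + 2 ≤ r (K ∪ T)

section
variable {α : Type u} [DecidableEq α] {r : Finset α → ℕ} {E : Finset α}

lemma U24R.mk_disjoint (hr : RankFn r) (h : U24R r E) :
    ∃ K Q, Disjoint K Q ∧ K ⊆ E ∧ Q ⊆ E ∧ Q.card = 4 ∧ r (K ∪ Q) ≤ r K + 2 ∧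
    ∀ T ⊆ Q, T.card = 2 → r K + 2 ≤ r (K ∪ T) := by
  obtain ⟨K, Q, hK, hQ, hc, h1, h2⟩ := h
  refine ⟨K, Q, ?_, hK, hQ, hc, h1, h2⟩
  rw [Finset.disjoint_left]
  intro a haK haQ
  obtain ⟨T, hT1, hT2, hT3⟩ := Finset.exists_subsuperset_card_eq (s := {a}) (t := Q) (n := 2)
    (by simpa using haQ) (by simp) (by omega)
  have h3 := h2 T hT2 hT3
  have h4 := hr.union_le_card K (T \ {a})
  rw [show K ∪ T \ {a} = K ∪ T by grind] at h4
  have h5 := Finset.card_sdiff_add_card_eq_card hT1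
  simp only [Finset.card_singleton] at h5
  omega

/-- The class of matroids with a `U_{2,4}`-minor is closed under duality. -/
lemma U24R.dual (hr : RankFn r) (h : U24R r E) {r' : Finset α → ℕ}
    (hr' : ∀ X ⊆ E, r' X + r E = r (E \ X) + X.card) : U24R r' E := by
  obtain ⟨K, Q, hd, hK, hQ, hc, h1, h2⟩ := h.mk_disjoint hr
  rw [Finset.disjoint_left] at hd
  refine ⟨E \ (K ∪ Q), Q, by grind, hQ, hc, ?_, ?_⟩
  · have e1 := hr' (E \ (K ∪ Q)) (by grind)
    have e2 := hr' (E \ (K ∪ Q) ∪ Q) (by grind)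
    rw [Finset.card_union_of_disjoint (by rw [Finset.disjoint_left]; grind)] at e2
    rw [show E \ (E \ (K ∪ Q) ∪ Q) = K by grind] at e2
    rw [show E \ (E \ (K ∪ Q)) = K ∪ Q by grind] at e1
    obtain ⟨T, hT1, hT2⟩ := Finset.exists_subset_card_eq (s := Q) (n := 2) (by omega)
    have := h2 T hT1 hT2
    have := hr.mono (K ∪ T) (K ∪ Q) (by grind)
    omega
  · intro T hT hT2
    have e1 := hr' (E \ (K ∪ Q)) (by grind)
    have e2 := hr' (E \ (K ∪ Q) ∪ T) (by grind)
    rw [Finset.card_union_of_disjoint (by rw [Finset.disjoint_left]; grind)] at e2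
    rw [show E \ (E \ (K ∪ Q) ∪ T) = K ∪ (Q \ T) by grind] at e2
    rw [show E \ (E \ (K ∪ Q)) = K ∪ Q by grind] at e1
    have e3 := Finset.card_sdiff_add_card_eq_card hT
    have := h2 (Q \ T) (by grind) (by omega)
    omega

variable {P N : Matroid α} {Q : Finset α}

lemma isUnif_rk (hE : N.E = Q) (h : IsUnif 2 4 N) :
    Q.card = 4 ∧ rk N Q ≤ 2 ∧ ∀ T ⊆ Q, T.card = 2 → 2 ≤ rk N T := by
  obtain ⟨h1, h2⟩ := h
  rw [hE, Set.encard_coe_eq_coe_finsetCard] at h1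
  have hr := rk_rankFn N
  refine ⟨by exact_mod_cast h1, ?_, ?_⟩
  · by_contra! hlt
    obtain ⟨B, -, hB1, hB2, hB3⟩ := hr.exists_basis (I := ∅) (X := Q) (by simp [hr.empty]) (by simp)
    obtain ⟨B', hB', hB'c⟩ := Finset.exists_subset_card_eq (s := B) (n := 3) (by omega)
    have h3 := (h2 B').2 ⟨by rw [hE]; exact_mod_cast hB'.trans hB1, by
      rw [Set.encard_coe_eq_coe_finsetCard, hB'c]; norm_num⟩
    exact h3.1.not_indep ((indep_iff_rk _ _).2 (hr.indep_subset hB2 hB'))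
  · intro T hT hTc
    by_contra! hlt
    have hdep : N.Dep T := by
      rw [← not_indep_iff (by rw [hE]; exact_mod_cast hT), indep_iff_rk]
      omega
    obtain ⟨C, hCT, hC⟩ := hdep.exists_isCircuit_subset
    have h3 := ((h2 C).1 hC).2
    have h4 := Set.encard_le_encard hCT
    rw [h3, Set.encard_coe_eq_coe_finsetCard, hTc] at h4
    norm_num at h4

lemma isUnif_of_rk (hE : N.E = Q) (h4 : Q.card = 4) (h2 : rk N Q ≤ 2)
    (hT : ∀ T ⊆ Q, T.card = 2 → 2 ≤ rk N T) : IsUnif 2 4 N := by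
  have hr := rk_rankFn N
  refine ⟨by rw [hE, Set.encard_coe_eq_coe_finsetCard, h4], ?_⟩
  have key : ∀ X : Finset α, X ⊆ Q → (N.Dep X ↔ 3 ≤ X.card) := by
    intro X hX
    rw [← not_indep_iff (by rw [hE]; exact_mod_cast hX), indep_iff_rk]
    constructor
    · intro hne
      by_contra! hlt
      obtain ⟨T, hT1, hT2, hT3⟩ := Finset.exists_subsuperset_card_eq (n := 2) hX (by omega)
        (by omega)
      have h5 := hT T hT2 hT3
      have h6 := hr.le_card T
      exact hne (hr.indep_subset (by omega) hT1)
    · intro h3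
      have := hr.mono X Q hX
      omega
  intro C
  constructor
  · intro hC
    have hCE : C ⊆ N.E := hC.1.subset_ground
    rw [hE] at hCE ⊢
    lift C to Finset α using Q.finite_toSet.subset hCE
    rw [Finset.coe_subset] at hCE ⊢
    have h3 := (key C hCE).1 hC.1
    refine ⟨hCE, ?_⟩
    rw [Set.encard_coe_eq_coe_finsetCard]
    obtain ⟨C', hC', hC'c⟩ := Finset.exists_subset_card_eq h3
    have h6 := hC.2 ((key C' (hC'.trans hCE)).2 (by omega)) (by exact_mod_cast hC')
    have h7 : C ⊆ C' := by exact_mod_cast h6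
    rw [Finset.Subset.antisymm h7 hC', hC'c]
    norm_num
  · rintro ⟨hCE, hc⟩
    rw [hE] at hCE
    lift C to Finset α using Q.finite_toSet.subset hCE
    rw [Finset.coe_subset] at hCE
    rw [Set.encard_coe_eq_coe_finsetCard] at hc
    have hc : C.card = 3 := by exact_mod_cast hc
    refine ⟨(key C hCE).2 (by omega), ?_⟩
    intro Y hY hYC
    lift Y to Finset α using C.finite_toSet.subset hYC
    have hYC' : Y ⊆ C := by exact_mod_cast hYC
    have h5 := (key Y (hYC'.trans hCE)).1 hY
    rw [Finset.eq_of_subset_of_card_le hYC' (by omega)]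

lemma hasU24_iff (hE : P.E = E) : HasU24Minor P ↔ U24R (rk P) E := by
  constructor
  · rintro ⟨N, ⟨C, D, rfl⟩, hN⟩
    rw [← con_inter_ground, hE] at hN
    obtain ⟨C, hC⟩ : ∃ C' : Finset α, C ∩ E = C' :=
      ⟨(E.finite_toSet.subset (Set.inter_subset_right (s := C))).toFinset, by simp⟩
    rw [hC] at hN
    have hCE : C ⊆ E := by
      rw [← Finset.coe_subset, ← hC]
      exact Set.inter_subset_right
    have hE1 := con_ground hE C
    rw [← del_inter_ground, hE1] at hN
    obtain ⟨D, hD⟩ : ∃ D' : Finset α, D ∩ (E \ C : Finset α) = D' :=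
      ⟨((E \ C).finite_toSet.subset (Set.inter_subset_right (s := D))).toFinset, by simp⟩
    rw [hD] at hN
    obtain ⟨h4, h2, hT⟩ := isUnif_rk (del_ground hE1 D) hN
    refine ⟨C, (E \ C) \ D, hCE, by grind, h4, ?_, ?_⟩
    · rw [rk_del (by simp)] at h2
      have := rk_con hE hCE (X := (E \ C) \ D) (by grind)
      rw [Finset.union_comm] at this
      omega
    · intro T hTQ hTc
      have h5 := hT T hTQ hTc
      rw [rk_del (by simp; grind)] at h5
      have := rk_con hE hCE (X := T) (by grind)
      rw [Finset.union_comm] at this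
      omega
  · intro h
    obtain ⟨K, Q, hd, hK, hQ, hc, h1, h2⟩ := h.mk_disjoint (rk_rankFn P)
    rw [Finset.disjoint_left] at hd
    refine ⟨_, ⟨K, ((E \ K) \ Q : Finset α), rfl⟩, ?_⟩
    have hE1 := del_ground (con_ground hE K) ((E \ K) \ Q)
    rw [show (E \ K) \ ((E \ K) \ Q) = Q by grind] at hE1
    have key : ∀ X ⊆ Q, rk (del (con P K) ((E \ K) \ Q : Finset α)) X + rk P K = rk P (K ∪ X) := by
      intro X hX
      rw [rk_del (by simp; grind), rk_con hE hK (by grind), Finset.union_comm]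
    refine isUnif_of_rk hE1 hc ?_ ?_
    · have := key Q subset_rfl
      omega
    · intro T hT hTc
      have := key T hT
      have := h2 T hT hTc
      omega

end

/-! ### 3-connectivity in terms of ranks -/

/-- A rank function on the finite set `E` has neither 1-separations nor 2-separations. -/
def TC {α : Type u} [DecidableEq α] (r : Finset α → ℕ) (E : Finset α) : Prop :=
  (∀ X ⊆ E, 1 ≤ X.card → 1 ≤ (E \ X).card → r E + 1 ≤ r X + r (E \ X)) ∧
  (∀ X ⊆ E, 2 ≤ X.card → 2 ≤ (E \ X).card → r E + 2 ≤ r X + r (E \ X))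

section
variable {α : Type u} [DecidableEq α] {r r' : Finset α → ℕ} {E : Finset α} {P : Matroid α}

lemma TC.dual (hr : RankFn r) (hr' : ∀ X ⊆ E, r' X + r E = r (E \ X) + X.card)
    (h : TC r E) : TC r' E := by
  have key : ∀ X ⊆ E, r' X + r' (E \ X) + r E = r X + r (E \ X) + r' E := by
    intro X hX
    have h1 := hr' X hX
    have h2 := hr' (E \ X) (by grind)
    have h3 := hr' E subset_rfl
    rw [show E \ (E \ X) = X by grind] at h2
    rw [show E \ E = ∅ by grind, hr.empty] at h3
    have h4 := Finset.card_sdiff_add_card_eq_card hX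
    omega
  constructor <;> intro X hX h1 h2
  · have := h.1 X hX h1 h2
    have := key X hX
    omega
  · have := h.2 X hX h1 h2
    have := key X hX
    omega

lemma isKSep_iff (hE : P.E = E) (k : ℕ) (X : Finset α) (hX : X ⊆ E) :
    IsKSep P k X ((E \ X : Finset α) : Set α) ↔
      k ≤ X.card ∧ k ≤ (E \ X).card ∧ rk P X + rk P (E \ X) ≤ rk P E + (k - 1) := by
  rw [IsKSep, eRk_eq, eRk_eq, ← rk_cast, ← rk_cast, eRank_eq, ← rk_ground hE,
    Set.encard_coe_eq_coe_finsetCard, Set.encard_coe_eq_coe_finsetCard, hE]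
  have h1 : (X : Set α) ∪ ((E \ X : Finset α) : Set α) = E := by
    rw [← Finset.coe_union, Finset.union_sdiff_of_subset hX]
  have h2 : Disjoint (X : Set α) ((E \ X : Finset α) : Set α) := by
    rw [Finset.disjoint_coe]
    exact Finset.disjoint_sdiff
  simp only [h1, h2, true_and]
  norm_cast

lemma exists_isKSep_iff (hE : P.E = E) (k : ℕ) :
    (∃ X Y, IsKSep P k X Y) ↔ ∃ X ⊆ E, k ≤ X.card ∧ k ≤ (E \ X).card ∧
      rk P X + rk P (E \ X) ≤ rk P E + (k - 1) := by
  constructor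
  · rintro ⟨X, Y, h⟩
    have hXE : X ⊆ E := hE ▸ h.1 ▸ Set.subset_union_left
    lift X to Finset α using E.finite_toSet.subset hXE
    have hXE' : X ⊆ E := by exact_mod_cast hXE
    have hY : Y = ((E \ X : Finset α) : Set α) := by
      have h1 := h.1
      rw [hE] at h1
      rw [Finset.coe_sdiff, ← h1, Set.union_sdiff_left]
      exact (h.2.1.sdiff_eq_right).symm
    rw [hY, isKSep_iff hE k X hXE'] at h
    exact ⟨X, hXE', h⟩
  · rintro ⟨X, hX, h⟩
    exact ⟨X, _, (isKSep_iff hE k X hX).2 h⟩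

lemma threeConnected_iff (hE : P.E = E) : ThreeConnected P ↔ TC (rk P) E := by
  rw [ThreeConnected, MConnected, exists_isKSep_iff hE, exists_isKSep_iff hE, TC]
  constructor
  · rintro ⟨h1, h2⟩
    push Not at h1 h2
    constructor
    · intro X hX ha hb
      have := h1 X hX ha hb
      omega
    · intro X hX ha hb
      have := h2 X hX ha hb
      omega
  · rintro ⟨h1, h2⟩
    push Not
    constructor
    · intro X hX ha hb
      have := h1 X hX ha hb
      omega
    · intro X hX ha hb
      have := h2 X hX ha hb
      omega

lemma seriesPair_iff {L : Matroid α} {a b : α} (hab : a ≠ b)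
    (ha : L✶.Indep {a}) (hb : L✶.Indep {b}) : SeriesPair L a b ↔ ¬ L✶.Indep {a, b} := by
  have haE : a ∈ L.E := ha.subset_ground rfl
  have hbE : b ∈ L.E := hb.subset_ground rfl
  constructor
  · intro h hI
    rw [dual_indep_iff_exists (by simp [insert_subset_iff, haE, hbE])] at hI
    obtain ⟨B, hB, hdis⟩ := hI
    have haB : a ∉ B := fun h => hdis.ne_of_mem (by simp) h rfl
    have hbB : b ∉ B := fun h => hdis.ne_of_mem (by simp) h rfl
    have hC := hB.fundCircuit_isCircuit haE haB
    have hbC := (h.1 _ hC).1 (L.mem_fundCircuit a B)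
    have := L.fundCircuit_subset_insert a B hbC
    simp [hab.symm, hbB] at this
  · intro hI
    have hco : L✶.IsCircuit {a, b} := by
      refine ⟨⟨hI, by simp [insert_subset_iff, haE, hbE]⟩, ?_⟩
      intro Y hY hYs
      by_contra hne
      have : Y ⊆ {a} ∨ Y ⊆ {b} := by
        by_contra! hc
        rw [Set.not_subset, Set.not_subset] at hc
        obtain ⟨⟨y, hy, hya⟩, z, hz, hzb⟩ := hc
        have h1 : y = b := by
          have := hYs hy
          simp at hya this
          tauto
        have h2 : z = a := by
          have := hYs hz
          simp at hzb this
          tauto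
        subst h1 h2
        exact hne (by simp [insert_subset_iff, hy, hz])
      rcases this with h | h
      · exact hY.not_indep (ha.subset h)
      · exact hY.not_indep (hb.subset h)
    have key : ∀ C, Circuit L C → (a ∈ C ↔ b ∈ C) := by
      intro C hC
      have h1 := IsCircuit.inter_isCocircuit_ne_singleton (M := L) (C := C) hC hco (e := a)
      have h2 := IsCircuit.inter_isCocircuit_ne_singleton (M := L) (C := C) hC hco (e := b)
      constructor
      · intro h
        by_contra hb'
        apply h1
        ext y
        simp
        constructor
        · rintro ⟨hy, rfl | rfl⟩ <;> tauto
        · rintro rfl; tauto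
      · intro h
        by_contra hb'
        apply h2
        ext y
        simp
        constructor
        · rintro ⟨hy, rfl | rfl⟩ <;> tauto
        · rintro rfl; tauto
    refine ⟨key, ?_⟩
    rw [dual_indep_iff_exists (by simpa using haE)] at ha
    obtain ⟨B, hB, hdis⟩ := ha
    have haB : a ∉ B := fun h => hdis.ne_of_mem (by simp) h rfl
    have hC := hB.fundCircuit_isCircuit haE haB
    exact ⟨_, hC, L.mem_fundCircuit a B, (key _ hC).1 (L.mem_fundCircuit a B)⟩

lemma seriesPair_self {L : Matroid α} {a : α} (ha : L✶.Indep {a}) : SeriesPair L a a := by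
  have haE : a ∈ L.E := ha.subset_ground rfl
  rw [dual_indep_iff_exists (by simpa using haE)] at ha
  obtain ⟨B, hB, hdis⟩ := ha
  have haB : a ∉ B := fun h => hdis.ne_of_mem (by simp) h rfl
  have hC := hB.fundCircuit_isCircuit haE haB
  exact ⟨fun _ _ => Iff.rfl, _, hC, L.mem_fundCircuit a B, L.mem_fundCircuit a B⟩

end

/-! ### Passing to a cosimplification -/

section
variable {α : Type u} [DecidableEq α] {r r' : Finset α → ℕ} {E : Finset α} {M : Matroid α}

/-- A cosimplification of `M ＼ e` keeps exactly one element of each parallel class of `M✶ ／ e`. -/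
lemma cosimp_repr (hE : M.E = E) {e : α} (he : e ∈ E)
    (hs : ∀ a ∈ E, ∀ b ∈ E, a ≠ b → rk M✶ {a, b} = 2) {N' : Matroid α}
    (h : IsCosimplification (del M {e}) N') :
    ∃ (D : Finset α) (π : α → α), D ⊆ E.erase e ∧ N' = con (del M {e}) D ∧
      (∀ a ∈ E.erase e, π a ∈ E.erase e \ D ∧ rk M✶ {e, a, π a} ≤ 2) ∧
      (∀ a ∈ E.erase e \ D, ∀ b ∈ E.erase e \ D, rk M✶ {e, a, b} ≤ 2 → a = b) := by
  have hr := rk_rankFn M✶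
  obtain ⟨D, hD, hN, -, hS⟩ := h
  set L := del M {e} with hL
  have hLE : L.E = ((E.erase e : Finset α) : Set α) := by
    have := del_ground hE {e}
    rw [Finset.sdiff_singleton_eq_erase] at this
    simpa using this
  rw [hLE] at hD
  lift D to Finset α using (E.erase e).finite_toSet.subset hD
  rw [Finset.coe_subset] at hD
  -- ranks in the dual of `M ＼ e`
  have hrL : ∀ X ⊆ E.erase e, rk L✶ X + rk M✶ {e} = rk M✶ (insert e X) := by
    intro X hX
    have h1 : L✶ = con M✶ (({e} : Finset α) : Set α) := by
      simp [hL, con]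
    rw [h1, rk_con (P := M✶) (by simpa using hE) (by simpa using he) (by
      rwa [Finset.sdiff_singleton_eq_erase]), Finset.union_comm]
    rfl
  have he1 : ∀ a ∈ E.erase e, rk M✶ {e, a} = 2 ∧ rk M✶ {e} = 1 := by
    intro a ha
    have h2 := hs e he a (by grind) (by grind)
    refine ⟨h2, ?_⟩
    rw [hr.indep_subset (J := {e, a}) (by rw [h2, Finset.card_pair (by grind)]) (by grind)]
    rfl
  have hnl : ∀ a ∈ E.erase e, L✶.Indep {a} := by
    intro a ha
    have h1 := hrL {a} (by simpa using ha)
    have h2 := he1 a ha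
    have := (indep_iff_rk L✶ {a}).2 (by
      rw [Finset.card_singleton]
      change rk L✶ {a} + _ = rk M✶ {e, a} at h1
      omega)
    simpa using this
  have hpar : ∀ a ∈ E.erase e, ∀ b ∈ E.erase e, (SeriesPair L a b ↔ rk M✶ {e, a, b} ≤ 2) := by
    intro a ha b hb
    by_cases hab : a = b
    · subst hab
      simp [seriesPair_self (hnl a ha), (he1 a ha).1]
    · rw [seriesPair_iff hab (hnl a ha) (hnl b hb)]
      have := indep_iff_rk L✶ {a, b}
      rw [Finset.coe_insert, Finset.coe_singleton] at this
      rw [this, Finset.card_pair hab]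
      have h1 := hrL {a, b} (by grind)
      have h2 := he1 a ha
      have h3 := (rk_rankFn L✶).le_card {a, b}
      rw [Finset.card_pair hab] at h3
      omega
  have htrans : ∀ a ∈ E.erase e, ∀ b ∈ E.erase e, ∀ c ∈ E.erase e,
      rk M✶ {e, a, b} ≤ 2 → rk M✶ {e, a, c} ≤ 2 → rk M✶ {e, b, c} ≤ 2 := by
    intro a ha b hb c hc h1 h2
    have h3 := hr.sub (A := {e, b, c}) (B := {e, a}) (X := {e, a, b}) (Y := {e, a, c})
      (by grind) (by grind)
    have h4 := he1 a ha
    omega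
  have hclass : ∀ a ∈ E.erase e,
      IsSeriesClass L {b | b ∈ E.erase e ∧ rk M✶ {e, a, b} ≤ 2} := by
    intro a ha
    refine ⟨⟨⟨a, ha, by simp [(he1 a ha).1]⟩, ?_⟩, ?_⟩
    · rintro b ⟨hb, hb2⟩ c ⟨hc, hc2⟩
      exact (hpar b hb c hc).2 (htrans a ha b hb c hc hb2 hc2)
    · rintro T ⟨-, hT⟩ hsub c hc
      have hac := hT a (hsub ⟨ha, by simp [(he1 a ha).1]⟩) c hc
      have hcE : c ∈ E.erase e := by
        obtain ⟨C, hC, -, hcC⟩ := hac.2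
        have := hC.1.subset_ground hcC
        rwa [hLE] at this
      exact ⟨hcE, (hpar a ha c hcE).1 hac⟩
  have hx : ∀ a, ∃ x, a ∈ E.erase e → {b | b ∈ E.erase e ∧ rk M✶ {e, a, b} ≤ 2} \ D = {x} := by
    intro a
    by_cases ha : a ∈ E.erase e
    · obtain ⟨x, -, hx⟩ := hS _ (hclass a ha)
      exact ⟨x, fun _ => hx⟩
    · exact ⟨a, fun h => absurd h ha⟩
  choose π hπ using hx
  refine ⟨D, π, hD, hN, ?_, ?_⟩
  · intro a ha
    have h1 : π a ∈ {b | b ∈ E.erase e ∧ rk M✶ {e, a, b} ≤ 2} \ (D : Set α) := by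
      rw [hπ a ha]; rfl
    exact ⟨Finset.mem_sdiff.2 ⟨h1.1.1, h1.2⟩, h1.1.2⟩
  · intro a ha b hb hab
    rw [Finset.mem_sdiff] at ha hb
    have h1 : a ∈ {b | b ∈ E.erase e ∧ rk M✶ {e, a, b} ≤ 2} \ (D : Set α) :=
      ⟨⟨ha.1, by simp [(he1 a ha.1).1]⟩, ha.2⟩
    have h2 : b ∈ {b | b ∈ E.erase e ∧ rk M✶ {e, a, b} ≤ 2} \ (D : Set α) :=
      ⟨⟨hb.1, hab⟩, hb.2⟩
    rw [hπ a ha.1] at h1 h2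
    rw [h1, h2]

/-- `r'` is the rank function of the simplification of the contraction by `e` of the rank function
`r` on `E`; its ground set `R` is a transversal of the parallel classes, and `π` sends each element
to the representative of its class. -/
structure SimpContr (r r' : Finset α → ℕ) (E R : Finset α) (e : α) (π : α → α) : Prop where
  rank : RankFn r
  mem : e ∈ E
  sub : R ⊆ E.erase e
  pair : ∀ a ∈ E.erase e, r {e, a} = 2
  map : ∀ a ∈ E.erase e, π a ∈ R ∧ r {e, a, π a} ≤ 2
  inj : ∀ a ∈ R, ∀ b ∈ R, r {e, a, b} ≤ 2 → a = b
  eq : ∀ X ⊆ R, r' X + 1 = r (insert e X)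

namespace SimpContr

variable {R : Finset α} {e : α} {π : α → α}

lemma span (h : SimpContr r r' E R e π) {X : Finset α} (hX : X ⊆ E.erase e) :
    r (insert e (X.image π)) = r (insert e X) := by
  have h1 := h.rank.cl_union (X := insert e X) (Y := X.image π) (by
    intro y hy
    obtain ⟨a, ha, rfl⟩ := Finset.mem_image.1 hy
    refine h.rank.cl_mono (X := {e, a}) ?_ (by simp [Finset.insert_subset_iff, ha])
    have h2 := (h.map a (hX ha)).2
    have h3 := h.pair a (hX ha)
    have h4 := h.rank.mono {e, a} {e, a, π a} (by simp [Finset.insert_subset_iff])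
    rw [show insert (π a) {e, a} = ({e, a, π a} : Finset α) by ext; simp; tauto]
    omega)
  have h2 := h.rank.cl_union (X := insert e (X.image π)) (Y := X) (by
    intro a ha
    refine h.rank.cl_mono (X := {e, π a}) ?_ (by
      simp [Finset.insert_subset_iff, Finset.mem_image_of_mem π ha])
    have h2 := h.map a (hX ha)
    have h3 := h.pair (π a) (h.sub h2.1)
    have h4 := h.rank.mono {e, π a} {e, a, π a} (by simp [Finset.insert_subset_iff])
    rw [show insert a {e, π a} = ({e, a, π a} : Finset α) by ext; simp; tauto]
    omega)
  rw [← h1, ← h2]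
  congr 1
  ext y
  simp only [Finset.mem_union, Finset.mem_insert]
  tauto

lemma fix (h : SimpContr r r' E R e π) {a : α} (ha : a ∈ R) : π a = a :=
  (h.inj a ha (π a) (h.map a (h.sub ha)).1 (h.map a (h.sub ha)).2).symm

lemma image_eq (h : SimpContr r r' E R e π) : (E.erase e).image π = R := by
  apply Finset.Subset.antisymm
  · intro y hy
    obtain ⟨a, ha, rfl⟩ := Finset.mem_image.1 hy
    exact (h.map a ha).1
  · intro a ha
    exact Finset.mem_image.2 ⟨a, h.sub ha, h.fix ha⟩

lemma rank_eq (h : SimpContr r r' E R e π) : r' R + 1 = r E := by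
  rw [h.eq R subset_rfl, ← h.image_eq, h.span subset_rfl, Finset.insert_erase h.mem]

lemma par_of_eq (h : SimpContr r r' E R e π) {a b : α} (ha : a ∈ E.erase e) (hb : b ∈ E.erase e)
    (hab : π a = π b) : r {e, a, b} ≤ 2 := by
  have h2 := h.map a ha
  have h3 := h.map b hb
  have h4 := h.pair (π a) (h.sub h2.1)
  rw [← hab] at h3
  have h5 := h.rank.sub (A := {e, a, b}) (B := {e, π a}) (X := {e, a, π a}) (Y := {e, b, π a})
    (by clear * -; grind) (by clear * -; grind)
  omega

lemma card_le (h : SimpContr r r' E R e π) {R0 : Finset α} (hR0 : R0 ⊆ E.erase e)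
    (hR : ∀ a ∈ R0, ∀ b ∈ R0, a ≠ b → 3 ≤ r {e, a, b}) : R0.card ≤ R.card := by
  apply Finset.card_le_card_of_injOn π (fun a ha => (h.map a (hR0 ha)).1)
  intro a ha b hb hab
  by_contra hne
  have h1 := hR a ha b hb hne
  have h2 := h.par_of_eq (hR0 ha) (hR0 hb) hab
  omega

/-- A partition of `R` lifts to a partition of `E.erase e` along `π`. -/
lemma lift_partition (h : SimpContr r r' E R e π) {X : Finset α} (hX : X ⊆ R) :
    ∃ X' Y', X' ∪ Y' = E.erase e ∧ Disjoint X' Y' ∧ X ⊆ X' ∧ R \ X ⊆ Y' ∧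
      r' X + 1 = r (insert e X') ∧ r' (R \ X) + 1 = r (insert e Y') := by
  refine ⟨(E.erase e).filter (fun a => π a ∈ X), (E.erase e).filter (fun a => π a ∉ X),
    Finset.filter_union_filter_not_eq _ _, Finset.disjoint_filter_filter_not _ _ _, ?_, ?_, ?_, ?_⟩
  · intro a ha
    exact Finset.mem_filter.2 ⟨h.sub (hX ha), by rwa [h.fix (hX ha)]⟩
  · intro a ha
    rw [Finset.mem_sdiff] at ha
    exact Finset.mem_filter.2 ⟨h.sub ha.1, by rw [h.fix ha.1]; exact ha.2⟩
  · rw [h.eq X hX, ← h.span (Finset.filter_subset _ _)]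
    congr 2
    ext y
    simp only [Finset.mem_image, Finset.mem_filter]
    constructor
    · intro hy
      exact ⟨y, ⟨h.sub (hX hy), by rwa [h.fix (hX hy)]⟩, h.fix (hX hy)⟩
    · rintro ⟨a, ⟨-, ha⟩, rfl⟩
      exact ha
  · rw [h.eq _ Finset.sdiff_subset, ← h.span (Finset.filter_subset _ _)]
    congr 2
    ext y
    simp only [Finset.mem_image, Finset.mem_filter, Finset.mem_sdiff]
    constructor
    · rintro ⟨hy, hyX⟩
      exact ⟨y, ⟨h.sub hy, by rwa [h.fix hy]⟩, h.fix hy⟩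
    · rintro ⟨a, ⟨ha', ha⟩, rfl⟩
      exact ⟨(h.map a ha').1, ha⟩

lemma tc (h : SimpContr r r' E R e π) (htc : TC r E)
    (hG1 : ∀ X Y, X ∪ Y = E.erase e → Disjoint X Y → r (insert e X) + r (insert e Y) ≤ r E + 2 →
      r (insert e X) ≤ 2 ∨ r (insert e Y) ≤ 2) : TC r' R := by
  have hr := h.rank
  have hR := h.rank_eq
  have two : ∀ X ⊆ R, 2 ≤ X.card → ∀ X', X ⊆ X' → 3 ≤ r (insert e X') := by
    intro X hX h2 X' hX'
    obtain ⟨a, ha, b, hb, hab⟩ := Finset.one_lt_card.1 h2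
    by_contra! hlt
    have h3 := hr.mono {e, a, b} (insert e X') (by
      simp [Finset.insert_subset_iff, hX' ha, hX' hb])
    exact hab (h.inj a (hX ha) b (hX hb) (by omega))
  constructor
  · intro X hX h1 h2
    obtain ⟨X', Y', hU, hdis, hXX, hYY, e1, e2⟩ := h.lift_partition hX
    obtain ⟨a, ha⟩ := Finset.card_pos.1 h1
    obtain ⟨b, hb⟩ := Finset.card_pos.1 h2
    have hY'E : Y' ⊆ E.erase e := hU ▸ Finset.subset_union_right
    have hX'E : X' ⊆ E.erase e := hU ▸ Finset.subset_union_left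
    rw [Finset.disjoint_left] at hdis
    have hcompl : E \ Y' = insert e X' := by
      have he := h.mem
      clear * - hU hdis hY'E he
      ext y
      have := congrArg (fun S => y ∈ S) hU
      grind
    have hX2 : 2 ≤ (insert e X').card := by
      have h3 := h.pair a (hX'E (hXX ha))
      have := hr.mono {e, a} (insert e X') (by simp [Finset.insert_subset_iff, hXX ha])
      have := hr.le_card (insert e X')
      omega
    have hY'E2 : Y' ⊆ E := hY'E.trans (Finset.erase_subset _ _)
    by_cases hYc : 2 ≤ Y'.card
    · have h5 := htc.2 Y' hY'E2 hYc (by rwa [hcompl])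
      rw [hcompl] at h5
      have h6 := hr.mono Y' (insert e Y') (by simp)
      omega
    · have h5 := htc.1 Y' hY'E2 (Finset.card_pos.2 ⟨b, hYY hb⟩) (by rw [hcompl]; omega)
      rw [hcompl] at h5
      have h6 := hr.le_card Y'
      have h7 := h.pair b (hY'E (hYY hb))
      have := hr.mono {e, b} (insert e Y') (by simp [Finset.insert_subset_iff, hYY hb])
      omega
  · intro X hX h1 h2
    obtain ⟨X', Y', hU, hdis, hXX, hYY, e1, e2⟩ := h.lift_partition hX
    by_contra! hlt
    have h3 := two X hX h1 X' hXX
    have h4 := two (R \ X) Finset.sdiff_subset h2 Y' hYY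
    have := hG1 X' Y' hU hdis (by omega)
    omega

lemma u24 (h : SimpContr r r' E R e π)
    (hG2 : ∃ K Q, e ∈ K ∧ K ⊆ E ∧ Q ⊆ E ∧ Q.card = 4 ∧ r (K ∪ Q) ≤ r K + 2 ∧
      ∀ T ⊆ Q, T.card = 2 → r K + 2 ≤ r (K ∪ T)) : U24R r' R := by
  have hr := h.rank
  obtain ⟨K, Q, heK, hK, hQ, hQc, hKQ, hT⟩ := hG2
  have hQe : Q ⊆ E.erase e := by
    intro a ha
    refine Finset.mem_erase.2 ⟨?_, hQ ha⟩
    rintro rfl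
    obtain ⟨T, hT1, hT2, hT3⟩ := Finset.exists_subsuperset_card_eq (s := {a}) (t := Q) (n := 2)
      (by simpa using ha) (by simp) (by omega)
    have h3 := hT T hT2 hT3
    have h4 := hr.union_le_card K (T \ {a})
    rw [show K ∪ T \ {a} = K ∪ T by clear * - heK; grind] at h4
    have h5 := Finset.card_sdiff_add_card_eq_card hT1
    simp only [Finset.card_singleton] at h5
    omega
  have hQinj : Set.InjOn π Q := by
    intro a ha b hb hab
    by_contra hne
    have h1 := hT {a, b} (by simp_all [Finset.insert_subset_iff]) (Finset.card_pair hne)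
    have h5 := h.par_of_eq (hQe ha) (hQe hb) hab
    have h6 := hr.sub (A := K ∪ {a, b}) (B := {e}) (X := K) (Y := {e, a, b})
      (by clear * -; grind) (by clear * - heK; grind)
    have h7 := hr.mono {e, a} {e, a, b} (by clear * -; grind)
    have h8 := h.pair a (hQe ha)
    have h9 := hr.unit a {e}
    rw [Finset.pair_comm] at h8
    omega
  have hKe : K.erase e ⊆ E.erase e := Finset.erase_subset_erase _ hK
  have hmap : ∀ X ⊆ E.erase e, X.image π ⊆ R := by
    intro X hX y hy
    obtain ⟨a, ha, rfl⟩ := Finset.mem_image.1 hy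
    exact (h.map a (hX ha)).1
  have hmove : ∀ T ⊆ Q, r' ((K.erase e).image π ∪ T.image π) + 1 = r (K ∪ T) := by
    intro T hTQ
    have hs : K.erase e ∪ T ⊆ E.erase e := Finset.union_subset hKe (hTQ.trans hQe)
    rw [← Finset.image_union, h.eq _ (hmap _ hs), h.span hs]
    congr 1
    clear * - heK
    grind
  have h0 := hmove ∅ (by simp)
  simp only [Finset.image_empty, Finset.union_empty] at h0
  refine ⟨(K.erase e).image π, Q.image π, hmap _ hKe, hmap _ hQe, ?_, ?_, ?_⟩
  · rw [Finset.card_image_of_injOn hQinj, hQc]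
  · have h1 := hmove Q subset_rfl
    omega
  · intro T1 hT1 hT1c
    obtain ⟨T, hTQ, rfl⟩ := Finset.subset_image_iff.1 hT1
    have hTc : T.card = 2 := by
      rw [← hT1c, Finset.card_image_of_injOn (hQinj.mono (by exact_mod_cast hTQ))]
    have h1 := hmove T hTQ
    have := hT T hTQ hTc
    omega

end SimpContr

/-- If, in the dual of `M`, contracting `e` and simplifying stays 3-connected (`hG1`), keeps a
`U_{2,4}`-minor (`hG2`) and identifies few elements (`hG3`), then every cosimplification of
`M ＼ e` is as required. -/
lemma transfer (hE : M.E = E) {e : α} (he : e ∈ E)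
    (hs : ∀ a ∈ E, ∀ b ∈ E, a ≠ b → rk M✶ {a, b} = 2) (htc : TC (rk M✶) E) (hc2 : 3 ≤ E.card)
    (hG1 : ∀ X Y, X ∪ Y = E.erase e → Disjoint X Y →
      rk M✶ (insert e X) + rk M✶ (insert e Y) ≤ rk M✶ E + 2 →
      rk M✶ (insert e X) ≤ 2 ∨ rk M✶ (insert e Y) ≤ 2)
    (hG2 : ∃ K Q, e ∈ K ∧ K ⊆ E ∧ Q ⊆ E ∧ Q.card = 4 ∧ rk M✶ (K ∪ Q) ≤ rk M✶ K + 2 ∧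
      ∀ T ⊆ Q, T.card = 2 → rk M✶ K + 2 ≤ rk M✶ (K ∪ T))
    (hG3 : ∃ R ⊆ E.erase e, E.card ≤ R.card + 4 ∧
      ∀ a ∈ R, ∀ b ∈ R, a ≠ b → 3 ≤ rk M✶ {e, a, b})
    {N' : Matroid α} (h : IsCosimplification (del M {e}) N') :
    eRank M ≤ eRank N' + 3 ∧ ThreeConnected N' ∧ HasU24Minor N' := by
  have hr := rk_rankFn M✶
  obtain ⟨D, π, hD, hN, hπ, hinj⟩ := cosimp_repr hE he hs h
  set R := E.erase e \ D with hR
  have hLE : (del M {e}).E = ((E.erase e : Finset α) : Set α) := by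
    have := del_ground hE {e}
    rw [Finset.sdiff_singleton_eq_erase] at this
    simpa using this
  have hNE : N'.E = R := by
    rw [hN, con_ground hLE]
  have hNE' : N'✶.E = R := by simpa using hNE
  have he1 : ∀ a ∈ E.erase e, rk M✶ {e, a} = 2 := fun a ha =>
    hs e he a (Finset.mem_of_mem_erase ha) (Finset.ne_of_mem_erase ha).symm
  obtain ⟨f, hf⟩ : ∃ f, f ∈ E.erase e := by
    have : 0 < (E.erase e).card := by rw [Finset.card_erase_of_mem he]; omega
    exact Finset.card_pos.1 this
  have he0 : rk M✶ {e} = 1 := by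
    rw [hr.indep_subset (J := {e, f})
      (by rw [he1 f hf, Finset.card_pair (Finset.ne_of_mem_erase hf).symm]) (by simp)]
    rfl
  have hS : SimpContr (rk M✶) (rk N'✶) E R e π := by
    refine ⟨hr, he, Finset.sdiff_subset, he1, hπ, hinj, ?_⟩
    intro X hX
    have h1 : N'✶ = del (con M✶ (({e} : Finset α) : Set α)) D := by
      simp [hN, con]
    rw [h1, rk_del (by intro x hx; have := hX hx; simp_all), ← he0,
      rk_con (P := M✶) (by simpa using hE) (by simpa using he) (by
        rw [Finset.sdiff_singleton_eq_erase]; exact hX.trans Finset.sdiff_subset),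
      Finset.union_comm]
    rfl
  have hdual : ∀ X ⊆ R, rk N' X + rk N'✶ R = rk N'✶ (R \ X) + X.card := by
    intro X hX
    have := rk_dual hNE' hX
    rwa [dual_dual] at this
  have hdualM : ∀ X ⊆ E, rk M X + rk M✶ E = rk M✶ (E \ X) + X.card := by
    intro X hX
    have := rk_dual (P := M✶) (by simpa using hE) hX
    rwa [dual_dual] at this
  have hrN' := rk_rankFn N'✶
  refine ⟨?_, ?_, ?_⟩
  · obtain ⟨R0, hR0, hR0c, hR0i⟩ := hG3
    have hcard := hS.card_le hR0 hR0i
    have hrR := hS.rank_eq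
    rw [eRank_eq, eRank_eq, ← rk_ground hE, ← rk_ground hNE]
    have h1 := hdual R subset_rfl
    have h2 := hdualM E subset_rfl
    simp only [Finset.sdiff_self, hrN'.empty, hr.empty] at h1 h2
    have : rk M E ≤ rk N' R + 3 := by omega
    exact_mod_cast this
  · rw [threeConnected_iff hNE]
    exact TC.dual hrN' hdual (hS.tc htc hG1)
  · rw [hasU24_iff hNE]
    exact U24R.dual hrN' (hS.u24 hG2) hdual

end

/-! ### Binary rank functions -/

/-- The rank function `ρ` on `E` is that of a binary matroid, `Rel` being its cycle space: the
family, closed under symmetric difference, of the disjoint unions of circuits. -/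
structure Binary {α : Type u} [DecidableEq α] (ρ : Finset α → ℕ) (E : Finset α)
    (Rel : Finset α → Prop) : Prop where
  rank : RankFn ρ
  sub : ∀ S, Rel S → S ⊆ E
  symm : ∀ S T, Rel S → Rel T → Rel (symmDiff S T)
  cl : ∀ e ∈ E, ∀ X ⊆ E, e ∉ X →
    (ρ (insert e X) = ρ X ↔ ∃ S, Rel S ∧ e ∈ S ∧ S ⊆ insert e X)

section
variable {α : Type u} [DecidableEq α] {ρ : Finset α → ℕ} {E : Finset α} {Rel : Finset α → Prop}

lemma rankFn_finrank {W : Type*} [AddCommGroup W] [Module (ZMod 2) W] (v : α → W) :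
    RankFn (fun X : Finset α => Module.finrank (ZMod 2) (Submodule.span (ZMod 2) (v '' X))) := by
  have fin : ∀ X : Finset α, FiniteDimensional (ZMod 2) (Submodule.span (ZMod 2) (v '' X)) :=
    fun X => FiniteDimensional.span_of_finite _ (X.finite_toSet.image v)
  refine ⟨by simp, ?_, ?_, ?_⟩
  · intro e X
    rw [Finset.coe_insert, Set.image_insert_eq, Submodule.span_insert]
    have := fin X
    have h1 := Submodule.finrank_add_le_finrank_add_finrank
      (Submodule.span (ZMod 2) {v e}) (Submodule.span (ZMod 2) (v '' X))
    have h2 := finrank_span_le_card (R := ZMod 2) ({v e} : Set W)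
    simp at h2
    omega
  · intro X Y h
    have := fin Y
    exact Submodule.finrank_mono (Submodule.span_mono (Set.image_mono (by exact_mod_cast h)))
  · intro X Y
    have := fin X
    have := fin Y
    have h1 := Submodule.finrank_sup_add_finrank_inf_eq
      (Submodule.span (ZMod 2) (v '' X)) (Submodule.span (ZMod 2) (v '' Y))
    rw [← Submodule.span_union, ← Set.image_union, ← Finset.coe_union] at h1
    have h2 : Module.finrank (ZMod 2) (Submodule.span (ZMod 2) (v '' ↑(X ∩ Y))) ≤
        Module.finrank (ZMod 2) (Submodule.span (ZMod 2) (v '' X) ⊓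
          Submodule.span (ZMod 2) (v '' Y) : Submodule (ZMod 2) W) := by
      apply Submodule.finrank_mono
      rw [le_inf_iff, Finset.coe_inter]
      exact ⟨Submodule.span_mono (Set.image_mono Set.inter_subset_left),
        Submodule.span_mono (Set.image_mono Set.inter_subset_right)⟩
    omega

lemma zmod2_add_self {W : Type*} [AddCommGroup W] [Module (ZMod 2) W] (w : W) : w + w = 0 := by
  rw [← two_smul (ZMod 2) w, show (2 : ZMod 2) = 0 from rfl, zero_smul]

lemma sum_symmDiff {W : Type*} [AddCommGroup W] [Module (ZMod 2) W] (v : α → W)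
    (S T : Finset α) : ∑ e ∈ symmDiff S T, v e = ∑ e ∈ S, v e + ∑ e ∈ T, v e := by
  have h1 := Finset.sum_inter_add_sum_sdiff S T v
  have h2 := Finset.sum_inter_add_sum_sdiff T S v
  rw [symmDiff_def, Finset.sup_eq_union, Finset.sum_union, ← h1, ← h2, Finset.inter_comm T S]
  · have := zmod2_add_self (∑ e ∈ S ∩ T, v e)
    rw [add_add_add_comm, this, zero_add]
  · rw [Finset.disjoint_left]
    grind

/-- Vectors over `GF(2)` give a binary rank function, whose cycle space consists of the sets of
vectors with zero sum. -/
lemma binary_finrank {W : Type*} [AddCommGroup W] [Module (ZMod 2) W] (v : α → W) (E : Finset α) :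
    Binary (fun X : Finset α => Module.finrank (ZMod 2) (Submodule.span (ZMod 2) (v '' X))) E
      (fun S => S ⊆ E ∧ ∑ e ∈ S, v e = 0) := by
  have fin : ∀ X : Finset α, FiniteDimensional (ZMod 2) (Submodule.span (ZMod 2) (v '' X)) :=
    fun X => FiniteDimensional.span_of_finite _ (X.finite_toSet.image v)
  refine ⟨rankFn_finrank v, fun S h => h.1, ?_, ?_⟩
  · rintro S T ⟨hS, hS0⟩ ⟨hT, hT0⟩
    refine ⟨?_, by rw [sum_symmDiff, hS0, hT0, add_zero]⟩
    intro x hx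
    rw [Finset.mem_symmDiff] at hx
    grind
  · intro e he X hX heX
    have h1 : (Module.finrank (ZMod 2) (Submodule.span (ZMod 2) (v '' ↑(insert e X))) =
        Module.finrank (ZMod 2) (Submodule.span (ZMod 2) (v '' ↑X))) ↔
        v e ∈ Submodule.span (ZMod 2) (v '' X) := by
      have hle : Submodule.span (ZMod 2) (v '' ↑X) ≤
          Submodule.span (ZMod 2) (v '' ↑(insert e X)) :=
        Submodule.span_mono (Set.image_mono (by simp))
      constructor
      · intro h
        have := fin (insert e X)
        rw [Submodule.eq_of_le_of_finrank_eq hle h.symm]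
        exact Submodule.subset_span ⟨e, by simp, rfl⟩
      · intro h
        rw [Finset.coe_insert, Set.image_insert_eq, Submodule.span_insert_eq_span h]
    rw [h1]
    constructor
    · intro h
      rw [Submodule.mem_span_image_finset_iff_exists_fun] at h
      obtain ⟨c₀, hc⟩ := h
      obtain ⟨c, hcc⟩ : ∃ c : α → ZMod 2, ∀ i : X, c i = c₀ i :=
        ⟨fun i => if h : i ∈ X then c₀ ⟨i, h⟩ else 0, fun i => by simp⟩
      simp only [← hcc] at hc
      rw [Finset.sum_coe_sort X (fun i => c i • v i)] at hc
      have hc' : ∑ i ∈ X.filter (fun i => c i ≠ 0), v i = v e := by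
        rw [← hc, Finset.sum_filter]
        apply Finset.sum_congr rfl
        intro i hi
        rcases (show ∀ x : ZMod 2, x = 0 ∨ x = 1 by decide) (c i) with h | h <;> simp [h]
      refine ⟨insert e (X.filter (fun i => c i ≠ 0)), ⟨?_, ?_⟩, by simp, ?_⟩
      · intro y hy
        simp only [Finset.mem_insert, Finset.mem_filter] at hy
        rcases hy with rfl | hy
        · exact he
        · exact hX hy.1
      · rw [Finset.sum_insert (by simp [heX]), hc', zmod2_add_self]
      · exact Finset.insert_subset_insert _ (Finset.filter_subset _ _)
    · rintro ⟨S, ⟨-, hS⟩, heS, hSX⟩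
      rw [← Finset.add_sum_erase S v heS] at hS
      have h2 : v e = ∑ x ∈ S.erase e, v x := by
        rw [← add_right_inj (v e), zmod2_add_self, hS]
      rw [h2]
      apply Submodule.sum_mem
      intro i hi
      apply Submodule.subset_span
      rw [Finset.mem_erase] at hi
      have := hSX hi.2
      rw [Finset.mem_insert] at this
      exact ⟨i, this.resolve_left hi.1, rfl⟩

namespace Binary

lemma mem_symm {S T : Finset α} {x : α} : x ∈ symmDiff S T ↔ ¬ (x ∈ S ↔ x ∈ T) := by
  rw [Finset.mem_symmDiff]
  tauto

/-- Binary matroids have no `U_{2,4}`-minor. -/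
lemma not_u24 (h : Binary ρ E Rel) : ¬ U24R ρ E := by
  intro hU
  obtain ⟨K, Q, hd, hK, hQ, hc, h1, h2⟩ := hU.mk_disjoint h.rank
  obtain ⟨a, b, c, d, hab, hac, had, hbc, hbd, hcd, rfl⟩ := Finset.card_eq_four.1 hc
  have hr := h.rank
  rw [Finset.disjoint_left] at hd
  have hQ' : a ∈ E ∧ b ∈ E ∧ c ∈ E ∧ d ∈ E := by
    refine ⟨hQ ?_, hQ ?_, hQ ?_, hQ ?_⟩ <;> simp
  have hKn : a ∉ K ∧ b ∉ K ∧ c ∉ K ∧ d ∉ K := by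
    refine ⟨fun hx => hd hx ?_, fun hx => hd hx ?_, fun hx => hd hx ?_, fun hx => hd hx ?_⟩ <;> simp
  -- a relation inside `K ∪ {x, y}` meeting `{x, y}` would lower the rank
  have bad : ∀ x y, x ≠ y → x ∈ E → y ∈ E → x ∉ K → y ∉ K →
      ρ K + 2 ≤ ρ (K ∪ {x, y}) → ∀ S, Rel S → x ∈ S → S ⊆ K ∪ {x, y} → False := by
    intro x y hxy hx hy hxK hyK hle S hS hxS hsub
    have h3 := (h.cl x hx (insert y K) (by grind) (by grind)).2 ⟨S, hS, hxS, by grind⟩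
    rw [show K ∪ {x, y} = insert x (insert y K) by grind, h3] at hle
    have := hr.unit y K
    omega
  have get : ∀ z ∈ ({a, b, c, d} : Finset α), z ≠ a → z ≠ b →
      ∃ S, Rel S ∧ z ∈ S ∧ S ⊆ insert z (K ∪ {a, b}) := by
    intro z hz hza hzb
    refine (h.cl z (hQ hz) (K ∪ {a, b}) (by grind) (by grind)).1 ?_
    have h3 := h2 {a, b} (by simp [Finset.insert_subset_iff]) (Finset.card_pair hab)
    have h4 := hr.mono (insert z (K ∪ {a, b})) (K ∪ {a, b, c, d}) (by grind)
    have h5 := hr.mono (K ∪ {a, b}) (insert z (K ∪ {a, b})) (by grind)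
    omega
  have pair : ∀ x ∈ ({a, b, c, d} : Finset α), ∀ y ∈ ({a, b, c, d} : Finset α), x ≠ y →
      ρ K + 2 ≤ ρ (K ∪ {x, y}) := fun x hx y hy hxy =>
    h2 {x, y} (by simp only [Finset.insert_subset_iff, Finset.singleton_subset_iff]; exact ⟨hx, hy⟩)
      (Finset.card_pair hxy)
  obtain ⟨S1, hS1, hc1, hs1⟩ := get c (by simp) hac.symm hbc.symm
  obtain ⟨S2, hS2, hd2, hs2⟩ := get d (by simp) had.symm hbd.symm
  have hS1a : a ∈ S1 := by
    by_contra hn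
    exact bad c b hbc.symm hQ'.2.2.1 hQ'.2.1 hKn.2.2.1 hKn.2.1 (pair c (by simp) b (by simp)
      hbc.symm) S1 hS1 hc1 (by clear * - hs1 hn; grind)
  have hS1b : b ∈ S1 := by
    by_contra hn
    exact bad c a hac.symm hQ'.2.2.1 hQ'.1 hKn.2.2.1 hKn.1 (pair c (by simp) a (by simp)
      hac.symm) S1 hS1 hc1 (by clear * - hs1 hn; grind)
  have hS2a : a ∈ S2 := by
    by_contra hn
    exact bad d b hbd.symm hQ'.2.2.2 hQ'.2.1 hKn.2.2.2 hKn.2.1 (pair d (by simp) b (by simp)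
      hbd.symm) S2 hS2 hd2 (by clear * - hs2 hn; grind)
  have hS2b : b ∈ S2 := by
    by_contra hn
    exact bad d a had.symm hQ'.2.2.2 hQ'.1 hKn.2.2.2 hKn.1 (pair d (by simp) a (by simp)
      had.symm) S2 hS2 hd2 (by clear * - hs2 hn; grind)
  refine bad c d hcd hQ'.2.2.1 hQ'.2.2.2 hKn.2.2.1 hKn.2.2.2 (pair c (by simp) d (by simp) hcd)
    (symmDiff S1 S2) (h.symm _ _ hS1 hS2) ?_ ?_
  · rw [mem_symm]
    clear * - hs2 hc1 hcd hKn hac hbc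
    grind
  · intro x hx
    rw [mem_symm] at hx
    clear * - hx hs1 hs2 hS1a hS1b hS2a hS2b
    grind

end Binary
end

/-! ### Even edge sets of graphs -/

namespace Graph
variable {V α : Type u} (G : Graph V α)

/-- One of the two ends of an edge. -/
noncomputable def sv (e : α) : V := (Quot.out (G.inc e)).1

/-- The other end of an edge. -/
noncomputable def tv (e : α) : V := (Quot.out (G.inc e)).2

lemma inc_eq (e : α) : G.inc e = s(G.sv e, G.tv e) := (Quot.out_eq (G.inc e)).symm

/-- The column of the edge `e` in the vertex-edge incidence matrix over `GF(2)`. -/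
noncomputable def vec (e : α) : V →₀ ZMod 2 := Finsupp.single (G.sv e) 1 + Finsupp.single (G.tv e) 1

/-- An edge set is even if it meets every vertex an even number of times. -/
def Ev (S : Finset α) : Prop := ∑ e ∈ S, G.vec e = 0

open Classical in
/-- The degree of a vertex in a finite edge set, counting the ends `sv` and `tv` separately. -/
noncomputable def dg (S : Finset α) (v : V) : ℕ :=
  (S.filter (fun e => G.sv e = v)).card + (S.filter (fun e => G.tv e = v)).card

lemma deg_eq (S : Finset α) (v : V) : G.deg S v = G.dg S v := by
  classical
  have h1 : {e ∈ (S : Set α) | v ∈ G.inc e} =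
      ((S.filter (fun e => G.sv e = v) ∪ S.filter (fun e => G.tv e = v) : Finset α) : Set α) := by
    ext e
    simp only [Set.mem_ofPred_eq, Finset.coe_union, Finset.coe_filter, Set.mem_union, inc_eq,
      Sym2.mem_iff, Finset.mem_coe]
    grind
  have h2 : {e ∈ (S : Set α) | G.inc e = Sym2.diag v} =
      ((S.filter (fun e => G.sv e = v) ∩ S.filter (fun e => G.tv e = v) : Finset α) : Set α) := by
    ext e
    simp only [Set.mem_ofPred_eq, Finset.coe_inter, Finset.coe_filter, Set.mem_inter_iff, inc_eq,
      Sym2.diag, Finset.mem_coe, Sym2.eq_iff]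
    grind
  rw [deg, h1, h2, Set.ncard_coe_finset, Set.ncard_coe_finset, Finset.card_union_add_card_inter, dg]

lemma mem_vertsOf {C : Set α} {v : V} : v ∈ G.vertsOf C ↔ ∃ e ∈ C, G.sv e = v ∨ G.tv e = v := by
  simp only [vertsOf, Set.mem_ofPred_eq, inc_eq, Sym2.mem_iff]
  grind

lemma sum_vec_apply (S : Finset α) (v : V) : (∑ e ∈ S, G.vec e) v = (G.dg S v : ZMod 2) := by
  classical
  simp only [Finsupp.coe_finsetSum, Finset.sum_apply, vec, Finsupp.add_apply, Finsupp.single_apply,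
    Finset.sum_add_distrib, dg, Nat.cast_add, Finset.sum_boole]

lemma ev_iff (S : Finset α) : G.Ev S ↔ ∀ v, Even (G.dg S v) := by
  rw [Ev, DFunLike.ext_iff]
  apply forall_congr'
  intro v
  rw [sum_vec_apply, Finsupp.coe_zero, Pi.zero_apply, ZMod.natCast_eq_zero_iff_even]

lemma dg_pos {S : Finset α} {v : V} : 0 < G.dg S v ↔ v ∈ G.vertsOf S := by
  classical
  rw [mem_vertsOf, dg, Nat.add_pos_iff_pos_or_pos, Finset.card_pos, Finset.card_pos]
  simp only [Finset.Nonempty, Finset.mem_filter, Finset.mem_coe]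
  grind

lemma adjOn_of_mem {C : Set α} {e : α} (he : e ∈ C) :
    G.AdjOn C (G.sv e) (G.tv e) ∧ G.AdjOn C (G.tv e) (G.sv e) :=
  ⟨⟨e, he, G.inc_eq e⟩, ⟨e, he, by rw [G.inc_eq e, Sym2.eq_swap]⟩⟩

lemma ev_empty : G.Ev ∅ := by simp [Ev]

lemma ev_symmDiff [DecidableEq α] {S T : Finset α} (hS : G.Ev S) (hT : G.Ev T) :
    G.Ev (symmDiff S T) := by
  rw [Ev, sum_symmDiff, hS, hT, add_zero]

lemma sum_vec_total (S : Finset α) : (∑ e ∈ S, G.vec e).sum (fun _ c => c) = 0 := by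
  classical
  have h : ∀ w : V →₀ ZMod 2, w.sum (fun _ c => c) =
      Finsupp.lsum (ZMod 2) (fun _ : V => (LinearMap.id : ZMod 2 →ₗ[ZMod 2] ZMod 2)) w := by
    intro w; rfl
  rw [h, map_sum]
  apply Finset.sum_eq_zero
  intro e _
  rw [vec, map_add, Finsupp.lsum_single, Finsupp.lsum_single]
  decide

open Classical in
/-- A nonempty even set containing no other nonempty even set is a cycle. -/
lemma isCycle_of_minimal {F : Finset α} (hE : (F : Set α) ⊆ G.E) (hne : F.Nonempty) (hev : G.Ev F)
    (hmin : ∀ S ⊆ F, S.Nonempty → G.Ev S → S = F) : G.IsCycle F := by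
  set VF : Finset V := F.image G.sv ∪ F.image G.tv with hVF
  have hV : ∀ v, v ∈ G.vertsOf F ↔ v ∈ VF := by
    intro v
    rw [mem_vertsOf]
    simp only [hVF, Finset.mem_union, Finset.mem_image, Finset.mem_coe]
    grind
  refine ⟨hE, F.finite_toSet, by exact_mod_cast hne, ?_, ?_⟩
  · have h2 : ∀ v ∈ VF, 2 ≤ G.dg F v := by
      intro v hv
      have h3 := G.dg_pos.2 ((hV v).2 hv)
      have h4 := (G.ev_iff F).1 hev v
      obtain ⟨k, hk⟩ := h4
      omega
    have hsum : ∑ v ∈ VF, G.dg F v = 2 * F.card := by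
      simp only [dg, Finset.sum_add_distrib]
      rw [← Finset.card_eq_sum_card_fiberwise (f := G.sv) (s := F) (t := VF),
        ← Finset.card_eq_sum_card_fiberwise (f := G.tv) (s := F) (t := VF)]
      · omega
      · intro e he
        simp only [hVF, Finset.coe_union, Finset.coe_image]
        exact Or.inr ⟨e, he, rfl⟩
      · intro e he
        simp only [hVF, Finset.coe_union, Finset.coe_image]
        exact Or.inl ⟨e, he, rfl⟩
    -- subsets of `F - e₀` are determined by their sets of odd vertices other than `v₀`
    have hcard : F.card ≤ VF.card := by
      obtain ⟨e0, he0⟩ := hne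
      have hv0 : G.sv e0 ∈ VF := Finset.mem_union_left _ (Finset.mem_image_of_mem _ he0)
      have hinj : (F.erase e0).powerset.card ≤ (VF.erase (G.sv e0)).powerset.card := by
        apply Finset.card_le_card_of_injOn
          (fun S => (VF.erase (G.sv e0)).filter (fun v => (∑ e ∈ S, G.vec e) v ≠ 0))
        · intro S _
          exact Finset.mem_coe.2 (Finset.mem_powerset.2 (Finset.filter_subset _ _))
        · intro S hS T hT hST
          simp only [Finset.coe_powerset, Set.mem_preimage, Set.mem_powerset_iff,
            Finset.coe_subset] at hS hT
          have hzero : ∀ v, v ≠ G.sv e0 → (∑ e ∈ symmDiff S T, G.vec e) v = 0 := by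
            intro v hv
            by_cases hvF : v ∈ VF
            · have h5 : ((∑ e ∈ S, G.vec e) v ≠ 0) ↔ ((∑ e ∈ T, G.vec e) v ≠ 0) := by
                have := Finset.ext_iff.1 hST v
                simp only [Finset.mem_filter, Finset.mem_erase] at this
                tauto
              rw [sum_symmDiff, Finsupp.add_apply]
              exact (show ∀ a b : ZMod 2, (a ≠ 0 ↔ b ≠ 0) → a + b = 0 by decide) _ _ h5
            · rw [sum_vec_apply]
              have h6 : G.dg (symmDiff S T) v = 0 := by
                by_contra h7
                have h8 := G.dg_pos.1 (Nat.pos_of_ne_zero h7)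
                rw [mem_vertsOf] at h8
                obtain ⟨e, he, he'⟩ := h8
                apply hvF
                rw [← hV, mem_vertsOf]
                refine ⟨e, ?_, he'⟩
                rw [Finset.mem_coe, Finset.mem_symmDiff] at he
                have := Finset.erase_subset e0 F
                rcases he with he | he
                · exact Finset.mem_coe.2 (this (hS he.1))
                · exact Finset.mem_coe.2 (this (hT he.1))
              rw [h6, Nat.cast_zero]
          have hz0 : ∑ e ∈ symmDiff S T, G.vec e = 0 := by
            have h9 : ∑ e ∈ symmDiff S T, G.vec e =
                Finsupp.single (G.sv e0) ((∑ e ∈ symmDiff S T, G.vec e) (G.sv e0)) := by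
              ext v
              by_cases hv : v = G.sv e0
              · subst hv; simp
              · rw [hzero v hv, Finsupp.single_apply, if_neg (Ne.symm hv)]
            have h10 := G.sum_vec_total (symmDiff S T)
            rw [h9, Finsupp.sum_single_index rfl] at h10
            rw [h9, h10, Finsupp.single_zero]
          by_contra hne'
          have h11 := hmin (symmDiff S T) (by
            intro e he
            rw [Finset.mem_symmDiff] at he
            have := Finset.erase_subset e0 F
            rcases he with he | he
            · exact this (hS he.1)
            · exact this (hT he.1)) (by
              rw [Finset.nonempty_iff_ne_empty]
              intro h0
              exact hne' (symmDiff_eq_bot.1 h0)) hz0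
          rw [← h11, Finset.mem_symmDiff] at he0
          rcases he0 with h | h
          · exact Finset.notMem_erase e0 F (hS h.1)
          · exact Finset.notMem_erase e0 F (hT h.1)
      rw [Finset.card_powerset, Finset.card_powerset] at hinj
      have h12 := (Nat.pow_le_pow_iff_right (by norm_num : 1 < 2)).1 hinj
      rw [Finset.card_erase_of_mem he0, Finset.card_erase_of_mem hv0] at h12
      have := Finset.card_pos.2 ⟨_, hv0⟩
      omega
    intro v hv
    rw [deg_eq]
    rw [hV] at hv
    by_contra hne2
    have h13 : ∑ _v ∈ VF, 2 < ∑ v ∈ VF, G.dg F v :=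
      Finset.sum_lt_sum h2 ⟨v, hv, lt_of_le_of_ne (h2 v hv) (Ne.symm hne2)⟩
    rw [hsum, Finset.sum_const, smul_eq_mul] at h13
    omega
  · intro u hu v hv
    set U : Set V := {w | Relation.ReflTransGen (G.AdjOn F) u w} with hU
    have hiff : ∀ e ∈ F, (G.sv e ∈ U ↔ G.tv e ∈ U) := fun e he =>
      ⟨fun h => Relation.ReflTransGen.tail h (G.adjOn_of_mem (Finset.mem_coe.2 he)).1,
        fun h => Relation.ReflTransGen.tail h (G.adjOn_of_mem (Finset.mem_coe.2 he)).2⟩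
    have huU : u ∈ U := Relation.ReflTransGen.refl
    have h1 : F.filter (fun e => G.sv e ∈ U) = F := by
      apply hmin _ (Finset.filter_subset _ _)
      · rw [mem_vertsOf] at hu
        obtain ⟨e, he, h | h⟩ := hu
        · exact ⟨e, Finset.mem_filter.2 ⟨he, h ▸ huU⟩⟩
        · exact ⟨e, Finset.mem_filter.2 ⟨he, (hiff e he).2 (h ▸ huU)⟩⟩
      · rw [ev_iff]
        intro w
        have h2 := (G.ev_iff F).1 hev w
        by_cases hw : w ∈ U
        · convert h2 using 1
          unfold dg
          rw [Finset.filter_filter, Finset.filter_filter]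
          congr 2 <;> apply Finset.filter_congr <;> intro e he <;> have := hiff e he <;> grind
        · suffices h0 : G.dg (F.filter (fun e => G.sv e ∈ U)) w = 0 by rw [h0]; exact Even.zero
          unfold dg
          rw [Nat.add_eq_zero_iff, Finset.card_eq_zero, Finset.card_eq_zero, Finset.filter_filter,
            Finset.filter_filter, Finset.filter_eq_empty_iff, Finset.filter_eq_empty_iff]
          constructor <;> intro e he <;> have := hiff e he <;> grind
    rw [mem_vertsOf] at hv
    obtain ⟨e, he, h⟩ := hv
    have h3 : G.sv e ∈ U := by
      have : e ∈ F.filter (fun e => G.sv e ∈ U) := by rw [h1]; exact he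
      exact (Finset.mem_filter.1 this).2
    have h4 := (hiff e he).1 h3
    rcases h with h | h
    · rw [← h]; exact h3
    · rw [← h]; exact h4

/-- Cycles are even. -/
lemma IsCycle.ev {F : Finset α} (h : G.IsCycle F) : G.Ev F := by
  rw [ev_iff]
  intro v
  by_cases hv : v ∈ G.vertsOf F
  · rw [← deg_eq, h.2.2.2.1 v hv]; decide
  · rw [← dg_pos] at hv
    rw [show G.dg F v = 0 by omega]
    decide

/-- A cycle contains no other nonempty even set. -/
lemma IsCycle.minimal {F S : Finset α} (h : G.IsCycle F) (hS : S ⊆ F) (hne : S.Nonempty)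
    (hev : G.Ev S) : S = F := by
  classical
  have key : ∀ v ∈ G.vertsOf S, ∀ e ∈ F, (G.sv e = v ∨ G.tv e = v) → e ∈ S := by
    intro v hv e he hev'
    have h1 := G.dg_pos.2 hv
    have h2 : v ∈ G.vertsOf F := by
      rw [mem_vertsOf] at hv ⊢
      obtain ⟨f, hf, hf'⟩ := hv
      exact ⟨f, hS hf, hf'⟩
    have h3 := h.2.2.2.1 v h2
    rw [deg_eq] at h3
    obtain ⟨k, hk⟩ := (G.ev_iff S).1 hev v
    have ha := Finset.filter_subset_filter (fun e => G.sv e = v) hS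
    have hb := Finset.filter_subset_filter (fun e => G.tv e = v) hS
    have ha' := Finset.card_le_card ha
    have hb' := Finset.card_le_card hb
    unfold dg at h1 h3 hk
    have ha2 := Finset.eq_of_subset_of_card_le ha (by omega)
    have hb2 := Finset.eq_of_subset_of_card_le hb (by omega)
    rcases hev' with h | h
    · have : e ∈ F.filter (fun e => G.sv e = v) := Finset.mem_filter.2 ⟨he, h⟩
      rw [← ha2] at this
      exact (Finset.mem_filter.1 this).1
    · have : e ∈ F.filter (fun e => G.tv e = v) := Finset.mem_filter.2 ⟨he, h⟩
      rw [← hb2] at this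
      exact (Finset.mem_filter.1 this).1
  obtain ⟨f, hf⟩ := hne
  apply Finset.Subset.antisymm hS
  intro e he
  have hfv : G.sv f ∈ G.vertsOf S := G.mem_vertsOf.2 ⟨f, hf, Or.inl rfl⟩
  have hfv' : G.sv f ∈ G.vertsOf F := G.mem_vertsOf.2 ⟨f, hS hf, Or.inl rfl⟩
  have hev' : G.sv e ∈ G.vertsOf F := G.mem_vertsOf.2 ⟨e, he, Or.inl rfl⟩
  have hr := h.2.2.2.2 _ hfv' _ hev'
  have : G.sv e ∈ G.vertsOf S := by
    generalize G.sv e = w at hr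
    induction hr with
    | refl => exact hfv
    | tail _ h2 ih =>
      obtain ⟨g, hg, hg'⟩ := h2
      rw [inc_eq, Sym2.eq_iff] at hg'
      have h5 := key _ ih g hg (by grind)
      rw [mem_vertsOf]
      exact ⟨g, h5, by grind⟩
  exact key _ this e he (Or.inl rfl)

/-- Every element of an even set lies in a cycle contained in that set. -/
lemma exists_cycle {F : Finset α} (hE : (F : Set α) ⊆ G.E) (hev : G.Ev F) {e : α} (he : e ∈ F) :
    ∃ C : Finset α, C ⊆ F ∧ e ∈ C ∧ G.IsCycle C := by
  classical
  induction F using Finset.strongInduction with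
  | H F ih =>
    by_cases hmin : ∀ S ⊆ F, S.Nonempty → G.Ev S → S = F
    · exact ⟨F, subset_rfl, he, G.isCycle_of_minimal hE ⟨e, he⟩ hev hmin⟩
    · push Not at hmin
      obtain ⟨S, hSF, hS, hSe, hne⟩ := hmin
      have step : ∀ T : Finset α, T ⊆ F → T ≠ F → G.Ev T → e ∈ T →
          ∃ C : Finset α, C ⊆ F ∧ e ∈ C ∧ G.IsCycle C := by
        intro T hT hTF hTe heT
        obtain ⟨C, h1, h2, h3⟩ := ih T (Finset.ssubset_iff_subset_ne.2 ⟨hT, hTF⟩)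
          ((Finset.coe_subset.2 hT).trans hE) hTe heT
        exact ⟨C, h1.trans hT, h2, h3⟩
      by_cases heS : e ∈ S
      · exact step S hSF hne hSe heS
      · have h4 : symmDiff F S = F \ S := by
          ext x; rw [Finset.mem_symmDiff, Finset.mem_sdiff]
          have := @hSF x
          tauto
        refine step (F \ S) Finset.sdiff_subset ?_ (h4 ▸ G.ev_symmDiff hev hSe) (by simp [he, heS])
        intro h5
        obtain ⟨x, hx⟩ := hS
        have := hSF hx
        rw [← h5] at this
        exact (Finset.mem_sdiff.1 this).2 hx

/-- Two distinct nonempty even sets yield two distinct cycles, and conversely. -/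
lemma hasTwoCycles_iff {X : Set α} (hX : X ⊆ G.E) : G.HasTwoCycles X ↔
    ∃ A B : Finset α, A ≠ B ∧ A.Nonempty ∧ B.Nonempty ∧ G.Ev A ∧ G.Ev B ∧ (A : Set α) ⊆ X ∧
      (B : Set α) ⊆ X := by
  classical
  constructor
  · rintro ⟨C, D, hC, hD, hCD, hCX, hDX⟩
    obtain ⟨A, rfl⟩ := hC.2.1.exists_finset_coe
    obtain ⟨B, rfl⟩ := hD.2.1.exists_finset_coe
    exact ⟨A, B, by exact_mod_cast hCD, by exact_mod_cast hC.2.2.1, by exact_mod_cast hD.2.2.1,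
      IsCycle.ev G hC, IsCycle.ev G hD, hCX, hDX⟩
  · rintro ⟨A, B, hAB, ⟨a, ha⟩, ⟨b, hb⟩, hAe, hBe, hAX, hBX⟩
    obtain ⟨C, hCA, haC, hC⟩ := G.exists_cycle (hAX.trans hX) hAe ha
    have fin : ∀ D : Finset α, G.IsCycle D → D ≠ C → (D : Set α) ⊆ X → G.HasTwoCycles X :=
      fun D hD hne hDX => ⟨C, D, hC, hD, fun h => hne (Finset.coe_injective h).symm,
        (Finset.coe_subset.2 hCA).trans hAX, hDX⟩
    have main : ∀ (Y : Finset α) (y : α), y ∈ Y → G.Ev Y → (Y : Set α) ⊆ X → Y ≠ C →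
        G.HasTwoCycles X := by
      intro Y y hy hYe hYX hYC
      have h1 : ∃ z ∈ Y, z ∉ C ∨ ¬ C ⊆ Y := by
        by_cases hCY : C ⊆ Y
        · by_contra hcon
          push Not at hcon
          exact hYC (Finset.Subset.antisymm (fun z hz => (hcon z hz).1) hCY)
        · exact ⟨y, hy, Or.inr hCY⟩
      obtain ⟨z, hz, hz'⟩ := h1
      obtain ⟨D, hDY, hzD, hD⟩ := G.exists_cycle (hYX.trans hX) hYe hz
      refine fin D hD ?_ ((Finset.coe_subset.2 hDY).trans hYX)
      rintro rfl
      rcases hz' with h | h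
      · exact h hzD
      · exact h hDY
    by_cases h : A = C
    · exact main B b hb hBe hBX (fun h' => hAB (h.trans h'.symm))
    · exact main A a ha hAe hAX h

end Graph

/-! ### Dependence in graphic and bicircular lift matroids -/

section
variable {V α : Type u} {G : Graph V α} {L : Matroid α}

lemma graphic_dep_iff (h : IsGraphicRep G L) {X : Set α} (hX : X ⊆ L.E) :
    L.Dep X ↔ ∃ A : Finset α, A.Nonempty ∧ G.Ev A ∧ (A : Set α) ⊆ X := by
  constructor
  · intro hd
    obtain ⟨C, hCX, hC⟩ := hd.exists_isCircuit_subset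
    have h1 := (h.2 C).1 hC
    obtain ⟨A, rfl⟩ := h1.2.1.exists_finset_coe
    exact ⟨A, by exact_mod_cast h1.2.2.1, Graph.IsCycle.ev G h1, hCX⟩
  · rintro ⟨A, ⟨a, ha⟩, hA, hAX⟩
    obtain ⟨C, hCA, haC, hC⟩ := G.exists_cycle (hAX.trans (h.1 ▸ hX)) hA ha
    exact ((h.2 C).2 hC).1.superset ((Finset.coe_subset.2 hCA).trans hAX) hX

lemma lift_dep_iff (h : IsLiftRep G L) {X : Set α} (hX : X ⊆ L.E) :
    L.Dep X ↔ ∃ A B : Finset α, A ≠ B ∧ A.Nonempty ∧ B.Nonempty ∧ G.Ev A ∧ G.Ev B ∧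
      (A : Set α) ⊆ X ∧ (B : Set α) ⊆ X := by
  rw [← G.hasTwoCycles_iff (h.1 ▸ hX)]
  constructor
  · intro hd
    obtain ⟨C, hCX, hC⟩ := hd.exists_isCircuit_subset
    have h1 := (h.2 C).1 hC
    obtain ⟨A, B, h2⟩ := h1.1.2
    exact ⟨A, B, h2.1, h2.2.1, h2.2.2.1, h2.2.2.2.1.trans hCX, h2.2.2.2.2.trans hCX⟩
  · rintro ⟨A, B, hA, hB, hAB, hAX, hBX⟩
    have hfin : (A ∪ B).Finite := hA.2.1.union hB.2.1
    have hP : (A ∪ B) ⊆ G.E ∧ G.HasTwoCycles (A ∪ B) :=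
      ⟨union_subset (hAX.trans (h.1 ▸ hX)) (hBX.trans (h.1 ▸ hX)),
        A, B, hA, hB, hAB, subset_union_left, subset_union_right⟩
    obtain ⟨C, hCle, hC⟩ : ∃ C ⊆ A ∪ B, Minimal (fun Y => Y ⊆ G.E ∧ G.HasTwoCycles Y) C := by
      obtain ⟨C, hC⟩ := (hfin.finite_subsets.subset
        (t := {Y | Y ⊆ A ∪ B ∧ Y ⊆ G.E ∧ G.HasTwoCycles Y}) (fun Y h => h.1)).exists_minimal
        ⟨A ∪ B, subset_rfl, hP⟩
      refine ⟨C, hC.1.1, hC.1.2, ?_⟩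
      intro Y hY hYC
      exact hC.2 ⟨hYC.trans hC.1.1, hY⟩ hYC
    exact ((h.2 C).2 hC).1.superset (hCle.trans (union_subset hAX hBX)) hX

end

/-! ### Excluded minors are finite -/

section
variable {V α : Type u} {G : Graph V α} {M : Matroid α}

lemma liftCircuit_finite {C : Set α} (h : G.LiftCircuit C) : C.Finite := by
  obtain ⟨A, B, hA, hB, hAB, hAC, hBC⟩ := h.1.2
  refine (hA.2.1.union hB.2.1).subset (h.2 ⟨?_, A, B, hA, hB, hAB, subset_union_left,
    subset_union_right⟩ (union_subset hAC hBC))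
  exact union_subset (hAC.trans h.1.1) (hBC.trans h.1.1)

lemma InBL.circuit_finite {L : Matroid α} (h : InBL L) {C : Set α} (hC : Circuit L C) :
    C.Finite := by
  rcases h with ⟨V, G, h⟩ | ⟨V, G, h⟩
  · exact ((h.2 C).1 hC).2.1
  · exact liftCircuit_finite ((h.2 C).1 hC)

lemma graphicRep_of (hE : M.E = G.E) (hfin : ∀ C, Circuit M C → C.Finite)
    (hdep : ∀ X : Finset α, (X : Set α) ⊆ M.E → (M.Dep X ↔
      ∃ A : Finset α, A.Nonempty ∧ G.Ev A ∧ (A : Set α) ⊆ X)) : IsGraphicRep G M := by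
  refine ⟨hE, fun C => ⟨fun hC => ?_, fun hC => ?_⟩⟩
  · obtain ⟨F, rfl⟩ := (hfin C hC).exists_finset_coe
    have hFE := hC.1.subset_ground
    have key : ∀ S ⊆ F, S.Nonempty → G.Ev S → S = F := by
      intro S hS hne hev
      have hd := (hdep S ((Finset.coe_subset.2 hS).trans hFE)).2 ⟨S, hne, hev, subset_rfl⟩
      exact Finset.Subset.antisymm hS (Finset.coe_subset.1 (hC.2 hd (Finset.coe_subset.2 hS)))
    obtain ⟨A, hA, hAe, hAF⟩ := (hdep F hFE).1 hC.1
    have := key A (Finset.coe_subset.1 hAF) hA hAe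
    subst this
    exact G.isCycle_of_minimal (hE ▸ hFE) hA hAe key
  · obtain ⟨F, rfl⟩ := hC.2.1.exists_finset_coe
    have hFE : (F : Set α) ⊆ M.E := hE ▸ hC.1
    refine ⟨(hdep F hFE).2 ⟨F, by exact_mod_cast hC.2.2.1, Graph.IsCycle.ev G hC, subset_rfl⟩, ?_⟩
    intro Y hY hYF
    obtain ⟨Y, rfl⟩ := (F.finite_toSet.subset hYF).exists_finset_coe
    obtain ⟨A, hA, hAe, hAY⟩ := (hdep Y (hYF.trans hFE)).1 hY
    rw [← Graph.IsCycle.minimal G hC (Finset.coe_subset.1 (hAY.trans hYF)) hA hAe]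
    exact hAY

lemma liftRep_of (hE : M.E = G.E) (hfin : ∀ C, Circuit M C → C.Finite)
    (hdep : ∀ X : Finset α, (X : Set α) ⊆ M.E → (M.Dep X ↔
      ∃ A B : Finset α, A ≠ B ∧ A.Nonempty ∧ B.Nonempty ∧ G.Ev A ∧ G.Ev B ∧
      (A : Set α) ⊆ X ∧ (B : Set α) ⊆ X)) : IsLiftRep G M := by
  have hdep' : ∀ X : Set α, X.Finite → (M.Dep X ↔ X ⊆ G.E ∧ G.HasTwoCycles X) := by
    intro X hX
    obtain ⟨X, rfl⟩ := hX.exists_finset_coe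
    constructor
    · intro h
      have hXE := h.subset_ground
      refine ⟨hE ▸ hXE, ?_⟩
      rw [G.hasTwoCycles_iff (hE ▸ hXE)]
      exact (hdep X hXE).1 h
    · rintro ⟨h1, h2⟩
      rw [G.hasTwoCycles_iff h1] at h2
      exact (hdep X (hE ▸ h1)).2 h2
  refine ⟨hE, fun C => ⟨fun hC => ?_, fun hC => ?_⟩⟩
  · have hf := hfin C hC
    exact ⟨(hdep' C hf).1 hC.1, fun Y hY hYC => hC.2 ((hdep' Y (hf.subset hYC)).2 hY) hYC⟩
  · have hf := liftCircuit_finite hC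
    exact ⟨(hdep' C hf).2 hC.1, fun Y hY hYC => hC.2 ((hdep' Y (hf.subset hYC)).1 hY) hYC⟩

open Classical in
/-- Evenness depends only on which half-edges share a vertex. -/
lemma ev_iff_half {η : α × Bool → V} (h : ∀ e, G.inc e = s(η (e, true), η (e, false)))
    (S : Finset α) : G.Ev S ↔ ∀ p ∈ S ×ˢ (Finset.univ : Finset Bool),
      Even ((S ×ˢ (Finset.univ : Finset Bool)).filter (fun q => η q = η p)).card := by
  have h1 : ∑ e ∈ S, G.vec e = ∑ p ∈ S ×ˢ (Finset.univ : Finset Bool), Finsupp.single (η p) 1 := by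
    rw [Finset.sum_product]
    apply Finset.sum_congr rfl
    intro e _
    have h2 := G.inc_eq e
    rw [h e, Sym2.eq_iff] at h2
    rw [Fintype.sum_bool, Graph.vec]
    rcases h2 with ⟨h3, h4⟩ | ⟨h3, h4⟩
    · rw [h3, h4]
    · rw [h3, h4, add_comm]
  have h5 : ∀ v, (∑ e ∈ S, G.vec e) v =
      (((S ×ˢ (Finset.univ : Finset Bool)).filter (fun q => η q = v)).card : ZMod 2) := by
    intro v
    rw [h1]
    simp only [Finsupp.coe_finsetSum, Finset.sum_apply, Finsupp.single_apply, Finset.sum_boole]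
  constructor
  · intro hev p _
    rw [← ZMod.natCast_eq_zero_iff_even, ← h5, hev, Finsupp.coe_zero, Pi.zero_apply]
  · intro hev
    rw [Graph.Ev, DFunLike.ext_iff]
    intro v
    rw [h5, Finsupp.coe_zero, Pi.zero_apply, ZMod.natCast_eq_zero_iff_even]
    by_cases hv : ∃ p ∈ S ×ˢ (Finset.univ : Finset Bool), η p = v
    · obtain ⟨p, hp, rfl⟩ := hv
      exact hev p hp
    · push Not at hv
      rw [Finset.filter_eq_empty_iff.2 (fun p hp => hv p hp)]
      exact Even.zero

end

section
variable {α : Type u} {M : Matroid α}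

/-- An ultraproduct of graphs, with the edges labelled by `α`: a graph in which the finite even
sets are those which are even in almost all of the given graphs. -/
lemma exists_ultra (𝓤 : Ultrafilter (Finset α)) (V : Finset α → Type u)
    (G : ∀ F, Graph (V F) α) (E : Set α) :
    ∃ (W : Type u) (H : Graph W α), H.E = E ∧
      ∀ S : Finset α, ∀ᶠ F in (𝓤 : Filter (Finset α)), (H.Ev S ↔ (G F).Ev S) := by
  classical
  let η : ∀ F, α × Bool → V F := fun F p => if p.2 then (G F).sv p.1 else (G F).tv p.1
  have hη : ∀ F e, (G F).inc e = s(η F (e, true), η F (e, false)) := fun F e => by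
    simpa [η] using (G F).inc_eq e
  let st : Setoid (α × Bool) :=
    { r := fun p q => ∀ᶠ F in (𝓤 : Filter (Finset α)), η F p = η F q
      iseqv := ⟨fun p => by simp, fun h => h.mono fun F h => h.symm,
        fun h1 h2 => (h1.and h2).mono fun F h => h.1.trans h.2⟩ }
  let κ : α × Bool → Quotient st := fun p => Quotient.mk st p
  refine ⟨Quotient st, ⟨E, fun e => s(κ (e, true), κ (e, false))⟩, rfl, fun S => ?_⟩
  have hpq : ∀ p q, ∀ᶠ F in (𝓤 : Filter (Finset α)), (κ q = κ p ↔ η F q = η F p) := by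
    intro p q
    by_cases h : κ q = κ p
    · have : ∀ᶠ F in (𝓤 : Filter (Finset α)), η F q = η F p := Quotient.exact h
      exact this.mono fun F hF => by simp [h, hF]
    · have h1 : ¬ ∀ᶠ F in (𝓤 : Filter (Finset α)), η F q = η F p :=
        fun h2 => h (Quotient.sound (s := st) h2)
      rw [← Ultrafilter.eventually_not] at h1
      exact h1.mono fun F hF => by simp [h, hF]
  have hall : ∀ᶠ F in (𝓤 : Filter (Finset α)), ∀ p ∈ S ×ˢ (Finset.univ : Finset Bool),
      ∀ q ∈ S ×ˢ (Finset.univ : Finset Bool), (κ q = κ p ↔ η F q = η F p) := by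
    rw [Filter.eventually_all_finset]
    intro p _
    rw [Filter.eventually_all_finset]
    intro q _
    exact hpq p q
  refine hall.mono fun F hF => ?_
  rw [ev_iff_half (η := κ) (fun e => rfl), ev_iff_half (hη F)]
  refine forall₂_congr fun p hp => ?_
  refine iff_of_eq (congrArg (fun s : Finset (α × Bool) => Even s.card) ?_)
  ext q
  simp only [Finset.mem_filter]
  exact and_congr_right fun hq => hF p hp q hq

lemma con_empty (M : Matroid α) : con M ∅ = M := M.contract_empty

lemma del_empty (M : Matroid α) : del M ∅ = M := M.delete_empty

lemma con_strict {e : α} (he : e ∈ M.E) : IsStrictMinor (con M {e}) M := by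
  refine ⟨⟨{e}, ∅, (del_empty _).symm⟩, fun h => ?_⟩
  have h1 : (con M {e}).E = M.E \ {e} := rfl
  rw [h] at h1
  rw [h1] at he
  exact he.2 rfl

/-- Membership in `BL-bar` is determined by the finite restrictions and by the finiteness of
circuits, by compactness; so an excluded minor is finite. -/
lemma ExcludedMinorBL.finite (hex : ExcludedMinorBL M) : M.E.Finite := by
  classical
  by_contra hinf
  apply hex.1
  have hcirc : ∀ C, Circuit M C → C.Finite := by
    intro C hC
    by_contra hCinf
    have hCinf' : C.Infinite := hCinf
    obtain ⟨e, he⟩ := hCinf'.nonempty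
    have hss : ({e} : Set α) ⊂ C := by
      refine ssubset_of_subset_of_ne (by simpa using he) ?_
      rintro rfl
      exact hCinf (Set.finite_singleton e)
    have h1 : (M ／ {e}).IsCircuit (C \ {e}) := Matroid.IsCircuit.contract_isCircuit hC hss
    have h2 := (hex.2 _ (con_strict (hC.1.subset_ground he))).circuit_finite h1
    exact hCinf (h2.of_sdiff (Set.finite_singleton e))
  let N : Finset α → Matroid α := fun F => del M ((F : Set α)ᶜ)
  have hN : ∀ F, InBL (N F) := by
    intro F
    refine hex.2 _ ⟨⟨∅, _, by rw [con_empty]⟩, fun h => hinf ?_⟩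
    have h1 : (N F).E = M.E \ (F : Set α)ᶜ := rfl
    rw [h] at h1
    rw [h1]
    exact F.finite_toSet.subset (by rintro x ⟨_, hx⟩; simpa using hx)
  have hdepN : ∀ F X : Finset α, X ⊆ F → (X : Set α) ⊆ M.E →
      ((N F).Dep X ↔ M.Dep X) ∧ (X : Set α) ⊆ (N F).E := by
    intro F X hXF hXE
    have hs : (X : Set α) ⊆ M.E \ (F : Set α)ᶜ := fun x hx => ⟨hXE hx, by simpa using hXF hx⟩
    refine ⟨?_, hs⟩
    change (M ↾ _).Dep X ↔ _
    rw [Matroid.restrict_dep_iff, Matroid.Dep]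
    exact ⟨fun h => ⟨h.1, hXE⟩, fun h => ⟨h.1, hs⟩⟩
  let 𝓤 : Ultrafilter (Finset α) := Ultrafilter.of Filter.atTop
  have hge : ∀ X : Finset α, ∀ᶠ F in (𝓤 : Filter (Finset α)), X ⊆ F := fun X =>
    Ultrafilter.of_le _ (Filter.eventually_ge_atTop X)
  have hor : ∀ᶠ F in (𝓤 : Filter (Finset α)), IsGraphic (N F) ∨ IsBicircularLift (N F) :=
    Filter.Eventually.of_forall hN
  rw [Ultrafilter.eventually_or] at hor
  rcases hor with hg | hl
  · have : ∀ F, ∃ (V : Type u) (G : Graph V α), IsGraphic (N F) → IsGraphicRep G (N F) := by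
      intro F
      by_cases h : IsGraphic (N F)
      · obtain ⟨V, G, hG⟩ := h
        exact ⟨V, G, fun _ => hG⟩
      · exact ⟨PUnit, ⟨∅, fun _ => s(PUnit.unit, PUnit.unit)⟩, fun h' => absurd h' h⟩
    choose V G hG using this
    obtain ⟨W, H, hHE, hH⟩ := exists_ultra 𝓤 V G M.E
    refine Or.inl ⟨W, H, graphicRep_of hHE.symm hcirc fun X hX => ?_⟩
    have hpow : ∀ᶠ F in (𝓤 : Filter (Finset α)), ∀ A ∈ X.powerset, (H.Ev A ↔ (G F).Ev A) := by
      rw [Filter.eventually_all_finset]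
      exact fun A _ => hH A
    obtain ⟨F, ⟨h1, h2⟩, h3⟩ := ((hpow.and (hge X)).and hg).exists
    rw [← (hdepN F X h2 hX).1, graphic_dep_iff (hG F h3) (hdepN F X h2 hX).2]
    refine exists_congr fun A => ?_
    constructor
    · rintro ⟨ha, hb, hc⟩
      exact ⟨ha, (h1 A (Finset.mem_powerset.2 (Finset.coe_subset.1 hc))).2 hb, hc⟩
    · rintro ⟨ha, hb, hc⟩
      exact ⟨ha, (h1 A (Finset.mem_powerset.2 (Finset.coe_subset.1 hc))).1 hb, hc⟩
  · have : ∀ F, ∃ (V : Type u) (G : Graph V α), IsBicircularLift (N F) → IsLiftRep G (N F) := by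
      intro F
      by_cases h : IsBicircularLift (N F)
      · obtain ⟨V, G, hG⟩ := h
        exact ⟨V, G, fun _ => hG⟩
      · exact ⟨PUnit, ⟨∅, fun _ => s(PUnit.unit, PUnit.unit)⟩, fun h' => absurd h' h⟩
    choose V G hG using this
    obtain ⟨W, H, hHE, hH⟩ := exists_ultra 𝓤 V G M.E
    refine Or.inr ⟨W, H, liftRep_of hHE.symm hcirc fun X hX => ?_⟩
    have hpow : ∀ᶠ F in (𝓤 : Filter (Finset α)), ∀ A ∈ X.powerset, (H.Ev A ↔ (G F).Ev A) := by
      rw [Filter.eventually_all_finset]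
      exact fun A _ => hH A
    obtain ⟨F, ⟨h1, h2⟩, h3⟩ := ((hpow.and (hge X)).and hl).exists
    rw [← (hdepN F X h2 hX).1, lift_dep_iff (hG F h3) (hdepN F X h2 hX).2]
    have h4 : ∀ A : Finset α, (A : Set α) ⊆ X → (H.Ev A ↔ (G F).Ev A) := fun A hA =>
      h1 A (Finset.mem_powerset.2 (Finset.coe_subset.1 hA))
    refine exists₂_congr fun A B => ?_
    constructor
    · rintro ⟨ha, hb, hc, hd, he, hf, hg⟩
      exact ⟨ha, hb, hc, (h4 A hf).2 hd, (h4 B hg).2 he, hf, hg⟩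
    · rintro ⟨ha, hb, hc, hd, he, hf, hg⟩
      exact ⟨ha, hb, hc, (h4 A hf).1 hd, (h4 B hg).1 he, hf, hg⟩

end

/-! ### Ranks in graphic and bicircular lift matroids -/

section
variable {α : Type u} [DecidableEq α] {ρ r : Finset α → ℕ} {E : Finset α} {Rel : Finset α → Prop}

lemma Binary.indep_iff (h : Binary ρ E Rel) {X : Finset α} (hX : X ⊆ E) :
    ρ X = X.card ↔ ∀ S, Rel S → S ⊆ X → S = ∅ := by
  constructor
  · intro hc S hS hSX
    by_contra hne
    obtain ⟨e, he⟩ := Finset.nonempty_iff_ne_empty.2 hne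
    have heX := hSX he
    have h1 := (h.cl e (hX heX) (X.erase e) ((Finset.erase_subset _ _).trans hX) (by simp)).2
      ⟨S, hS, he, by rwa [Finset.insert_erase heX]⟩
    rw [Finset.insert_erase heX] at h1
    have h2 := h.rank.le_card (X.erase e)
    have := Finset.card_erase_lt_of_mem heX
    omega
  · intro hn
    induction X using Finset.induction_on with
    | empty => simpa using h.rank.empty
    | insert e X he ih =>
      have h1 := ih (by grind) (fun S hS hSX => hn S hS (by grind))
      have h2 : ρ (insert e X) ≠ ρ X := by
        intro h3
        obtain ⟨S, hS, heS, hSX⟩ := (h.cl e (by grind) X (by grind) he).1 h3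
        rw [hn S hS hSX] at heS
        simp at heS
      have := h.rank.unit e X
      have := h.rank.mono X (insert e X) (by simp)
      rw [Finset.card_insert_of_notMem he]
      omega

lemma U24R.congr (h : U24R r E) (hr : ∀ X ⊆ E, r X = ρ X) : U24R ρ E := by
  obtain ⟨K, Q, hK, hQ, hc, h1, h2⟩ := h
  refine ⟨K, Q, hK, hQ, hc, ?_, ?_⟩
  · rw [← hr _ (Finset.union_subset hK hQ), ← hr _ hK]; exact h1
  · intro T hT hT2
    rw [← hr _ (Finset.union_subset hK (hT.trans hQ)), ← hr _ hK]; exact h2 T hT hT2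

/-- Rank functions with the same independent sets agree. -/
lemma RankFn.eq_of_indep (h : RankFn r) (h' : RankFn ρ) {X : Finset α}
    (hi : ∀ I ⊆ X, (r I = I.card ↔ ρ I = I.card)) : r X = ρ X := by
  obtain ⟨B, -, hB, hB1, hB2⟩ := h.exists_basis (I := ∅) (X := X) (by simpa using h.empty) (by simp)
  obtain ⟨C, -, hC, hC1, hC2⟩ := h'.exists_basis (I := ∅) (X := X) (by simpa using h'.empty) (by simp)
  have h1 := (hi B hB).1 hB1
  have h2 := (hi C hC).2 hC1
  have := h.mono C X hC
  have := h'.mono B X hB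
  omega

end

section
variable {V α : Type u} [DecidableEq α] {G : Graph V α} {L : Matroid α} {E : Finset α}

/-- The rank function of the cycle matroid of `G`. -/
noncomputable def Graph.gr (G : Graph V α) (X : Finset α) : ℕ :=
  Module.finrank (ZMod 2) (Submodule.span (ZMod 2) (G.vec '' X))

lemma gr_binary (G : Graph V α) (E : Finset α) : Binary G.gr E (fun S => S ⊆ E ∧ G.Ev S) :=
  binary_finrank G.vec E

lemma graphic_not_u24 (h : IsGraphicRep G L) (hE : L.E = E) : ¬ U24R (rk L) E := by
  intro hU
  refine (gr_binary G E).not_u24 (hU.congr fun X hX => ?_)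
  refine (rk_rankFn L).eq_of_indep (gr_binary G E).rank fun I hI => ?_
  have hIE : (I : Set α) ⊆ L.E := hE ▸ Finset.coe_subset.2 (hI.trans hX)
  rw [← indep_iff_rk, ← Matroid.not_dep_iff hIE, graphic_dep_iff h hIE,
    (gr_binary G E).indep_iff (hI.trans hX)]
  constructor
  · intro hn S hS hSI
    by_contra hne
    exact hn ⟨S, Finset.nonempty_iff_ne_empty.2 hne, hS.2, Finset.coe_subset.2 hSI⟩
  · rintro hn ⟨A, hA, hAe, hAI⟩
    have hAI' := Finset.coe_subset.1 hAI
    exact hA.ne_empty (hn A ⟨hAI'.trans (hI.trans hX), hAe⟩ hAI')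

lemma lift_indep_iff (h : IsLiftRep G L) (hE : L.E = E) {I : Finset α} (hI : I ⊆ E) :
    L.Indep I ↔ I.card ≤ G.gr I + 1 := by
  have hIE : (I : Set α) ⊆ L.E := hE ▸ Finset.coe_subset.2 hI
  have hb := gr_binary G E
  rw [← Matroid.not_dep_iff hIE, lift_dep_iff h hIE]
  constructor
  · intro hn
    by_contra hlt
    obtain ⟨B, -, hBI, hB1, hB2⟩ := hb.rank.exists_basis (I := ∅) (X := I)
      (by simpa using hb.rank.empty) (by simp)
    have hc := Finset.card_sdiff_add_card_eq_card hBI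
    obtain ⟨e, he, f, hf, hef⟩ := Finset.one_lt_card.1 (show 1 < (I \ B).card by omega)
    rw [Finset.mem_sdiff] at he hf
    have get : ∀ z ∈ I, z ∉ B → ∃ S, G.Ev S ∧ z ∈ S ∧ S ⊆ insert z B := by
      intro z hz hzB
      have hsub : insert z B ⊆ I := by grind
      obtain ⟨S, hS, h1, h2⟩ := (hb.cl z (hI hz) B (hBI.trans hI) hzB).1 (by
        have := hb.rank.mono _ _ hsub
        have := hb.rank.mono B (insert z B) (by simp)
        omega)
      exact ⟨S, hS.2, h1, h2⟩
    obtain ⟨S, hS, heS, hSB⟩ := get e he.1 he.2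
    obtain ⟨T, hT, hfT, hTB⟩ := get f hf.1 hf.2
    refine hn ⟨S, T, ?_, ⟨e, heS⟩, ⟨f, hfT⟩, hS, hT, ?_, ?_⟩
    · rintro rfl
      have := hTB heS
      grind
    · intro x hx
      have := hSB hx
      grind
    · intro x hx
      have := hTB hx
      grind
  · rintro hle ⟨A, B, hAB, hA, hB, hAe, hBe, hAI, hBI⟩
    rw [Finset.coe_subset] at hAI hBI
    have main : ∀ A B : Finset α, B.Nonempty → G.Ev A → G.Ev B → A ⊆ I → B ⊆ I →
        ∀ a ∈ A, a ∉ B → False := by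
      rintro A B ⟨b, hb'⟩ hAe hBe hAI hBI a haA haB
      have haI := hAI haA
      have hbI := hBI hb'
      have hba : b ∈ I.erase a := by grind
      have h1 := (hb.cl a (hI haI) (I.erase a) (by grind) (by simp)).2
        ⟨A, ⟨hAI.trans hI, hAe⟩, haA, by rwa [Finset.insert_erase haI]⟩
      have h2 := (hb.cl b (hI hbI) ((I.erase a).erase b) (by grind) (by simp)).2
        ⟨B, ⟨hBI.trans hI, hBe⟩, hb', by rw [Finset.insert_erase hba]; grind⟩
      rw [Finset.insert_erase haI] at h1
      rw [Finset.insert_erase hba] at h2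
      have h3 := hb.rank.le_card ((I.erase a).erase b)
      have h4 := Finset.card_erase_lt_of_mem hba
      have h5 := Finset.card_erase_lt_of_mem haI
      omega
    by_cases h1 : A ⊆ B
    · have h2 : ¬ B ⊆ A := fun h => hAB (Finset.Subset.antisymm h1 h)
      obtain ⟨b, hb1, hb2⟩ := Finset.not_subset.1 h2
      exact main B A hA hBe hAe hBI hAI b hb1 hb2
    · obtain ⟨a, ha1, ha2⟩ := Finset.not_subset.1 h1
      exact main A B hB hAe hBe hAI hBI a ha1 ha2

/-- The rank function of the bicircular lift matroid. -/
lemma lift_rk (h : IsLiftRep G L) (hE : L.E = E) {X : Finset α} (hX : X ⊆ E) :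
    rk L X = min X.card (G.gr X + 1) := by
  have hb := (gr_binary G E).rank
  have hr := rk_rankFn L
  apply le_antisymm
  · obtain ⟨B, -, hB, hB1, hB2⟩ := hr.exists_basis (I := ∅) (X := X) (by simpa using hr.empty)
      (by simp)
    have h1 := (lift_indep_iff h hE (hB.trans hX)).1 ((indep_iff_rk L B).2 hB1)
    have := Finset.card_le_card hB
    have := hb.mono B X hB
    omega
  · obtain ⟨B, -, hB, hB1, hB2⟩ := hb.exists_basis (I := ∅) (X := X) (by simpa using hb.empty)
      (by simp)
    by_cases hXB : X ⊆ B
    · have h1 := (indep_iff_rk L X).1 ((lift_indep_iff h hE hX).2 (by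
        have := Finset.card_le_card hXB
        omega))
      omega
    · obtain ⟨e, he, heB⟩ := Finset.not_subset.1 hXB
      have hsub : insert e B ⊆ X := by grind
      have h1 := (indep_iff_rk L (insert e B)).1 ((lift_indep_iff h hE (hsub.trans hX)).2 (by
        have := hb.mono B (insert e B) (by simp)
        rw [Finset.card_insert_of_notMem heB]
        omega))
      rw [Finset.card_insert_of_notMem heB] at h1
      have := hr.mono _ _ hsub
      omega

end

/-! ### Cut spaces -/

section
variable {V α : Type u}

open Classical in
/-- The edges in `A` leaving the vertex set `Z`, where `s` and `t` give the ends of the edges. -/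
noncomputable def cut (s t : α → V) (A : Finset α) (Z : Set V) : Finset α :=
  A.filter (fun e => ¬ (s e ∈ Z ↔ t e ∈ Z))

lemma mem_cut {s t : α → V} {A : Finset α} {Z : Set V} {e : α} :
    e ∈ cut s t A Z ↔ e ∈ A ∧ ¬ (s e ∈ Z ↔ t e ∈ Z) := by
  classical
  simp [cut]

/-- The cut space: the sets of the form `cut s t A Z`. -/
def Cut (s t : α → V) (A S : Finset α) : Prop := ∃ Z, S = cut s t A Z

variable [DecidableEq α]

lemma cut_symmDiff {s t : α → V} {A : Finset α} (Z Z' : Set V) :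
    symmDiff (cut s t A Z) (cut s t A Z') = cut s t A (symmDiff Z Z') := by
  ext e
  rw [Binary.mem_symm, mem_cut, mem_cut, mem_cut, Set.mem_symmDiff, Set.mem_symmDiff]
  tauto

/-- The dual of a rank function on the set `E`. -/
def dualFn (g : Finset α → ℕ) (E X : Finset α) : ℕ := (X ∩ E).card + g (E \ X) - g E

lemma dualFn_eq {g : Finset α → ℕ} (hg : RankFn g) (E X : Finset α) :
    dualFn g E X + g E = (X ∩ E).card + g (E \ X) := by
  have h1 := hg.union_le_card (E \ X) (X ∩ E)
  rw [show E \ X ∪ X ∩ E = E by grind] at h1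
  rw [dualFn]
  omega

lemma dualFn_rankFn {g : Finset α → ℕ} (hg : RankFn g) (E : Finset α) : RankFn (dualFn g E) := by
  refine ⟨?_, ?_, ?_, ?_⟩
  · have := dualFn_eq hg E ∅
    simp at this
    omega
  · intro e X
    have h1 := dualFn_eq hg E X
    have h2 := dualFn_eq hg E (insert e X)
    have h3 := hg.mono (E \ insert e X) (E \ X) (by grind)
    have h4 : (insert e X ∩ E).card ≤ (X ∩ E).card + 1 :=
      (Finset.card_le_card (show insert e X ∩ E ⊆ insert e (X ∩ E) by grind)).trans
        (Finset.card_insert_le _ _)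
    omega
  · intro X Y hXY
    have h1 := dualFn_eq hg E X
    have h2 := dualFn_eq hg E Y
    have h3 := hg.union_le_card (E \ Y) ((Y ∩ E) \ (X ∩ E))
    rw [show E \ Y ∪ (Y ∩ E) \ (X ∩ E) = E \ X by grind] at h3
    have h4 := Finset.card_sdiff_add_card_eq_card (show X ∩ E ⊆ Y ∩ E by grind)
    omega
  · intro X Y
    have h1 := dualFn_eq hg E X
    have h2 := dualFn_eq hg E Y
    have h3 := dualFn_eq hg E (X ∪ Y)
    have h4 := dualFn_eq hg E (X ∩ Y)
    have h5 := hg.submod (E \ X) (E \ Y)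
    rw [show E \ X ∪ E \ Y = E \ (X ∩ Y) by grind, show E \ X ∩ (E \ Y) = E \ (X ∪ Y) by grind] at h5
    have h6 := Finset.card_union_add_card_inter (X ∩ E) (Y ∩ E)
    rw [show X ∩ E ∪ Y ∩ E = (X ∪ Y) ∩ E by grind,
      show X ∩ E ∩ (Y ∩ E) = (X ∩ Y) ∩ E by grind] at h6
    omega

open Classical in
/-- An even set and a cut do not meet in exactly one edge. -/
lemma ev_cut {G : Graph V α} {S : Finset α} (hS : G.Ev S) (Z : Set V) {e : α} (heS : e ∈ S)
    (he : ¬ (G.sv e ∈ Z ↔ G.tv e ∈ Z)) :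
    ∃ f ∈ S, f ≠ e ∧ ¬ (G.sv f ∈ Z ↔ G.tv f ∈ Z) := by
  by_contra hcon
  push Not at hcon
  let φ : (V →₀ ZMod 2) →ₗ[ZMod 2] ZMod 2 :=
    Finsupp.lsum (ZMod 2) (fun v : V => if v ∈ Z then LinearMap.id else 0)
  have hφ : ∀ v, φ (Finsupp.single v 1) = if v ∈ Z then 1 else 0 := by
    intro v
    simp only [φ, Finsupp.lsum_single]
    split_ifs <;> rfl
  have h1 : ∑ f ∈ S, φ (G.vec f) = 0 := by
    rw [← map_sum, hS, map_zero]
  rw [Finset.sum_eq_single_of_mem e heS, Graph.vec, map_add, hφ, hφ] at h1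
  · by_cases h2 : G.sv e ∈ Z <;> by_cases h3 : G.tv e ∈ Z <;> simp [h2, h3] at h1 he
  · intro f hf hfe
    have := hcon f hf hfe
    rw [Graph.vec, map_add, hφ, hφ]
    by_cases h2 : G.sv f ∈ Z <;> by_cases h3 : G.tv f ∈ Z <;> simp [h2, h3] at this ⊢
    decide

lemma exists_path {G : Graph V α} {F : Finset α} {u w : V}
    (h : Relation.ReflTransGen (G.AdjOn F) u w) :
    ∃ P ⊆ F, ∑ e ∈ P, G.vec e = Finsupp.single u 1 + Finsupp.single w 1 := by
  induction h with
  | refl => exact ⟨∅, by simp, by rw [zmod2_add_self]; simp⟩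
  | @tail v w _ h2 ih =>
    obtain ⟨P, hP, hs⟩ := ih
    obtain ⟨f, hf, hf'⟩ := h2
    refine ⟨symmDiff P {f}, ?_, ?_⟩
    · intro x hx
      rw [Finset.mem_symmDiff, Finset.mem_singleton] at hx
      rcases hx with hx | hx
      · exact hP hx.1
      · rw [hx.1]; exact hf
    · rw [sum_symmDiff, hs, Finset.sum_singleton]
      have h3 : G.vec f = Finsupp.single v 1 + Finsupp.single w 1 := by
        rw [G.inc_eq, Sym2.eq_iff] at hf'
        rw [Graph.vec]
        rcases hf' with ⟨h3, h4⟩ | ⟨h3, h4⟩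
        · rw [h3, h4]
        · rw [h3, h4, add_comm]
      have h4 := zmod2_add_self (Finsupp.single v (1 : ZMod 2))
      rw [h3, add_assoc, ← add_assoc (Finsupp.single v (1 : ZMod 2)), h4, zero_add]

/-- The dual of the cycle matroid of a graph is the binary matroid of its cut space. -/
lemma cut_binary (G : Graph V α) (E : Finset α) :
    Binary (dualFn G.gr E) E (Cut G.sv G.tv E) := by
  have hb := gr_binary G E
  refine ⟨dualFn_rankFn hb.rank E, ?_, ?_, ?_⟩
  · rintro S ⟨Z, rfl⟩ e he
    exact (mem_cut.1 he).1
  · rintro S T ⟨Z, rfl⟩ ⟨Z', rfl⟩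
    exact ⟨_, cut_symmDiff Z Z'⟩
  · intro e he X hX heX
    have h1 := dualFn_eq hb.rank E X
    have h2 := dualFn_eq hb.rank E (insert e X)
    rw [show insert e X ∩ E = insert e (X ∩ E) by grind,
      Finset.card_insert_of_notMem (by grind)] at h2
    have h3 := hb.cl e he (E \ insert e X) (by grind) (by grind)
    rw [show insert e (E \ insert e X) = E \ X by grind] at h3
    have h4 := hb.rank.unit e (E \ insert e X)
    rw [show insert e (E \ insert e X) = E \ X by grind] at h4
    have h5 := hb.rank.mono (E \ insert e X) (E \ X) (by grind)
    have h6 : dualFn G.gr E (insert e X) = dualFn G.gr E X ↔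
        ¬ G.gr (E \ X) = G.gr (E \ insert e X) := by
      constructor <;> intro h <;> omega
    rw [h6, h3]
    constructor
    · intro hn
      set F := E \ insert e X with hF
      have hiff : ∀ f ∈ F, (Relation.ReflTransGen (G.AdjOn F) (G.sv e) (G.sv f) ↔
          Relation.ReflTransGen (G.AdjOn F) (G.sv e) (G.tv f)) := fun f hf =>
        ⟨fun h => Relation.ReflTransGen.tail h (G.adjOn_of_mem (Finset.mem_coe.2 hf)).1,
          fun h => Relation.ReflTransGen.tail h (G.adjOn_of_mem (Finset.mem_coe.2 hf)).2⟩
      refine ⟨_, ⟨{v | Relation.ReflTransGen (G.AdjOn F) (G.sv e) v}, rfl⟩, ?_, ?_⟩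
      · refine mem_cut.2 ⟨he, ?_⟩
        simp only [Set.mem_ofPred_eq]
        intro h
        have h7 := h.1 Relation.ReflTransGen.refl
        obtain ⟨P, hP, hs⟩ := exists_path h7
        have heP : e ∉ P := fun h => by have := hP h; grind
        refine hn ⟨insert e P, ⟨by grind, ?_⟩, by simp, by grind⟩
        rw [Graph.Ev, Finset.sum_insert heP, hs, Graph.vec, zmod2_add_self]
      · intro f hf
        rw [mem_cut] at hf
        by_contra hfX
        exact hf.2 (hiff f (by grind))
    · rintro ⟨S, ⟨Z, rfl⟩, heS, hSX⟩ ⟨T, ⟨hTE, hT⟩, heT, hTX⟩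
      obtain ⟨f, hf, hfe, hfZ⟩ := ev_cut hT Z heT (mem_cut.1 heS).2
      have h7 := hSX (mem_cut.2 ⟨hTE hf, hfZ⟩)
      have h8 := hTX hf
      grind

/-- If the single-element contraction `M / x` belongs to `BL-bar` and has a `U₂,₄`-minor, then the
deletion `M✶ \ x` of the dual is the truncation of the dual of a graphic matroid: the rank of a
set in a bicircular lift matroid exceeds its rank in the cycle matroid by one as soon as the set
contains a cycle, which is dual to truncation. -/
lemma star {M : Matroid α} {E : Finset α} (hE : M.E = E) {x : α}
    (hBL : InBL (con M {x})) (hU : U24R (rk M✶) (E.erase x)) (h3 : 1 ≤ rk M✶ E)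
    (hxc : rk M✶ (E.erase x) = rk M✶ E) :
    ∃ (V : Type u) (s t : α → V) (ρ : Finset α → ℕ), Binary ρ (E.erase x) (Cut s t (E.erase x)) ∧
      (∀ D ⊆ E.erase x, rk M✶ D = min (ρ D) (rk M✶ E)) ∧ ρ (E.erase x) = rk M✶ E + 1 := by
  have hg : (con M {x}).E = ((E.erase x : Finset α) : Set α) := by
    have := con_ground hE {x}
    rw [Finset.coe_singleton] at this
    rw [this, Finset.sdiff_singleton_eq_erase]
  have hd : ∀ D ⊆ E.erase x, rk M✶ D + rk (con M {x}) (E.erase x) =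
      rk (con M {x}) (E.erase x \ D) + D.card := by
    intro D hD
    have h1 := rk_dual hg hD
    have h2 : (con M {x})✶ = del M✶ {x} := Matroid.dual_dual _
    rw [h2, rk_del (by
      intro e he
      have := hD he
      simp only [Set.mem_singleton_iff]
      exact (Finset.mem_erase.1 this).1)] at h1
    exact h1
  have hUc : U24R (rk (con M {x})) (E.erase x) := by
    refine hU.dual (rk_rankFn _) ?_
    intro D hD
    have h1 := hd (E.erase x) subset_rfl
    have h2 := hd (E.erase x \ D) Finset.sdiff_subset
    rw [Finset.sdiff_self, (rk_rankFn (con M {x})).empty] at h1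
    rw [show E.erase x \ (E.erase x \ D) = D by grind] at h2
    have h4 := Finset.card_sdiff_add_card_eq_card hD
    omega
  rcases hBL with ⟨V, G, hG⟩ | ⟨V, G, hG⟩
  · exact absurd hUc (graphic_not_u24 hG hg)
  · refine ⟨V, G.sv, G.tv, _, cut_binary G (E.erase x), ?_, ?_⟩
    · intro D hD
      have h1 := hd (E.erase x) subset_rfl
      rw [Finset.sdiff_self, (rk_rankFn (con M {x})).empty, lift_rk hG hg subset_rfl] at h1
      have h2 := hd D hD
      rw [lift_rk hG hg subset_rfl, lift_rk hG hg Finset.sdiff_subset] at h2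
      have h4 := Finset.card_sdiff_add_card_eq_card hD
      have h5 := dualFn_eq (gr_binary G (E.erase x)).rank (E.erase x) D
      rw [Finset.inter_eq_left.2 hD] at h5
      omega
    · have h1 := hd (E.erase x) subset_rfl
      rw [Finset.sdiff_self, (rk_rankFn (con M {x})).empty, lift_rk hG hg subset_rfl] at h1
      have h5 := dualFn_eq (gr_binary G (E.erase x)).rank (E.erase x) (E.erase x)
      rw [Finset.inter_self, Finset.sdiff_self, (gr_binary G (E.erase x)).rank.empty] at h5
      omega

end

/-! ### Contractions preserving connectivity -/

section
variable {α : Type u} [DecidableEq α] {ρ : Finset α → ℕ} {A J : Finset α}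

/-- The contraction by `J` of the restriction to `A` is connected. -/
def Conn (ρ : Finset α → ℕ) (J A : Finset α) : Prop :=
  ∀ X ⊆ A \ J, X.Nonempty → ((A \ J) \ X).Nonempty → ρ A + ρ J + 1 ≤ ρ (X ∪ J) + ρ (A \ X)

/-- Skewness over `J` passes to subsets. -/
lemma RankFn.skew_restrict (h : RankFn ρ) {P Q P₀ Q₀ : Finset α}
    (hs : ρ P + ρ Q ≤ ρ (P ∪ Q) + ρ J) (hP₀ : P₀ ⊆ P) (hQ₀ : Q₀ ⊆ Q) :
    ρ P₀ + ρ Q₀ ≤ ρ (P₀ ∪ Q₀) + ρ J := by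
  have h1 := h.sub (A := P ∪ Q₀) (B := P₀) (X := P) (Y := P₀ ∪ Q₀) (by grind) (by grind)
  have h2 := h.sub (A := P ∪ Q) (B := Q₀) (X := P ∪ Q₀) (Y := Q) (by grind) (by grind)
  omega

/-- Skewness over `J'` passes to skewness over larger sets. -/
lemma RankFn.skew_contract (h : RankFn ρ) {P Q J' : Finset α}
    (hs : ρ P + ρ Q ≤ ρ (P ∪ Q) + ρ J') (hP : J' ⊆ P) (hQ : J' ⊆ Q) (hJ' : J' ⊆ J)
    (hJ : J ⊆ P ∪ Q) : ρ (P ∪ J) + ρ (Q ∪ J) ≤ ρ (P ∪ Q) + ρ J := by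
  have h1 := h.skew_restrict hs (P₀ := J ∩ P) (Q₀ := J ∩ Q) (by grind) (by grind)
  rw [show J ∩ P ∪ J ∩ Q = J by grind] at h1
  have h2 := h.sub (A := P ∪ J) (B := J') (X := P) (Y := J ∩ Q) (by grind) (by grind)
  have h3 := h.sub (A := Q ∪ J) (B := J') (X := Q) (Y := J ∩ P) (by grind) (by grind)
  omega

set_option maxHeartbeats 1000000 in
/-- If a simple matroid on `A` and its contraction by a nonempty proper subset `J₀` are connected,
then so is the contraction by some single element of `J₀`. A minimal nonempty subset `J` of `J₀`
with a connected contraction is a single element: otherwise every `j ∈ J` satisfies the rank bound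
`key`, so `A \ J` spans `J` and `J` has rank at most one, against simplicity. -/
lemma ear (h : RankFn ρ) {J₀ : Finset α} (hJ₀ : J₀ ⊆ A) (hne : J₀.Nonempty)
    (hne' : (A \ J₀).Nonempty) (hA : Conn ρ ∅ A) (hAJ : Conn ρ J₀ A)
    (hs : ∀ X ⊆ A, X.card ≤ 2 → ρ X = X.card) : ∃ e ∈ J₀, Conn ρ {e} A := by
  obtain ⟨J, hJm⟩ := Finset.exists_minimal
    (s := J₀.powerset.filter fun J => J.Nonempty ∧ (∀ X ⊆ A \ J, X.Nonempty →
      ((A \ J) \ X).Nonempty → ρ A + ρ J + 1 ≤ ρ (X ∪ J) + ρ (A \ X)))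
    ⟨J₀, by simp only [Finset.mem_filter, Finset.mem_powerset]; exact ⟨subset_rfl, hne, hAJ⟩⟩
  have hJ1 := hJm.1
  simp only [Finset.mem_filter, Finset.mem_powerset] at hJ1
  obtain ⟨hJJ₀, hJne, hJc⟩ := hJ1
  have hJc : Conn ρ J A := hJc
  have hJmin : ∀ J' ⊆ J, J'.Nonempty → Conn ρ J' A → J' = J := by
    intro J' hJ' hn hc
    refine Finset.Subset.antisymm hJ' (hJm.2 ?_ hJ')
    simp only [Finset.mem_filter, Finset.mem_powerset]
    exact ⟨hJ'.trans hJJ₀, hn, hc⟩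
  by_cases hcard : J.card ≤ 1
  · obtain ⟨e, he⟩ := hJne
    have : J = {e} := by
      rw [Finset.card_le_one] at hcard
      ext x
      rw [Finset.mem_singleton]
      exact ⟨fun hx => hcard x hx e he, fun hx => hx ▸ he⟩
    exact ⟨e, hJJ₀ he, this ▸ hJc⟩
  exfalso
  have hJA := hJJ₀.trans hJ₀
  have key : ∀ j ∈ J, ρ (insert j (A \ J)) + ρ J ≤ ρ A + 1 := by
    intro j hj
    have hjA := hJA hj
    have hρj : ρ {j} = 1 := by simpa using hs {j} (by simpa using hjA) (by simp)
    obtain ⟨W, hWm⟩ := Finset.exists_minimal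
      (s := (A.erase j).powerset.filter fun W => A \ J ⊆ W ∧
        ρ (insert j W) + ρ (A \ W) ≤ ρ A + 1)
      ⟨A.erase j, by
        simp only [Finset.mem_filter, Finset.mem_powerset]
        refine ⟨subset_rfl, by clear * - hj; grind, ?_⟩
        rw [Finset.insert_erase hjA, show A \ A.erase j = {j} by clear * - hjA; grind, hρj]⟩
    have hW1 := hWm.1
    simp only [Finset.mem_filter, Finset.mem_powerset] at hW1
    obtain ⟨hWA, hJW, hWs⟩ := hW1
    have hWA' : W ⊆ A := hWA.trans (Finset.erase_subset _ _)
    have hjW : j ∉ W := fun hx => by have := hWA hx; simp at this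
    have hJ'J : A \ W ⊆ J := by clear * - hJW; grind
    have hconn : Conn ρ (A \ W) A := by
      intro X hX hXne hXne'
      by_contra hlt
      have hXA : X ⊆ A := by clear * - hX; grind
      have hXW : X ⊆ W := by clear * - hX; grind
      have hsk : ρ (X ∪ A \ W) + ρ (A \ X) ≤ ρ (X ∪ A \ W ∪ A \ X) + ρ (A \ W) := by
        rw [show X ∪ A \ W ∪ A \ X = A by clear * - hXA; grind]
        omega
      -- a part of the separation of `W` which contains `A \ J` contradicts the choice of `W`
      have small : ∀ Y ⊆ W, Y ≠ W → A \ J ⊆ Y →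
          ρ (Y ∪ A \ W) + ρ (A \ Y) ≤ ρ A + ρ (A \ W) → False := by
        intro Y hY hYW hJY hYs
        apply hYW
        refine Finset.Subset.antisymm hY (hWm.2 ?_ hY)
        simp only [Finset.mem_filter, Finset.mem_powerset]
        refine ⟨hY.trans hWA, hJY, ?_⟩
        have h1 := h.skew_restrict (J := {j}) (P := insert j W) (Q := A \ W)
          (P₀ := insert j Y) (Q₀ := A \ W) (by
            rw [show insert j W ∪ A \ W = A by clear * - hjA hWA; grind, hρj]; exact hWs)
            (Finset.insert_subset_insert _ hY) subset_rfl
        rw [show insert j Y ∪ A \ W = Y ∪ A \ W by clear * - hjA hjW; grind, hρj] at h1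
        omega
      by_cases c1 : A \ J ⊆ X
      · refine small X hXW ?_ c1 (by omega)
        rintro rfl
        obtain ⟨y, hy⟩ := hXne'
        clear * - hy; grind
      by_cases c2 : A \ J ⊆ W \ X
      · refine small (W \ X) Finset.sdiff_subset ?_ c2 ?_
        · intro heq
          obtain ⟨y, hy⟩ := hXne
          have := hXW hy
          rw [← heq] at this
          clear * - hy this; grind
        · rw [show W \ X ∪ A \ W = A \ X by clear * - hXW hWA'; grind,
            show A \ (W \ X) = X ∪ A \ W by clear * - hXW hWA'; grind]
          omega
      · have h2 := h.skew_contract (J := J) hsk (by clear * - hX; grind) (by clear * - hX; grind) hJ'J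
          (by clear * - hJA; grind)
        rw [show X ∪ A \ W ∪ A \ X = A by clear * - hXA; grind] at h2
        have h3 := hJc (X \ J) (by clear * - hXA; grind) (by
          obtain ⟨y, hy, hy'⟩ := Finset.not_subset.1 c2
          exact ⟨y, by clear * - hy hy' hJW; grind⟩) (by
          obtain ⟨y, hy, hy'⟩ := Finset.not_subset.1 c1
          exact ⟨y, by clear * - hy hy'; grind⟩)
        rw [show X \ J ∪ J = X ∪ A \ W ∪ J by clear * - hJ'J; grind,
          show A \ (X \ J) = A \ X ∪ J by clear * - hJA; grind] at h3
        omega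
    have h4 := hJmin (A \ W) hJ'J ⟨j, by clear * - hjA hjW; grind⟩ hconn
    have h5 : W = A \ J := by rw [← h4]; clear * - hWA'; grind
    rw [h4, h5] at hWs
    exact hWs
  have hAJne : (A \ J).Nonempty := hne'.mono (by clear * - hJJ₀; grind)
  have h6 := hA J (by clear * - hJA; grind) hJne (by simpa using hAJne)
  simp only [Finset.union_empty, h.empty] at h6
  have h7 : ρ (A \ J ∪ J) = ρ (A \ J) := h.cl_union fun j hj => by
    have := key j hj
    have := h.mono (A \ J) (insert j (A \ J)) (Finset.subset_insert _ _)
    omega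
  rw [show A \ J ∪ J = A by clear * - hJA; grind] at h7
  obtain ⟨j, hj⟩ := hJne
  have h8 := key j hj
  have h9 := h.mono (A \ J) (insert j (A \ J)) (Finset.subset_insert _ _)
  obtain ⟨T, hT1, hT2⟩ := Finset.exists_subset_card_eq (s := J) (n := 2) (by omega)
  have h10 := hs T (hT1.trans hJA) (by omega)
  have := h.mono T J hT1
  omega

end

/-! ### Small cuts -/

section
variable {V α : Type u} [DecidableEq α] {ρ : Finset α → ℕ} {A : Finset α} {s t : α → V}

/-- If `A` is a separator, then the relations within `A` are the restrictions to `A` of the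
relations. -/
lemma Binary.restrict_cut {E : Finset α} (h : Binary ρ E (Cut s t E)) (hA : A ⊆ E)
    (hsep : ρ A + ρ (E \ A) ≤ ρ E) : Binary ρ A (Cut s t A) := by
  have hsub : ∀ Z, cut s t A Z ⊆ cut s t E Z := fun Z e he => by
    rw [mem_cut] at he ⊢
    exact ⟨hA he.1, he.2⟩
  refine ⟨h.rank, ?_, ?_, ?_⟩
  · rintro S ⟨Z, rfl⟩ e he
    exact (mem_cut.1 he).1
  · rintro S T ⟨Z, rfl⟩ ⟨Z', rfl⟩
    exact ⟨_, cut_symmDiff Z Z'⟩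
  · intro e he X hX heX
    constructor
    · intro h1
      obtain ⟨S, ⟨Z, rfl⟩, heS, hSX⟩ := (h.cl e (hA he) X (hX.trans hA) heX).1 h1
      refine ⟨cut s t A Z, ⟨Z, rfl⟩, ?_, (hsub Z).trans hSX⟩
      rw [mem_cut] at heS ⊢
      exact ⟨he, heS.2⟩
    · rintro ⟨S, ⟨Z, rfl⟩, heS, hSX⟩
      have h1 := (h.cl e (hA he) (X ∪ E \ A) (by grind) (by grind)).2
        ⟨cut s t E Z, ⟨Z, rfl⟩, hsub Z heS, by
          intro f hf
          by_cases hfA : f ∈ A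
          · have := hSX (mem_cut.2 ⟨hfA, (mem_cut.1 hf).2⟩)
            grind
          · have := (mem_cut.1 hf).1
            grind⟩
      have h2 := h.rank.skew_restrict (J := ∅) (P := A) (Q := E \ A) (P₀ := insert e X)
        (Q₀ := E \ A) (by rw [show A ∪ E \ A = E by grind, h.rank.empty]; omega) (by grind)
        subset_rfl
      rw [show insert e X ∪ E \ A = insert e (X ∪ E \ A) by grind, h1, h.rank.empty] at h2
      have h3 := h.rank.union_le X (E \ A)
      have h4 := h.rank.mono X (insert e X) (by grind)
      omega

lemma cut_compl (Z : Set V) : cut s t A Zᶜ = cut s t A Z := by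
  ext e
  rw [mem_cut, mem_cut, Set.mem_compl_iff, Set.mem_compl_iff]
  tauto

lemma card_cut_submod (X Z : Set V) : (cut s t A (X ∩ Z)).card + (cut s t A (X ∪ Z)).card ≤
    (cut s t A X).card + (cut s t A Z).card := by
  rw [← Finset.card_union_add_card_inter, ← Finset.card_union_add_card_inter (cut s t A X)]
  apply Nat.add_le_add <;> apply Finset.card_le_card <;> intro e <;>
    simp only [Finset.mem_union, Finset.mem_inter, mem_cut, Set.mem_inter_iff, Set.mem_union] <;>
    tauto

lemma card_cut_submod' (X Z : Set V) : (cut s t A (X \ Z)).card + (cut s t A (Z \ X)).card ≤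
    (cut s t A X).card + (cut s t A Z).card := by
  rw [← Finset.card_union_add_card_inter, ← Finset.card_union_add_card_inter (cut s t A X)]
  apply Nat.add_le_add <;> apply Finset.card_le_card <;> intro e <;>
    simp only [Finset.mem_union, Finset.mem_inter, mem_cut, Set.mem_sdiff] <;>
    tauto

open Classical in
/-- The edges of `A` with both ends in `X`. -/
noncomputable def inside (s t : α → V) (A : Finset α) (X : Set V) : Finset α :=
  A.filter (fun e => s e ∈ X ∧ t e ∈ X)

lemma mem_inside {X : Set V} {e : α} : e ∈ inside s t A X ↔ e ∈ A ∧ s e ∈ X ∧ t e ∈ X := by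
  simp [inside]

/-- In a simple binary matroid nonempty relations have at least three elements. -/
lemma Binary.three_le {Rel : Finset α → Prop} (h : Binary ρ A Rel)
    (hs : ∀ X ⊆ A, X.card ≤ 2 → ρ X = X.card) {S : Finset α} (hS : Rel S) (hne : S.Nonempty) :
    3 ≤ S.card := by
  by_contra hlt
  exact hne.ne_empty ((h.indep_iff (h.sub S hS)).1 (hs S (h.sub S hS) (by omega)) S hS subset_rfl)

/-- A 3-cut around a vertex set spanning no edge is the star of a single vertex. -/
lemma star_of_inside_empty (h : Binary ρ A (Cut s t A))
    (hs : ∀ X ⊆ A, X.card ≤ 2 → ρ X = X.card) {Z : Set V} (h3 : (cut s t A Z).card = 3)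
    (hZ : inside s t A Z = ∅) {e : α} (he : e ∈ cut s t A Z) :
    cut s t A Z = cut s t A {s e} ∨ cut s t A Z = cut s t A {t e} := by
  have main : ∀ u ∈ Z, e ∈ cut s t A {u} → cut s t A Z = cut s t A {u} := by
    intro u hu heu
    symm
    apply Finset.eq_of_subset_of_card_le
    · intro f hf
      rw [mem_cut] at hf ⊢
      refine ⟨hf.1, fun hiff => hf.2 ?_⟩
      by_cases hfZ : s f ∈ Z
      · have : f ∈ inside s t A Z := mem_inside.2 ⟨hf.1, hfZ, hiff.1 hfZ⟩
        rw [hZ] at this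
        simp at this
      · have h1 : s f ≠ u := fun h => hfZ (h ▸ hu)
        have h2 : t f ≠ u := fun h => hfZ (hiff.2 (h ▸ hu))
        simp [h1, h2]
    · rw [h3]
      exact h.three_le hs ⟨_, rfl⟩ ⟨e, heu⟩
  rw [mem_cut] at he
  by_cases hse : s e ∈ Z
  · left
    refine main _ hse (mem_cut.2 ⟨he.1, ?_⟩)
    have : t e ≠ s e := fun h => he.2 (by rw [h])
    simp [this]
  · right
    have hte : t e ∈ Z := by tauto
    refine main _ hte (mem_cut.2 ⟨he.1, ?_⟩)
    have : s e ≠ t e := fun h => he.2 (by rw [h])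
    simp [this]

set_option maxHeartbeats 2000000 in
/-- A 3-cut of a connected simple graphic dual, spanning an edge on one side: some nonempty set of
edges on that side can be contracted while keeping connectivity. -/
lemma exists_conn_inside (h : Binary ρ A (Cut s t A)) (hA : Conn ρ ∅ A)
    (hs : ∀ X ⊆ A, X.card ≤ 2 → ρ X = X.card) {X : Set V} (h3 : (cut s t A X).card = 3)
    (hX : (inside s t A X).Nonempty) :
    ∃ J ⊆ inside s t A X, J.Nonempty ∧ (A \ J).Nonempty ∧ Conn ρ J A := by
  have hr := h.rank
  set T := cut s t A X with hT
  set I := inside s t A X with hI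
  have hTA : T ⊆ A := h.sub T ⟨X, rfl⟩
  have hIA : I ⊆ A := fun e he => (mem_inside.1 he).1
  have hIT : ∀ e ∈ I, e ∉ T := by
    intro e he heT
    rw [hI, mem_inside] at he
    rw [hT, mem_cut] at heT
    tauto
  have hTpair : ∀ a ∈ T, ∀ B : Finset α, B ⊆ A → T.erase a ⊆ B → ρ (insert a B) = ρ B := by
    intro a ha B hB hTB
    by_cases haB : a ∈ B
    · rw [Finset.insert_eq_of_mem haB]
    · exact (h.cl a (hTA ha) B hB haB).2 ⟨T, ⟨X, rfl⟩, ha, by grind⟩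
  have hTρ : ρ T = 2 := by
    obtain ⟨a, ha⟩ := Finset.card_pos.1 (show 0 < T.card by omega)
    have h1 := hTpair a ha (T.erase a) ((Finset.erase_subset _ _).trans hTA) subset_rfl
    have h2 := Finset.card_erase_of_mem ha
    rw [Finset.insert_erase ha, hs _ ((Finset.erase_subset _ _).trans hTA) (by omega)] at h1
    omega
  obtain ⟨J, hJm⟩ := Finset.exists_maximal
    (s := I.powerset.filter fun J => ρ (J ∪ T) = ρ J + 2)
    ⟨∅, by simp [hr.empty, hTρ]⟩
  have hJ1 := hJm.1
  simp only [Finset.mem_filter, Finset.mem_powerset] at hJ1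
  obtain ⟨hJI, hJT⟩ := hJ1
  have hJA := hJI.trans hIA
  have hJmax : ∀ e ∈ I, e ∉ J → ρ (insert e J ∪ T) ≠ ρ (insert e J) + 2 := by
    intro e he heJ heq
    refine heJ (hJm.2 (y := insert e J) ?_ (by simp) (by simp))
    simp only [Finset.mem_filter, Finset.mem_powerset]
    exact ⟨Finset.insert_subset he hJI, heq⟩
  have hTJ : ∀ a ∈ T, a ∉ J := fun a ha haJ => hIT a (hJI haJ) ha
  refine ⟨J, hJI, ?_, ?_, ?_⟩
  · rw [Finset.nonempty_iff_ne_empty]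
    rintro rfl
    obtain ⟨e, he⟩ := hX
    have h1 := hJmax e he (by simp)
    have h2 : ρ {e} = 1 := by simpa using hs {e} (by simpa using hIA he) (by simp)
    have h4 : ρ (insert e T) = ρ T := by
      have h5 := hr.unit e T
      have h6 := hr.mono T (insert e T) (by simp)
      rw [show insert e ∅ ∪ T = insert e T by grind, show insert e (∅ : Finset α) = {e} by simp,
        h2] at h1
      omega
    obtain ⟨S, hS, heS, hST⟩ := (h.cl e (hIA he) T hTA (hIT e he)).1 h4
    have h5 := h.three_le hs hS ⟨e, heS⟩
    have h6 := h.three_le hs (h.symm S T hS ⟨X, rfl⟩)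
      ⟨e, by rw [Binary.mem_symm]; have := hIT e he; tauto⟩
    have h7 : symmDiff S T ⊆ insert e (T \ S) := by
      intro f hf
      rw [Binary.mem_symm] at hf
      have : f ∈ S → f ∈ insert e T := fun h => hST h
      grind
    have h8 := Finset.card_le_card h7
    have h9 := Finset.card_insert_le e (T \ S)
    have h10 : S ⊆ insert e (T ∩ S) := by
      intro f hf
      have := hST hf
      grind
    have h11 := Finset.card_le_card h10
    have h12 := Finset.card_insert_le e (T ∩ S)
    have h13 := Finset.card_inter_add_card_sdiff T S
    omega
  · obtain ⟨a, ha⟩ := Finset.card_pos.1 (show 0 < T.card by omega)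
    exact ⟨a, Finset.mem_sdiff.2 ⟨hTA ha, hTJ a ha⟩⟩
  · -- a subset of `A \ J` skew to its complement over `J` and disjoint from `T` is empty
    have main : ∀ P' ⊆ A \ J, P'.Nonempty → Disjoint P' T →
        ρ (P' ∪ J) + ρ (A \ P') ≤ ρ A + ρ J → False := by
      intro P' hP' hne hdis hsk
      rw [Finset.disjoint_left] at hdis
      have hsk' : ρ (P' ∪ J) + ρ (A \ P') ≤ ρ (P' ∪ J ∪ A \ P') + ρ J := by
        rw [show P' ∪ J ∪ A \ P' = A by clear * - hP' hJA; grind]; exact hsk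
      have hP'I : ∀ e ∈ P', e ∉ I := by
        intro e he heI
        have heJ : e ∉ J := (Finset.mem_sdiff.1 (hP' he)).2
        have h1 := hJmax e heI heJ
        have h2 := hr.skew_restrict hsk' (P₀ := insert e J) (Q₀ := J ∪ T) (by clear * - he; grind)
          (by clear * - hP' hJA hTA hdis; grind)
        rw [show insert e J ∪ (J ∪ T) = insert e (J ∪ T) by clear * -; grind] at h2
        rw [show insert e J ∪ T = insert e (J ∪ T) by clear * -; grind] at h1
        have h3 := hr.unit e (J ∪ T)
        have h4 := hr.unit e J
        have h5 := hr.mono (J ∪ T) (insert e (J ∪ T)) (Finset.subset_insert _ _)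
        have h6 := hr.mono J (insert e J) (Finset.subset_insert _ _)
        by_cases h7 : ρ (insert e J) = ρ J
        · have := hr.cl_mono h7 (Y := J ∪ T) Finset.subset_union_left
          omega
        · omega
      -- relations inside `J ∪ P'` split
      have split : ∀ S, Cut s t A S → S ⊆ J ∪ P' → Cut s t A (S ∩ J) := by
        rintro S ⟨Z, rfl⟩ hSJ
        have hU : cut s t A (Z ∩ X) ⊆ (cut s t A Z ∩ J) ∪ T := by
          intro f hf
          by_cases hfT : f ∈ T
          · exact Finset.mem_union_right _ hfT
          refine Finset.mem_union_left _ ?_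
          rw [mem_cut] at hf
          have hfT' : ¬ ¬ (s f ∈ X ↔ t f ∈ X) := fun h => hfT (mem_cut.2 ⟨hf.1, h⟩)
          have h1 : f ∈ cut s t A Z := mem_cut.2 ⟨hf.1, by
            have := hf.2
            simp only [Set.mem_inter_iff] at this
            tauto⟩
          have h2 : f ∈ I := mem_inside.2 ⟨hf.1, by
            have := hf.2
            simp only [Set.mem_inter_iff] at this
            tauto⟩
          have h3 := hSJ h1
          rw [Finset.mem_union] at h3
          rw [Finset.mem_inter]
          exact ⟨h1, h3.resolve_right fun h => hP'I f h h2⟩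
        have hL : cut s t A Z ∩ J ⊆ cut s t A (Z ∩ X) := by
          intro f hf
          rw [Finset.mem_inter, mem_cut] at hf
          have h2 := mem_inside.1 (hJI hf.2)
          rw [mem_cut]
          refine ⟨hf.1.1, ?_⟩
          have := hf.1.2
          simp only [Set.mem_inter_iff, h2.2.1, h2.2.2, and_true]
          exact this
        -- adding `T` if necessary, at most one element of `T` remains
        have fin : ∀ R, Cut s t A R → R ⊆ (cut s t A Z ∩ J) ∪ T → cut s t A Z ∩ J ⊆ R →
            (R ∩ T).card ≤ 1 → Cut s t A (cut s t A Z ∩ J) := by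
          intro R hR hR1 hR2 hR3
          by_cases h0 : R ∩ T = ∅
          · have : R = cut s t A Z ∩ J := by
              apply Finset.Subset.antisymm _ hR2
              intro f hf
              have h1 := hR1 hf
              rw [Finset.mem_union] at h1
              refine h1.resolve_right fun h2 => ?_
              have : f ∈ R ∩ T := Finset.mem_inter.2 ⟨hf, h2⟩
              rw [h0] at this
              simp at this
            rwa [← this]
          · exfalso
            obtain ⟨a, ha⟩ := Finset.nonempty_iff_ne_empty.2 h0
            rw [Finset.mem_inter] at ha
            have h1 := (h.cl a (hTA ha.2) J hJA (hTJ a ha.2)).2 ⟨R, hR, ha.1, by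
              intro f hf
              have h2 := hR1 hf
              rw [Finset.mem_union] at h2
              rcases h2 with h2 | h2
              · exact Finset.mem_insert_of_mem (Finset.mem_inter.1 h2).2
              · rw [Finset.card_le_one] at hR3
                rw [hR3 f (Finset.mem_inter.2 ⟨hf, h2⟩) a (Finset.mem_inter.2 ha)]
                simp⟩
            have h2 : 1 < (T.erase a).card := by rw [Finset.card_erase_of_mem ha.2]; omega
            obtain ⟨b, hb, c, hc, hbc⟩ := Finset.one_lt_card.1 h2
            have h4 := hTpair b (Finset.mem_of_mem_erase hb) (J ∪ T.erase b)
              (by clear * - hJA hTA; grind) (by clear * -; grind)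
            rw [show insert b (J ∪ T.erase b) = J ∪ T by clear * - hb; grind] at h4
            have h5 := hr.union_le_card (insert a J) ((T.erase b).erase a)
            rw [show insert a J ∪ (T.erase b).erase a = J ∪ T.erase b by clear * - ha hb; grind] at h5
            have h6 : ((T.erase b).erase a).card = 1 := by
              rw [Finset.card_erase_of_mem (by clear * - ha hb; grind),
                Finset.card_erase_of_mem (by clear * - hb; grind)]
              omega
            omega
        by_cases hc : (cut s t A (Z ∩ X) ∩ T).card ≤ 1
        · exact fin _ ⟨_, rfl⟩ hU hL hc
        · refine fin (symmDiff (cut s t A (Z ∩ X)) T) (h.symm _ _ ⟨_, rfl⟩ ⟨X, rfl⟩) ?_ ?_ ?_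
          · intro f hf
            rw [Binary.mem_symm] at hf
            by_cases hfT : f ∈ T
            · exact Finset.mem_union_right _ hfT
            · exact hU (by tauto)
          · intro f hf
            rw [Binary.mem_symm]
            have h1 := hL hf
            have h2 := fun hfT => hTJ f hfT (Finset.mem_inter.1 hf).2
            tauto
          · have h1 : symmDiff (cut s t A (Z ∩ X)) T ∩ T = T \ cut s t A (Z ∩ X) := by
              ext f
              rw [Finset.mem_inter, Binary.mem_symm, Finset.mem_sdiff]
              tauto
            have h2 := Finset.card_inter_add_card_sdiff T (cut s t A (Z ∩ X))
            rw [Finset.inter_comm] at h2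
            rw [h1]
            omega
      have hsum : ρ J + ρ P' ≤ ρ (P' ∪ J) := by
        obtain ⟨B, -, hB, hB1, hB2⟩ := hr.exists_basis (I := ∅) (X := J) (by simpa using hr.empty)
          (by simp)
        obtain ⟨C, -, hC, hC1, hC2⟩ := hr.exists_basis (I := ∅) (X := P') (by simpa using hr.empty)
          (by simp)
        have hdJ : ∀ f ∈ P', f ∉ J := fun f hf => (Finset.mem_sdiff.1 (hP' hf)).2
        have hCA : C ⊆ A := hC.trans (hP'.trans Finset.sdiff_subset)
        have h1 : ρ (B ∪ C) = (B ∪ C).card := by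
          rw [h.indep_iff (Finset.union_subset (hB.trans hJA) hCA)]
          intro S hS hSBC
          have h2 := split S hS (by clear * - hSBC hB hC; grind)
          have h4 := (h.indep_iff (hB.trans hJA)).1 hB1 _ h2 (by clear * - hSBC hC hdJ; grind)
          refine (h.indep_iff hCA).1 hC1 _ hS ?_
          intro f hf
          have h5 := hSBC hf
          rw [Finset.mem_union] at h5
          refine h5.resolve_left fun h6 => ?_
          have : f ∈ S ∩ J := Finset.mem_inter.2 ⟨hf, hB h6⟩
          rw [h4] at this
          simp at this
        rw [Finset.card_union_of_disjoint (by rw [Finset.disjoint_left]; clear * - hB hC hdJ; grind)] at h1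
        have := hr.mono (B ∪ C) (P' ∪ J) (by clear * - hB hC; grind)
        omega
      have hfin := hA P' (by clear * - hP'; grind) hne (by
        obtain ⟨a, ha⟩ := Finset.card_pos.1 (show 0 < T.card by omega)
        have h1 := hTA ha
        have h2 := @hdis a
        exact ⟨a, by clear * - h1 h2 ha; grind⟩)
      rw [Finset.union_empty, hr.empty] at hfin
      omega
    intro P hP hPne hPne'
    have hPA : P ⊆ A := hP.trans Finset.sdiff_subset
    clear hJm hIT hIA hJI hX hJmax
    by_contra hlt
    have hsk : ρ (P ∪ J) + ρ (A \ P) ≤ ρ (P ∪ J ∪ A \ P) + ρ J := by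
      rw [show P ∪ J ∪ A \ P = A by clear * - hPA hJA; grind]; omega
    by_cases hd : Disjoint P T
    · exact main P hP hPne hd (by omega)
    by_cases hd' : Disjoint ((A \ J) \ P) T
    · refine main ((A \ J) \ P) Finset.sdiff_subset hPne' hd' ?_
      rw [show (A \ J) \ P ∪ J = A \ P by clear * - hP hJA; grind,
        show A \ ((A \ J) \ P) = P ∪ J by clear * - hPA hJA; grind]
      omega
    · -- `T` meets both sides, although it is a circuit after contracting `J`
      have h1 := hr.skew_restrict hsk (P₀ := J ∪ (T ∩ P)) (Q₀ := J ∪ (T \ P))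
        (by clear * -; grind) (by clear * - hP hJA hTA; grind)
      rw [show J ∪ T ∩ P ∪ (J ∪ T \ P) = J ∪ T by clear * -; grind] at h1
      have h2 : (T ∩ P).Nonempty := by
        rw [Finset.not_disjoint_iff] at hd
        obtain ⟨a, ha, hb⟩ := hd
        exact ⟨a, by clear * - ha hb; grind⟩
      have h4 : (T \ P).Nonempty := by
        rw [Finset.not_disjoint_iff] at hd'
        obtain ⟨a, ha, hb⟩ := hd'
        exact ⟨a, by clear * - ha hb; grind⟩
      have h5 := Finset.card_inter_add_card_sdiff T P
      have low : ∀ Y ⊆ T, Y.Nonempty → Y.card ≤ 2 → ρ J + Y.card ≤ ρ (J ∪ Y) := by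
        intro Y hY hYne hY2
        have h6 := hr.union_le_card (J ∪ Y) (T \ Y)
        rw [show J ∪ Y ∪ T \ Y = J ∪ T by clear * - hY; grind] at h6
        have h7 := Finset.card_sdiff_add_card_eq_card hY
        have h8 : ∃ a ∈ T, a ∉ Y := by
          by_contra! hcon
          have := Finset.card_le_card hcon
          omega
        obtain ⟨a, ha, haY⟩ := h8
        have h9 := hTpair a ha (J ∪ T.erase a)
          (by clear * - hJA hTA; grind) (by clear * -; grind)
        rw [show insert a (J ∪ T.erase a) = J ∪ T by clear * - ha; grind] at h9
        have h10 := hr.union_le_card (J ∪ Y) ((T.erase a) \ Y)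
        rw [show J ∪ Y ∪ (T.erase a) \ Y = J ∪ T.erase a by clear * - hY haY; grind] at h10
        have h11 := Finset.card_sdiff_add_card_eq_card (show Y ⊆ T.erase a by clear * - hY haY; grind)
        have h12 := Finset.card_erase_of_mem ha
        omega
      have h6 := h2.card_pos
      have h7 := h4.card_pos
      have h8 := low (T ∩ P) Finset.inter_subset_left h2 (by omega)
      have h9 := low (T \ P) Finset.sdiff_subset h4 (by omega)
      omega

/-- A connected simple graphic dual has, off any prescribed element `f₀`, an element `e` whose
contraction is connected and such that two elements meet all 3-cuts containing `e`. The element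
is found on a side, not spanning `f₀`, of a 3-cut, this side spanning as few edges as possible but
at least one; by uncrossing, the 3-cuts containing `e` are stars of ends of `e`. -/
lemma graph_lemma (h : Binary ρ A (Cut s t A)) (hA : Conn ρ ∅ A)
    (hs : ∀ X ⊆ A, X.card ≤ 2 → ρ X = X.card) (hc : 2 ≤ A.card) {f₀ : α} (hf₀ : f₀ ∈ A) :
    ∃ e ∈ A, e ≠ f₀ ∧ Conn ρ {e} A ∧ ∃ a₁ a₂, a₁ ≠ e ∧ a₂ ≠ e ∧
      ∀ S, Cut s t A S → S.card = 3 → e ∈ S → a₁ ∈ S ∨ a₂ ∈ S := by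
  -- it suffices that 3-cuts containing `e` are stars
  suffices hmain : ∃ e ∈ A, e ≠ f₀ ∧ Conn ρ {e} A ∧ ∀ S, Cut s t A S → S.card = 3 → e ∈ S →
      S = cut s t A {s e} ∨ S = cut s t A {t e} by
    obtain ⟨e, he, hef, hconn, hst⟩ := hmain
    refine ⟨e, he, hef, hconn, ?_⟩
    have pick : ∀ u : V, ∃ a, a ≠ e ∧ ((cut s t A {u}).card = 3 → a ∈ cut s t A {u}) := by
      intro u
      by_cases h3 : (cut s t A {u}).card = 3
      · obtain ⟨a, ha, hae⟩ := Finset.exists_mem_ne (show 1 < (cut s t A {u}).card by omega) e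
        exact ⟨a, hae, fun _ => ha⟩
      · exact ⟨f₀, hef.symm, fun h => absurd h h3⟩
    obtain ⟨a₁, h1, h1'⟩ := pick (s e)
    obtain ⟨a₂, h2, h2'⟩ := pick (t e)
    refine ⟨a₁, a₂, h1, h2, fun S hS h3 heS => ?_⟩
    rcases hst S hS h3 heS with rfl | rfl
    · exact Or.inl (h1' h3)
    · exact Or.inr (h2' h3)
  by_cases hex : ∃ n, ∃ X : Set V, (cut s t A X).card = 3 ∧ (inside s t A X).Nonempty ∧
      f₀ ∉ inside s t A X ∧ (inside s t A X).card = n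
  · classical
    obtain ⟨X, hX3, hXne, hXf, hXn⟩ := Nat.find_spec hex
    have hmin : ∀ Z : Set V, (cut s t A Z).card = 3 → f₀ ∉ inside s t A Z →
        (inside s t A Z).card < (inside s t A X).card → inside s t A Z = ∅ := by
      intro Z hZ3 hZf hlt
      by_contra hne
      rw [hXn] at hlt
      exact Nat.find_min hex hlt ⟨Z, hZ3, Finset.nonempty_iff_ne_empty.2 hne, hZf, rfl⟩
    obtain ⟨J, hJI, hJne, hJne', hJc⟩ := exists_conn_inside h hA hs hX3 hXne
    have hJA : J ⊆ A := fun e he => (mem_inside.1 (hJI he)).1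
    obtain ⟨e, he, hconn⟩ := ear h.rank hJA hJne hJne' hA hJc hs
    have heI := hJI he
    have heI' := mem_inside.1 heI
    refine ⟨e, hJA he, fun h => hXf (h ▸ heI), hconn, ?_⟩
    rintro S ⟨Z, rfl⟩ h3 heS
    have heZ := (mem_cut.1 heS).2
    -- it suffices to replace `Z` by a subset of `X`
    have done : ∀ Z' ⊆ X, cut s t A Z = cut s t A Z' →
        cut s t A Z = cut s t A {s e} ∨ cut s t A Z = cut s t A {t e} := by
      intro Z' hZ' heq
      rw [heq] at h3 heS ⊢
      have hsub : inside s t A Z' ⊆ inside s t A X := fun f hf => by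
        rw [mem_inside] at hf ⊢
        exact ⟨hf.1, hZ' hf.2.1, hZ' hf.2.2⟩
      have hlt : inside s t A Z' ⊂ inside s t A X := by
        refine (Finset.ssubset_iff_of_subset hsub).2 ⟨e, heI, fun h => ?_⟩
        rw [mem_inside] at h
        rw [mem_cut] at heS
        tauto
      exact star_of_inside_empty h hs h3 (hmin Z' h3 (fun h => hXf (hsub h))
        (Finset.card_lt_card hlt)) heS
    have e1 : e ∈ cut s t A (X ∩ Z) := mem_cut.2 ⟨heI'.1, by
      simp only [Set.mem_inter_iff]; tauto⟩
    have e2 : e ∈ cut s t A (X \ Z) := mem_cut.2 ⟨heI'.1, by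
      simp only [Set.mem_sdiff]; tauto⟩
    have d1 := h.three_le hs ⟨_, rfl⟩ ⟨e, e1⟩
    have d2 := h.three_le hs ⟨_, rfl⟩ ⟨e, e2⟩
    have s1 := card_cut_submod (s := s) (t := t) (A := A) X Z
    have s2 := card_cut_submod' (s := s) (t := t) (A := A) X Z
    by_cases c1 : cut s t A (Z \ X) = ∅
    · refine done (Z ∩ X) Set.inter_subset_right ?_
      have := cut_symmDiff (s := s) (t := t) (A := A) (Z \ X) Z
      rw [c1] at this
      rw [show symmDiff (Z \ X) Z = Z ∩ X by ext v; simp [Set.mem_symmDiff]; tauto] at this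
      rw [← this]
      exact (bot_symmDiff _).symm
    by_cases c2 : cut s t A (X ∪ Z) = ∅
    · refine done (X \ Z) Set.sdiff_subset ?_
      have := cut_symmDiff (s := s) (t := t) (A := A) (X ∪ Z) Z
      rw [c2] at this
      rw [show symmDiff (X ∪ Z) Z = X \ Z by ext v; simp [Set.mem_symmDiff]; tauto] at this
      rw [← this]
      exact (bot_symmDiff _).symm
    · exfalso
      have d3 := h.three_le hs ⟨_, rfl⟩ (Finset.nonempty_iff_ne_empty.2 c1)
      have d4 := h.three_le hs ⟨_, rfl⟩ (Finset.nonempty_iff_ne_empty.2 c2)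
      have p1 := cut_symmDiff (s := s) (t := t) (A := A) (X ∩ Z) (X \ Z)
      rw [show symmDiff (X ∩ Z) (X \ Z) = X by ext v; simp [Set.mem_symmDiff]; tauto] at p1
      have p2 := Finset.card_sdiff_add_card_inter (cut s t A (X ∩ Z)) (cut s t A (X \ Z))
      have p3 := Finset.card_sdiff_add_card_inter (cut s t A (X \ Z)) (cut s t A (X ∩ Z))
      rw [symmDiff_def, Finset.sup_eq_union] at p1
      have p4 := congrArg Finset.card p1
      rw [Finset.card_union_of_disjoint (by
        rw [Finset.disjoint_left]
        intro f hf hf'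
        rw [Finset.mem_sdiff] at hf hf'
        exact hf'.2 hf.1)] at p4
      rw [Finset.inter_comm] at p3
      omega
  · have hno : ∀ Z : Set V, (cut s t A Z).card = 3 → f₀ ∉ inside s t A Z → inside s t A Z = ∅ := by
      intro Z h3 hf
      by_contra hne
      exact hex ⟨_, Z, h3, Finset.nonempty_iff_ne_empty.2 hne, hf, rfl⟩
    have hone : A \ A.erase f₀ = {f₀} := by grind
    obtain ⟨e, he, hconn⟩ := ear h.rank (J₀ := A.erase f₀) (Finset.erase_subset _ _)
      (Finset.card_pos.1 (by rw [Finset.card_erase_of_mem hf₀]; omega)) (by rw [hone]; simp) hA (by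
        rw [Conn, hone]
        rintro X hX ⟨a, ha⟩ ⟨b, hb⟩
        have h1 := hX ha
        rw [Finset.mem_sdiff] at hb
        rw [Finset.mem_singleton] at h1 hb
        exact absurd (hb.1.trans h1.symm ▸ ha) hb.2) hs
    rw [Finset.mem_erase] at he
    refine ⟨e, he.2, he.1, hconn, ?_⟩
    rintro S ⟨Z, rfl⟩ h3 heS
    by_cases hf : f₀ ∈ inside s t A Z
    · rw [← cut_compl] at h3 heS ⊢
      refine star_of_inside_empty h hs h3 (hno _ h3 fun hf' => ?_) heS
      rw [mem_inside] at hf hf'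
      exact hf'.2.1 hf.2.1
    · exact star_of_inside_empty h hs h3 (hno Z h3 hf) heS

end

/-! ### Truncations of binary matroids -/

section
variable {V α : Type u} [DecidableEq α] {r ρ : Finset α → ℕ} {E A : Finset α}

/-- `ρ` is the rank function on `E - x` of the dual of a graphic matroid (whose cuts are given
by the ends `s`, `t`), and `r` restricted to `E - x` is its truncation. -/
structure Lift (r : Finset α → ℕ) (E : Finset α) (x : α) (s t : α → V) (ρ : Finset α → ℕ) :
    Prop where
  bin : Binary ρ (E.erase x) (Cut s t (E.erase x))
  trunc : ∀ D ⊆ E.erase x, r D = min (ρ D) (r E)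
  top : ρ (E.erase x) = r E + 1

/-- If a property of sets passes to one of the two parts whenever a set with the property splits
into separators, then it holds for some component of `E`. -/
lemma exists_component (hρ : RankFn ρ) (P : Finset α → Prop) (hP : P E)
    (hP0 : ¬ P ∅)
    (hsplit : ∀ A ⊆ E, P A → ∀ X ⊆ A, ρ X + ρ (A \ X) ≤ ρ A → P X ∨ P (A \ X)) :
    ∃ A ⊆ E, P A ∧ ρ A + ρ (E \ A) ≤ ρ E ∧ A.Nonempty ∧ Conn ρ ∅ A := by
  classical
  obtain ⟨A, hAm⟩ := Finset.exists_minimal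
    (s := E.powerset.filter fun A => P A ∧ ρ A + ρ (E \ A) ≤ ρ E)
    ⟨E, by simp [hP, hρ.empty]⟩
  have hA1 := hAm.1
  simp only [Finset.mem_filter, Finset.mem_powerset] at hA1
  obtain ⟨hAE, hPA, hsep⟩ := hA1
  have hmin : ∀ X ⊆ A, P X → ρ X + ρ (A \ X) ≤ ρ A → X = A := by
    intro X hX hPX hXs
    refine Finset.Subset.antisymm hX (hAm.2 ?_ hX)
    simp only [Finset.mem_filter, Finset.mem_powerset]
    refine ⟨hX.trans hAE, hPX, ?_⟩
    have h1 := hρ.union_le (A \ X) (E \ A)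
    rw [show A \ X ∪ E \ A = E \ X by clear * - hX hAE; grind] at h1
    omega
  clear hAm
  refine ⟨A, hAE, hPA, hsep, ?_, ?_⟩
  · rw [Finset.nonempty_iff_ne_empty]
    rintro rfl
    exact hP0 hPA
  · intro X hX hne hne'
    by_contra hlt
    rw [Finset.sdiff_empty] at hX hne'
    rw [Finset.union_empty, hρ.empty] at hlt
    rcases hsplit A hAE hPA X hX (by omega) with h1 | h1
    · have h2 := hmin X hX h1 (by omega)
      rw [h2] at hne'
      simp at hne'
    · have h2 := hmin (A \ X) Finset.sdiff_subset h1 (by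
        rw [Finset.sdiff_sdiff_eq_self hX]; omega)
      obtain ⟨y, hy⟩ := hne
      have := hX hy
      rw [← h2] at this
      simp [hy] at this

/-- If `E` is dependent, then it has a dependent component. -/
lemma exists_dep_component (hρ : RankFn ρ) (hE : ρ E < E.card) :
    ∃ A ⊆ E, ρ A < A.card ∧ ρ A + ρ (E \ A) ≤ ρ E ∧ Conn ρ ∅ A := by
  obtain ⟨A, h1, h2, h3, -, h4⟩ := exists_component hρ (fun A => ρ A < A.card) hE (by simp) (by
    intro A hA hd X hX hs
    have h1 := Finset.card_sdiff_add_card_eq_card hX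
    by_contra! hc
    omega)
  exact ⟨A, h1, h2, h3, h4⟩

/-- Every connected set extends to a component. -/
lemma Conn.exists_component (hρ : RankFn ρ) {A₀ : Finset α} (hA₀ : A₀ ⊆ E) (hne : A₀.Nonempty)
    (hc : Conn ρ ∅ A₀) :
    ∃ A ⊆ E, A₀ ⊆ A ∧ ρ A + ρ (E \ A) ≤ ρ E ∧ Conn ρ ∅ A := by
  obtain ⟨A, h1, h2, h3, -, h4⟩ := BLFormal.exists_component hρ (fun A => A₀ ⊆ A) hA₀ (by
    intro h; simp [Finset.subset_empty.1 h] at hne) (by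
    intro A hA hd X hX hs
    by_contra! hcon
    have h1 := hρ.skew_restrict (J := ∅) (P := X) (Q := A \ X) (P₀ := A₀ ∩ X) (Q₀ := A₀ \ X)
      (by rw [Finset.union_sdiff_of_subset hX, hρ.empty]; omega) Finset.inter_subset_right
      (Finset.sdiff_subset_sdiff hd subset_rfl)
    have h2 := hc (A₀ ∩ X) (by simp) (by
      obtain ⟨y, hy, hy'⟩ := Finset.not_subset.1 hcon.2
      have := hd hy
      exact ⟨y, by clear * - hy hy' this; grind⟩) (by
      obtain ⟨y, hy, hy'⟩ := Finset.not_subset.1 hcon.1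
      exact ⟨y, by clear * - hy hy'; grind⟩)
    rw [show A₀ ∩ X ∪ A₀ \ X = A₀ by clear * -; grind] at h1
    rw [show A₀ \ (A₀ ∩ X) = A₀ \ X by clear * -; grind, Finset.union_empty] at h2
    omega)
  exact ⟨A, h1, h2, h3, h4⟩

/-- A truncation `r` of `ρ` has a `U₂,₄`-minor in which the elements of `F` are contracted, if
some `a` is spanned by `Z ∪ F`, but neither by `F` nor by any `{b} ∪ F` with `b ∈ Z`. -/
lemma u24_lift (hρ : RankFn ρ) {n : ℕ} (hn : 3 ≤ n) (htr : ∀ D ⊆ E, r D = min (ρ D) n)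
    (htop : ρ E = n + 1) {F Z : Finset α} (hFE : F ⊆ E) (hF : ρ F = F.card) (hF1 : F.card ≤ 1)
    (hZE : Z ⊆ E) {a : α} (ha : a ∈ E) (haZ : ρ (insert a (Z ∪ F)) = ρ (Z ∪ F))
    (haF : ρ (insert a F) ≠ ρ F)
    (hpair : ∀ b ∈ Z, ρ (insert a (insert b F)) ≠ ρ (insert b F)) :
    ∃ K Q, F ⊆ K ∧ K ⊆ E ∧ Q ⊆ E ∧ Q.card = 4 ∧ r (K ∪ Q) ≤ r K + 2 ∧
      ∀ T ⊆ Q, T.card = 2 → r K + 2 ≤ r (K ∪ T) := by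
  obtain ⟨B, hFB, hBZ, hB1, hB2⟩ := hρ.exists_basis (X := Z ∪ F) hF Finset.subset_union_right
  have haB : ρ (insert a B) = ρ B := by
    have h1 := hρ.mono (insert a B) (insert a (Z ∪ F)) (Finset.insert_subset_insert _ hBZ)
    have h2 := hρ.mono B (insert a B) (Finset.subset_insert _ _)
    omega
  obtain ⟨J, hJm⟩ := Finset.exists_minimal
    (s := (B \ F).powerset.filter fun J => ρ (insert a (J ∪ F)) = ρ (J ∪ F))
    ⟨B \ F, by simp [Finset.sdiff_union_of_subset hFB, haB]⟩
  have hJ1 := hJm.1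
  simp only [Finset.mem_filter, Finset.mem_powerset] at hJ1
  obtain ⟨hJB, hJa⟩ := hJ1
  have hJmin : ∀ i ∈ J, ρ (insert a (J.erase i ∪ F)) ≠ ρ (J.erase i ∪ F) := by
    intro i hi heq
    have := hJm.2 (y := J.erase i) (by
      simp only [Finset.mem_filter, Finset.mem_powerset]
      exact ⟨(Finset.erase_subset _ _).trans hJB, heq⟩) (Finset.erase_subset _ _) hi
    simp at this
  clear hJm
  have hJF : ∀ i ∈ J, i ∉ F := fun i hi => (Finset.mem_sdiff.1 (hJB hi)).2
  have hJZ : ∀ i ∈ J, i ∈ Z := fun i hi => by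
    have h1 := hBZ (Finset.mem_sdiff.1 (hJB hi)).1
    rw [Finset.mem_union] at h1
    exact h1.resolve_right (hJF i hi)
  have hJc : 1 < J.card := by
    by_contra hle
    rcases Nat.lt_or_ge 0 J.card with h0 | h0
    · obtain ⟨b, hb⟩ := Finset.card_eq_one.1 (show J.card = 1 by omega)
      subst hb
      have h1 := hpair b (hJZ b (by simp))
      rw [Finset.singleton_union] at hJa
      exact h1 hJa
    · have : J = ∅ := Finset.card_eq_zero.1 (by omega)
      subst this
      rw [Finset.empty_union] at hJa
      exact haF hJa
  have hJFi : ρ (J ∪ F) = (J ∪ F).card := hρ.indep_subset hB1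
    (Finset.union_subset (hJB.trans Finset.sdiff_subset) hFB)
  obtain ⟨I, hJI, hIE, hI1, hI2⟩ := hρ.exists_basis (X := E) hJFi
    (Finset.union_subset (fun i hi => hZE (hJZ i hi)) hFE)
  rw [htop] at hI2
  have key : ∀ i ∈ J, ρ (insert a (I.erase i)) = n + 1 := by
    intro i hi
    have hiI : i ∈ I := hJI (Finset.mem_union_left _ hi)
    have h1 := hρ.indep_subset hI1 (Finset.erase_subset i I)
    have h2 := hρ.unit a (I.erase i)
    have h3 := hρ.mono _ _ (Finset.subset_insert a (I.erase i))
    have h4 := Finset.card_erase_of_mem hiI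
    by_contra hne
    have h5 := hρ.sub (A := I) (B := insert a (J.erase i ∪ F)) (X := insert a (J ∪ F))
      (Y := insert a (I.erase i)) (by clear * - hi; grind)
      (by have := hJF i hi; clear * - hi hJI this; grind)
    have h6 := hρ.mono _ _ (Finset.subset_insert a (J.erase i ∪ F))
    have h7 := hJmin i hi
    have h8 := hρ.unit i (J.erase i ∪ F)
    rw [show insert i (J.erase i ∪ F) = J ∪ F by clear * - hi; grind] at h8
    omega
  obtain ⟨i₁, hi₁, i₂, hi₂, h12⟩ := Finset.one_lt_card.1 hJc
  have hi₁I : i₁ ∈ I := hJI (Finset.mem_union_left _ hi₁)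
  have hi₂I : i₂ ∈ I := hJI (Finset.mem_union_left _ hi₂)
  obtain ⟨i₃, hi₃⟩ : ((((I \ F).erase i₁).erase i₂)).Nonempty := by
    rw [← Finset.card_pos]
    have h1 := Finset.le_card_sdiff F I
    have h2 := Finset.pred_card_le_card_erase (s := I \ F) (a := i₁)
    have h3 := Finset.pred_card_le_card_erase (s := (I \ F).erase i₁) (a := i₂)
    omega
  simp only [Finset.mem_erase, Finset.mem_sdiff] at hi₃
  obtain ⟨h23, h13, hi₃I, hi₃F⟩ := hi₃
  have haI : a ∉ I := by
    intro haI
    have h1 : a ∉ J := fun h => hpair a (hJZ a h) (by simp)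
    have h2 : a ∉ F := fun h => haF (by simp [h])
    have h3 := hρ.indep_subset hI1 (show insert a (J ∪ F) ⊆ I from Finset.insert_subset haI hJI)
    rw [hJa, hJFi, Finset.card_insert_of_notMem (by simp [h1, h2])] at h3
    omega
  have hKρ : ∀ D ⊆ I, ρ D = D.card := fun D hD => hρ.indep_subset hI1 hD
  have hc1 := Finset.card_erase_of_mem hi₁I
  have hi₂' : i₂ ∈ I.erase i₁ := Finset.mem_erase.2 ⟨h12.symm, hi₂I⟩
  have hc2 := Finset.card_erase_of_mem hi₂'
  have hi₃' : i₃ ∈ (I.erase i₁).erase i₂ := by simp [h23, h13, hi₃I]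
  have hc3 := Finset.card_erase_of_mem hi₃'
  set K := ((I.erase i₁).erase i₂).erase i₃ with hK
  have hKI : K ⊆ I := by
    intro y hy
    simp only [hK, Finset.mem_erase] at hy
    exact hy.2.2.2
  have hKE := hKI.trans hIE
  have hrK : r K = n - 2 := by
    rw [htr K hKE, hKρ K hKI]
    omega
  have hQE : ({i₁, i₂, i₃, a} : Finset α) ⊆ E := by
    have h1 := hIE hi₁I
    have h2 := hIE hi₂I
    have h3 := hIE hi₃I
    clear * - h1 h2 h3 ha
    grind
  have hins : ∀ y, (insert y K) = K ∪ {y} := fun y => by clear * -; grind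
  -- a pair spans the truncation with `K` as soon as it has rank at least `n` in `ρ`
  have fin : ∀ y z, y ∈ E → z ∈ E → n ≤ ρ (insert y (insert z K)) → n - 2 + 2 ≤ r (K ∪ {y, z}) := by
    intro y z hy hz hle
    rw [htr _ (Finset.union_subset hKE (by clear * - hy hz; grind)),
      show K ∪ {y, z} = insert y (insert z K) by clear * -; grind]
    omega
  refine ⟨K, {i₁, i₂, i₃, a}, ?_, hKE, hQE, ?_, ?_, ?_⟩
  · intro y hy
    have h1 := hJI (Finset.mem_union_right _ hy)
    simp only [hK, Finset.mem_erase]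
    exact ⟨fun h => hi₃F (h ▸ hy), fun h => hJF _ hi₂ (h ▸ hy), fun h => hJF _ hi₁ (h ▸ hy), h1⟩
  · rw [Finset.card_eq_four]
    refine ⟨i₁, i₂, i₃, a, h12, Ne.symm h13, ?_, Ne.symm h23, ?_, ?_, rfl⟩ <;> rintro rfl
    · exact haI hi₁I
    · exact haI hi₂I
    · exact haI hi₃I
  · rw [htr _ (Finset.union_subset hKE hQE)]
    omega
  · have e12 : ρ (insert i₁ (insert i₂ K)) = n := by
      rw [show insert i₁ (insert i₂ K) = I.erase i₃ by
        rw [hK]; clear * - hi₁I hi₂I h12 h13 h23; grind, hKρ _ (Finset.erase_subset _ _),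
        Finset.card_erase_of_mem hi₃I]
      omega
    have e13 : ρ (insert i₁ (insert i₃ K)) = n := by
      rw [show insert i₁ (insert i₃ K) = I.erase i₂ by
        rw [hK]; clear * - hi₁I hi₃I h12 h13 h23; grind, hKρ _ (Finset.erase_subset _ _),
        Finset.card_erase_of_mem hi₂I]
      omega
    have e23 : ρ (insert i₂ (insert i₃ K)) = n := by
      rw [show insert i₂ (insert i₃ K) = I.erase i₁ by
        rw [hK]; clear * - hi₂I hi₃I h12 h13 h23; grind, hKρ _ (Finset.erase_subset _ _),
        Finset.card_erase_of_mem hi₁I]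
      omega
    have e1a : n ≤ ρ (insert i₁ (insert a K)) := by
      have h1 := hρ.unit i₃ (insert i₁ (insert a K))
      rw [show insert i₃ (insert i₁ (insert a K)) = insert a (I.erase i₂) by
        rw [hK]; clear * - hi₁I hi₃I h12 h13 h23; grind, key i₂ hi₂] at h1
      omega
    have e2a : n ≤ ρ (insert i₂ (insert a K)) := by
      have h1 := hρ.unit i₃ (insert i₂ (insert a K))
      rw [show insert i₃ (insert i₂ (insert a K)) = insert a (I.erase i₁) by
        rw [hK]; clear * - hi₂I hi₃I h12 h13 h23; grind, key i₁ hi₁] at h1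
      omega
    have e3a : n ≤ ρ (insert i₃ (insert a K)) := by
      have h1 := hρ.unit i₂ (insert i₃ (insert a K))
      rw [show insert i₂ (insert i₃ (insert a K)) = insert a (I.erase i₁) by
        rw [hK]; clear * - hi₂I hi₃I h12 h13 h23; grind, key i₁ hi₁] at h1
      omega
    intro T hT hT2
    rw [hrK]
    obtain ⟨y, z, hyz, rfl⟩ := Finset.card_eq_two.1 hT2
    have hy : y ∈ ({i₁, i₂, i₃, a} : Finset α) := hT (by simp)
    have hz : z ∈ ({i₁, i₂, i₃, a} : Finset α) := hT (by simp)
    apply fin y z (hQE hy) (hQE hz)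
    simp only [Finset.mem_insert, Finset.mem_singleton] at hy hz
    rcases hy with rfl | rfl | rfl | rfl <;> rcases hz with rfl | rfl | rfl | rfl <;>
      first
      | exact absurd rfl hyz
      | assumption
      | (rw [Finset.insert_comm]; assumption)
      | omega
      | (rw [Finset.insert_comm]; omega)

end

/-! ### The largest component -/

section
variable {V α : Type u} [DecidableEq α] {r ρ : Finset α → ℕ} {E A : Finset α} {x : α}
  {s t : α → V}

lemma Lift.eq_of_lt (h : Lift r E x s t ρ) {D : Finset α} (hD : D ⊆ E.erase x)
    (hlt : r D < r E) : ρ D = r D := by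
  have := h.trunc D hD
  omega

lemma Lift.simple (h : Lift r E x s t ρ) (hn : 3 ≤ r E)
    (hs : ∀ X ⊆ E, X.card ≤ 2 → r X = X.card) :
    ∀ X ⊆ E.erase x, X.card ≤ 2 → ρ X = X.card := by
  intro X hX hc
  have := hs X (hX.trans (Finset.erase_subset _ _)) hc
  rw [h.eq_of_lt hX (by omega), this]

/-- The matroid `r` on `E` together with an element `x`, a lift `ρ` of `r` restricted to `E - x`
and a component `A` of the lift, such that all elements outside `A` are coloops of the lift. -/
structure Setup (r : Finset α → ℕ) (E : Finset α) (x : α) (s t : α → V) (ρ : Finset α → ℕ)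
    (A : Finset α) : Prop where
  rank : RankFn r
  tc : TC r E
  simple : ∀ X ⊆ E, X.card ≤ 2 → r X = X.card
  three : 3 ≤ r E
  mem : x ∈ E
  lift : Lift r E x s t ρ
  sub : A ⊆ E.erase x
  dep : ρ A < A.card
  conn : Conn ρ ∅ A
  /-- the elements of `E - x` outside `A` are coloops -/
  sep : ρ A + (E.erase x \ A).card = r E + 1
  /-- the complement of `A` is independent in `r` -/
  indep : r (insert x (E.erase x \ A)) = (E.erase x \ A).card + 1

lemma three_le_of_dep {A : Finset α} (hs : ∀ X ⊆ A, X.card ≤ 2 → ρ X = X.card)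
    (hd : ρ A < A.card) : 3 ≤ A.card := by
  by_contra hlt
  have := hs A subset_rfl (by omega)
  omega

lemma RankFn.two_le (hρ : RankFn ρ) {A : Finset α} (hs : ∀ X ⊆ A, X.card ≤ 2 → ρ X = X.card)
    (hd : 2 ≤ A.card) : 2 ≤ ρ A := by
  obtain ⟨T, hT1, hT2⟩ := Finset.exists_subset_card_eq hd
  have := hs T hT1 (by omega)
  have := hρ.mono T A hT1
  omega

set_option maxHeartbeats 1000000 in
/-- Choose `x` and a dependent component `A` of the lift such that `A` is as large as possible.
Then all elements of `E - x` outside `A` are coloops of the lift: otherwise deleting a suitable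
`x'` outside `A` instead of `x` keeps the `U₂,₄`-minor, and `A` lies in a component of the new
lift. By maximality it is that component, which contradicts 3-connectivity. -/
lemma exists_setup (hr : RankFn r) (htc : TC r E) (hs : ∀ X ⊆ E, X.card ≤ 2 → r X = X.card)
    (h3 : 3 ≤ r E) (hcard : r E + 3 ≤ E.card)
    (hstar : ∀ x ∈ E, U24R r (E.erase x) → ∃ (V : Type u) (s t : α → V) (ρ : Finset α → ℕ),
      Lift r E x s t ρ) (hU : ∃ x ∈ E, U24R r (E.erase x)) :
    ∃ (x : α) (A : Finset α) (V : Type u) (s t : α → V) (ρ : Finset α → ℕ),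
      Setup r E x s t ρ A := by
  classical
  let Good : α × Finset α → Prop := fun p =>
    ∃ (V : Type u) (s t : α → V) (ρ : Finset α → ℕ), Lift r E p.1 s t ρ ∧ p.2 ⊆ E.erase p.1 ∧
      ρ p.2 < p.2.card ∧ ρ p.2 + ρ (E.erase p.1 \ p.2) ≤ ρ (E.erase p.1) ∧ Conn ρ ∅ p.2
  obtain ⟨p, hp, hmax⟩ := Finset.exists_max_image ((E ×ˢ E.powerset).filter Good)
    (fun p => p.2.card) (by
      obtain ⟨x, hx, hUx⟩ := hU
      obtain ⟨V, s, t, ρ, hL⟩ := hstar x hx hUx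
      obtain ⟨A, hA1, hA2, hA3, hA4⟩ := exists_dep_component hL.bin.rank (E := E.erase x) (by
        rw [hL.top, Finset.card_erase_of_mem hx]; omega)
      refine ⟨(x, A), ?_⟩
      simp only [Finset.mem_filter, Finset.mem_product, Finset.mem_powerset]
      exact ⟨⟨hx, hA1.trans (Finset.erase_subset _ _)⟩, V, s, t, ρ, hL, hA1, hA2, hA3, hA4⟩)
  obtain ⟨x, A⟩ := p
  simp only [Finset.mem_filter, Finset.mem_product, Finset.mem_powerset] at hp hmax
  obtain ⟨⟨hx, -⟩, V, s, t, ρ, hL, hAE, hdep, hsep, hconn⟩ := hp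
  simp only at hAE hdep hsep hconn hL
  have hρ := hL.bin.rank
  have hsρ := hL.simple h3 hs
  have hsA : ∀ X ⊆ A, X.card ≤ 2 → ρ X = X.card := fun X hX => hsρ X (hX.trans hAE)
  have hA3 := three_le_of_dep hsA hdep
  have hA2 := hρ.two_le hsA (by omega)
  have hAE' : A ⊆ E := hAE.trans (Finset.erase_subset _ _)
  set Y := E.erase x \ A with hY
  have hYE : Y ⊆ E.erase x := Finset.sdiff_subset
  have hxY : x ∉ Y := fun h => by have := hYE h; simp at this
  have hsum : ρ A + ρ Y = r E + 1 := by
    have h1 := hρ.union_le A Y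
    rw [show A ∪ Y = E.erase x from Finset.union_sdiff_of_subset hAE] at h1
    have := hL.top
    omega
  have hrY : r Y = ρ Y := by rw [hL.trunc Y hYE]; omega
  have hrA : r A ≤ ρ A := by rw [hL.trunc A hAE]; omega
  -- the complement of `A` in `E`
  have hEA : E \ A = insert x Y := by
    have hxA : x ∉ A := fun h => by have := hAE h; simp at this
    rw [hY]; clear * - hx hxA; grind
  -- an element `x'` of `Y` which is not a coloop would allow to replace `x` by `x'`
  have hYfree : ρ Y = Y.card := by
    rcases Nat.lt_or_ge (ρ Y) 2 with hlt | hge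
    · by_contra hne
      have h1 := hρ.le_card Y
      have h2 := hsρ Y hYE
      have h4 := hρ.two_le (A := Y) (fun X hX => hsρ X (hX.trans hYE)) (by omega)
      omega
    by_contra hne
    obtain ⟨B, -, hBY, hB1, hB2⟩ := hρ.exists_basis (I := ∅) (X := Y) (by simp [hρ.empty])
      (by simp)
    obtain ⟨x', hx'Y, hx'B⟩ : ∃ y ∈ Y, y ∉ B := by
      by_contra! hcon
      have := Finset.Subset.antisymm hBY hcon
      rw [this] at hB1
      exact hne hB1
    have hYx' : ρ (Y.erase x') = ρ Y := by
      have h1 := hρ.mono B (Y.erase x') (by clear * - hBY hx'B; grind)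
      have h2 := hρ.mono _ _ (Finset.erase_subset x' Y)
      omega
    have hx'x := Finset.mem_erase.1 (hYE hx'Y)
    have hx'A : x' ∉ A := by
      rw [hY, Finset.mem_sdiff] at hx'Y
      exact hx'Y.2
    have hAx' : A ⊆ E.erase x' := fun y hy => Finset.mem_erase.2
      ⟨fun h => hx'A (h ▸ hy), hAE' hy⟩
    have hUx' : U24R r (E.erase x') := by
      obtain ⟨B', -, hBA, hB1', hB2'⟩ := hρ.exists_basis (I := ∅) (X := A) (by simp [hρ.empty])
        (by simp)
      obtain ⟨a, haA, haB⟩ : ∃ y ∈ A, y ∉ B' := by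
        by_contra! hcon
        have := Finset.Subset.antisymm hBA hcon
        rw [this] at hB1'
        omega
      have hBE : B' ⊆ (E.erase x).erase x' := by
        intro y hy
        exact Finset.mem_erase.2 ⟨fun h => hx'A (h ▸ hBA hy), hAE (hBA hy)⟩
      have hsub : (E.erase x).erase x' ⊆ E.erase x := Finset.erase_subset _ _
      obtain ⟨K, Q, -, hK, hQ, hc, hk1, hk2⟩ := u24_lift (r := r) (E := (E.erase x).erase x')
        (F := ∅) (Z := B') (a := a) hρ h3 (fun D hD => hL.trunc D (hD.trans hsub)) (by
          have h1 := hρ.mono _ _ hsub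
          have h2 := hρ.cl_mono (e := x') (X := Y.erase x') (Y := (E.erase x).erase x')
            (by rw [Finset.insert_erase hx'Y, hYx']) (Finset.erase_subset_erase _ hYE)
          rw [Finset.insert_erase (hYE hx'Y), hL.top] at h2
          omega) (by simp) (by simp [hρ.empty]) (by simp) hBE
        (Finset.mem_erase.2 ⟨fun h => hx'A (h ▸ haA), hAE haA⟩) (by
          rw [Finset.union_empty]
          have h1 := hρ.mono (insert a B') A (Finset.insert_subset haA hBA)
          have h2 := hρ.mono _ _ (Finset.subset_insert a B')
          omega) (by
          have := hsA {a} (by simpa using haA) (by simp)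
          rw [hρ.empty]
          simp only [insert_empty_eq, this]
          simp) (by
          intro b hb
          have hab : a ≠ b := fun h => haB (h ▸ hb)
          have h1 := hsA {a, b} (by have := hBA hb; clear * - haA this; grind)
            (Finset.card_le_two)
          have h2 := hsA {b} (by simpa using hBA hb) (by simp)
          rw [Finset.card_pair hab] at h1
          simp only [insert_empty_eq, h1, h2]
          simp)
      have hsub' : (E.erase x).erase x' ⊆ E.erase x' :=
        Finset.erase_subset_erase _ (Finset.erase_subset _ _)
      exact ⟨K, Q, hK.trans hsub', hQ.trans hsub', hc, hk1, hk2⟩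
    obtain ⟨V', s', t', ρ', hL'⟩ := hstar x' hx'x.2 hUx'
    have hρ' := hL'.bin.rank
    -- both lifts agree with `r` on sets of rank less than `r E`
    have heq : ∀ D ⊆ A, ρ' D = ρ D := by
      intro D hD
      have h1 := hρ.mono D A hD
      have h2 := hL.trunc D (hD.trans hAE)
      rw [hL'.eq_of_lt (hD.trans hAx') (by omega)]
      omega
    have hconn' : Conn ρ' ∅ A := by
      intro X hX hne hne'
      have h1 := hconn X hX hne hne'
      rw [Finset.sdiff_empty] at hX
      rw [Finset.union_empty] at h1 ⊢
      rw [heq _ subset_rfl, heq ∅ (by simp), heq X hX, heq _ Finset.sdiff_subset]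
      exact h1
    obtain ⟨A', hA'1, hA'2, hA'3, hA'4⟩ := hconn'.exists_component hρ' hAx'
      (Finset.card_pos.1 (by omega))
    have hle := hmax (x', A') ⟨⟨hx'x.2, hA'1.trans (Finset.erase_subset _ _)⟩, V', s', t', ρ', hL',
      hA'1, by
        have h1 := heq A subset_rfl
        have h2 := hρ'.union_le_card A (A' \ A)
        rw [Finset.union_sdiff_of_subset hA'2] at h2
        have h3 := Finset.card_sdiff_add_card_eq_card hA'2
        simp only
        omega, hA'3, hA'4⟩
    have hAA' : A = A' := Finset.eq_of_subset_of_card_le hA'2 hle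
    subst hAA'
    rw [heq A subset_rfl, hL'.top] at hA'3
    have hEx' : E.erase x' \ A = (insert x Y).erase x' := by
      rw [← hEA]; clear * -; grind
    rw [hEx'] at hA'3
    have h5 : r ((insert x Y).erase x') ≤ ρ Y := by
      rw [← hEx', hL'.trunc _ Finset.sdiff_subset, hEx']
      omega
    have h6 := htc.2 A hAE' (by omega) (by
      rw [hEA, Finset.card_insert_of_notMem hxY]
      have := hρ.le_card Y
      omega)
    rw [hEA] at h6
    have h7 : r (insert x' (Y.erase x')) = r (Y.erase x') := by
      rw [Finset.insert_erase hx'Y, hrY, hL.trunc _ ((Finset.erase_subset _ _).trans hYE)]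
      omega
    have h8 := hr.cl_mono h7 (Y := (insert x Y).erase x')
      (Finset.erase_subset_erase _ (Finset.subset_insert _ _))
    rw [Finset.insert_erase (Finset.mem_insert_of_mem hx'Y)] at h8
    omega
  refine ⟨x, A, V, s, t, ρ, hr, htc, hs, h3, hx, hL, hAE, hdep, hconn, ?_, ?_⟩
  · rw [← hY, ← hYfree]; exact hsum
  · rw [← hY]
    have h1 := hr.le_card (insert x Y)
    rw [Finset.card_insert_of_notMem hxY] at h1
    rcases Nat.lt_or_ge 0 Y.card with h0 | h0
    · have h6 := htc.2 A hAE' (by omega) (by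
        rw [hEA, Finset.card_insert_of_notMem hxY]
        omega)
      rw [hEA] at h6
      omega
    · have : Y = ∅ := Finset.card_eq_zero.1 (by omega)
      rw [this]
      simpa using hs {x} (by simpa using hx) (by simp)

end

/-! ### Choosing the element -/

section
variable {V α : Type u} [DecidableEq α] {r ρ : Finset α → ℕ} {E A : Finset α} {x : α}
  {s t : α → V}

namespace Setup

lemma sub' (h : Setup r E x s t ρ A) : A ⊆ E := h.sub.trans (Finset.erase_subset _ _)

lemma simple' (h : Setup r E x s t ρ A) : ∀ X ⊆ E.erase x, X.card ≤ 2 → ρ X = X.card :=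
  h.lift.simple h.three h.simple

lemma simpleA (h : Setup r E x s t ρ A) : ∀ X ⊆ A, X.card ≤ 2 → ρ X = X.card :=
  fun X hX => h.simple' X (hX.trans h.sub)

lemma three_le_card (h : Setup r E x s t ρ A) : 3 ≤ A.card := three_le_of_dep h.simpleA h.dep

lemma two_le (h : Setup r E x s t ρ A) : 2 ≤ ρ A :=
  h.lift.bin.rank.two_le h.simpleA (by have := h.three_le_card; omega)

/-- Subsets of `A` are skew to sets of coloops. -/
lemma skew (h : Setup r E x s t ρ A) {P D : Finset α} (hP : P ⊆ A) (hD : D ⊆ E.erase x \ A) :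
    ρ (P ∪ D) = ρ P + D.card := by
  have hρ := h.lift.bin.rank
  have h1 := hρ.skew_restrict (J := ∅) (P := A) (Q := E.erase x \ A) (P₀ := P) (Q₀ := D) (by
    rw [Finset.union_sdiff_of_subset h.sub, hρ.empty, h.lift.top]
    have := hρ.le_card (E.erase x \ A)
    have := h.sep
    omega) hP hD
  have h2 : ρ D = D.card := by
    have h3 := hρ.union_le A (E.erase x \ A)
    rw [Finset.union_sdiff_of_subset h.sub, h.lift.top] at h3
    have := hρ.le_card (E.erase x \ A)
    have := h.sep
    exact hρ.indep_subset (by omega) hD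
  rw [hρ.empty] at h1
  have := hρ.union_le P D
  omega

/-- All relations of the lift are within `A`. -/
lemma rel_sub (h : Setup r E x s t ρ A) {S : Finset α} (hS : Cut s t (E.erase x) S) : S ⊆ A := by
  intro b hb
  by_contra hbA
  have hbE := h.lift.bin.sub S hS hb
  have hρ := h.lift.bin.rank
  have h1 := (h.lift.bin.cl b hbE ((E.erase x).erase b) (Finset.erase_subset _ _) (by simp)).2
    ⟨S, hS, hb, by rw [Finset.insert_erase hbE]; exact h.lift.bin.sub S hS⟩
  rw [Finset.insert_erase hbE, h.lift.top] at h1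
  have h2 := h.skew (P := A) (D := (E.erase x \ A).erase b) subset_rfl (Finset.erase_subset _ _)
  rw [show A ∪ (E.erase x \ A).erase b = (E.erase x).erase b by
    have := h.sub; clear * - this hbA; grind, Finset.card_erase_of_mem
      (Finset.mem_sdiff.2 ⟨hbE, hbA⟩)] at h2
  have h3 := Finset.card_pos.2 ⟨b, Finset.mem_sdiff.2 ⟨hbE, hbA⟩⟩
  have := h.sep
  omega

lemma bin_A (h : Setup r E x s t ρ A) : Binary ρ A (Cut s t A) := by
  refine h.lift.bin.restrict_cut h.sub ?_
  have h1 := h.skew (P := A) (D := E.erase x \ A) subset_rfl subset_rfl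
  rw [Finset.union_sdiff_of_subset h.sub] at h1
  have := h.lift.bin.rank.le_card (E.erase x \ A)
  omega

/-- Triangles of `r` avoiding `x` are relations of the lift. -/
lemma triangle (h : Setup r E x s t ρ A) {T : Finset α} (hT : T ⊆ E.erase x) (hc : T.card = 3)
    (hr : r T ≤ 2) : Cut s t A T := by
  have h1 := h.three
  have h2 := h.lift.eq_of_lt hT (by omega)
  have h3 : ¬ ρ T = T.card := by omega
  rw [h.lift.bin.indep_iff hT] at h3
  push Not at h3
  obtain ⟨S, hS, hST, hne⟩ := h3
  have h4 := h.lift.bin.three_le h.simple' hS hne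
  have h5 : S = T := Finset.eq_of_subset_of_card_le hST (by omega)
  subst h5
  have hSA := h.rel_sub hS
  obtain ⟨Z, rfl⟩ := hS
  refine ⟨Z, ?_⟩
  ext e
  constructor
  · intro he
    exact mem_cut.2 ⟨hSA he, (mem_cut.1 he).2⟩
  · intro he
    exact mem_cut.2 ⟨h.sub (mem_cut.1 he).1, (mem_cut.1 he).2⟩

/-- After contracting `e`, every 2-separation has a side of rank at most one (that is, rank at most
two together with `e`), provided that `e` is not spanned by certain subsets of the complement of
`A`. In the lift such a separation is an exact splitting, so that `A` lies on one side. -/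
lemma goal1 (h : Setup r E x s t ρ A) {e : α} (he : e ∈ A) (hc : Conn ρ {e} A)
    (hq : ∀ q ∈ E.erase x \ A, r (insert e (insert x ((E.erase x \ A).erase q))) ≠
      r (insert x ((E.erase x \ A).erase q)))
    (hQ : ρ A ≤ 2 ∨ r (insert e (insert x (E.erase x \ A))) ≠ r (insert x (E.erase x \ A)))
    (X Y : Finset α) (hXY : X ∪ Y = E.erase e) (hd : Disjoint X Y)
    (hle : r (insert e X) + r (insert e Y) ≤ r E + 2) :
    r (insert e X) ≤ 2 ∨ r (insert e Y) ≤ 2 := by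
  have heE' := h.sub he
  have hex : e ≠ x := (Finset.mem_erase.1 heE').1
  have heE := h.sub' he
  wlog hxY : x ∈ Y generalizing X Y
  · have hxX : x ∈ X := by
      have : x ∈ X ∪ Y := by rw [hXY]; exact Finset.mem_erase.2 ⟨hex.symm, h.mem⟩
      rw [Finset.mem_union] at this
      exact this.resolve_right hxY
    exact (this Y X (by rw [Finset.union_comm]; exact hXY) hd.symm (by omega) hxX).symm
  have hr := h.rank
  have hρ := h.lift.bin.rank
  rw [Finset.disjoint_left] at hd
  have hXE : X ⊆ E.erase x := by
    intro y hy
    have h1 : y ∈ E.erase e := by rw [← hXY]; exact Finset.mem_union_left _ hy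
    exact Finset.mem_erase.2 ⟨fun h => hd hy (h ▸ hxY), (Finset.mem_erase.1 h1).2⟩
  have heX : e ∉ X := fun hx => by
    have : e ∈ E.erase e := by rw [← hXY]; exact Finset.mem_union_left _ hx
    simp at this
  have heY : e ∉ Y := fun hx => by
    have : e ∈ E.erase e := by rw [← hXY]; exact Finset.mem_union_right _ hx
    simp at this
  have hYE : Y.erase x ⊆ E.erase x := by
    intro y hy
    have h1 : y ∈ E.erase e := by
      rw [← hXY]; exact Finset.mem_union_right _ (Finset.mem_erase.1 hy).2
    exact Finset.mem_erase.2 ⟨(Finset.mem_erase.1 hy).1, (Finset.mem_erase.1 h1).2⟩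
  have hun : X ∪ Y.erase x = (E.erase x).erase e := by
    have hxX : x ∉ X := fun hx => by have := hXE hx; simp at this
    rw [Finset.erase_right_comm, ← hXY]
    clear * - hxX; grind
  by_contra! hcon
  have hXlt : r (insert e X) < r E := by omega
  have hYlt : r (insert e Y) < r E := by omega
  have hY1 := hr.mono (insert e (Y.erase x)) (insert e Y)
    (Finset.insert_subset_insert _ (Finset.erase_subset _ _))
  have hXρ := h.lift.eq_of_lt (D := insert e X) (Finset.insert_subset heE' hXE) hXlt
  have hYρ := h.lift.eq_of_lt (D := insert e (Y.erase x)) (Finset.insert_subset heE' hYE) (by omega)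
  have hρe : ρ {e} = 1 := by simpa using h.simpleA {e} (by simpa using he) (by simp)
  have hsub := hρ.sub (A := E.erase x) (B := {e}) (X := insert e X) (Y := insert e (Y.erase x))
    (by
      rw [show insert e X ∪ insert e (Y.erase x) = insert e (X ∪ Y.erase x) by clear * -; grind,
        hun, Finset.insert_erase heE'])
    (by clear * -; grind)
  rw [h.lift.top, hρe] at hsub
  have hYA : r (insert e (Y.erase x)) = r (insert e Y) := by omega
  have hsk := hρ.skew_restrict (J := {e}) (P := insert e X) (Q := insert e (Y.erase x))
    (P₀ := insert e (X ∩ A)) (Q₀ := insert e (Y.erase x ∩ A)) (by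
      rw [show insert e X ∪ insert e (Y.erase x) = insert e (X ∪ Y.erase x) by clear * -; grind,
        hun, Finset.insert_erase heE', h.lift.top, hρe]
      omega) (by clear * -; grind) (by clear * -; grind)
  have hA' : ∀ y ∈ A, y ≠ e → y ∉ X → y ∈ Y.erase x := by
    intro y hy hye hyX
    have h1 : y ∈ X ∪ Y.erase x := by
      rw [hun]; exact Finset.mem_erase.2 ⟨hye, h.sub hy⟩
    rw [Finset.mem_union] at h1
    exact h1.resolve_left hyX
  have hdis : ∀ y ∈ Y.erase x, y ∉ X := fun y hy hyX => hd hyX (Finset.mem_erase.1 hy).2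
  have heY' : e ∉ Y.erase x := fun h => heY (Finset.mem_erase.1 h).2
  have hsplit : X ∩ A = ∅ ∨ Y.erase x ∩ A = ∅ := by
    by_contra! hne
    have h1 := hc (X ∩ A) (by clear * - heX; grind) hne.1 (by
      obtain ⟨y, hy⟩ := hne.2
      rw [Finset.mem_inter] at hy
      have h1 := hdis y hy.1
      have h2 : y ≠ e := fun h => heY' (h ▸ hy.1)
      exact ⟨y, by clear * - hy h1 h2; grind⟩)
    rw [show insert e (X ∩ A) ∪ insert e (Y.erase x ∩ A) = A by
      clear * - he hA'; grind] at hsk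
    rw [show X ∩ A ∪ {e} = insert e (X ∩ A) by clear * -; grind,
      show A \ (X ∩ A) = insert e (Y.erase x ∩ A) by clear * - he hA' hdis heX; grind] at h1
    omega
  set Q := E.erase x \ A with hQd
  rcases hsplit with hX0 | hY0
  · have hXQ : X ⊆ Q := by
      intro y hy
      refine Finset.mem_sdiff.2 ⟨hXE hy, fun hyA => ?_⟩
      have : y ∈ X ∩ A := Finset.mem_inter.2 ⟨hy, hyA⟩
      rw [hX0] at this
      simp at this
    have h1 := h.skew (P := {e}) (D := X) (by simpa using he) hXQ
    rw [Finset.singleton_union, hρe] at h1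
    have h2 := h.tc.2 X (hXE.trans (Finset.erase_subset _ _)) (by omega) (by
      have h3 : {x, e} ⊆ E \ X := by
        have h4 := h.mem
        have h5 : x ∉ X := fun hx => by have := hXE hx; simp at this
        clear * - heE h4 h5 heX; grind
      have h4 := Finset.card_le_card h3
      rw [Finset.card_pair hex.symm] at h4
      exact h4)
    rw [show E \ X = insert e Y by
      have h5 : ∀ y ∈ E, y ≠ e → y ∈ X ∪ Y := fun y hy hye => by
        rw [hXY]; exact Finset.mem_erase.2 ⟨hye, hy⟩
      have h6 : ∀ y ∈ Y, y ∈ E := fun y hy => by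
        have : y ∈ E.erase e := by rw [← hXY]; exact Finset.mem_union_right _ hy
        exact (Finset.mem_erase.1 this).2
      clear * - h5 h6 heE heX hd
      grind] at h2
    have h3 := hr.le_card X
    omega
  · have hYQ : Y.erase x ⊆ Q := by
      intro y hy
      refine Finset.mem_sdiff.2 ⟨hYE hy, fun hyA => ?_⟩
      have : y ∈ Y.erase x ∩ A := Finset.mem_inter.2 ⟨hy, hyA⟩
      rw [hY0] at this
      simp at this
    have hxQ : x ∉ Q := fun hx => by
      have := (Finset.mem_sdiff.1 hx).1
      simp at this
    have hind : r Y = Y.card := by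
      refine hr.indep_subset (J := insert x Q) ?_ ?_
      · rw [h.indep, Finset.card_insert_of_notMem hxQ]
      · rw [← Finset.insert_erase hxY]
        exact Finset.insert_subset_insert _ hYQ
    have h1 : r (insert e Y) = r Y := by
      have h2 := hr.unit e (Y.erase x)
      have h3 := hr.le_card (Y.erase x)
      have h4 := Finset.card_erase_of_mem hxY
      have h5 := Finset.card_pos.2 ⟨x, hxY⟩
      have h6 := hr.mono _ _ (Finset.subset_insert e Y)
      omega
    by_cases hne : ∃ q ∈ Q, q ∉ Y
    · obtain ⟨q, hqQ, hqY⟩ := hne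
      refine hq q hqQ (hr.cl_mono h1 ?_)
      intro y hy
      by_cases hyx : y = x
      · simp [hyx]
      · refine Finset.mem_insert_of_mem (Finset.mem_erase.2 ⟨fun h => hqY (h ▸ hy), ?_⟩)
        exact hYQ (Finset.mem_erase.2 ⟨hyx, hy⟩)
    · push Not at hne
      rcases hQ with h2 | h2
      · have h3 : insert e X ⊆ A := by
          refine Finset.insert_subset he fun y hy => ?_
          by_contra hyA
          exact hd hy (hne y (Finset.mem_sdiff.2 ⟨hXE hy, hyA⟩))
        have h4 := hρ.mono _ _ h3
        omega
      · refine h2 (hr.cl_mono h1 ?_)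
        rw [← Finset.insert_erase hxY]
        exact Finset.insert_subset_insert _ hYQ

/-- Contracting `e` preserves a `U₂,₄`-minor, if the rank of `A` is at least three. -/
lemma goal2 (h : Setup r E x s t ρ A) {e : α} (he : e ∈ A) (hc : Conn ρ {e} A) (h3 : 3 ≤ ρ A) :
    ∃ K Q, e ∈ K ∧ K ⊆ E ∧ Q ⊆ E ∧ Q.card = 4 ∧ r (K ∪ Q) ≤ r K + 2 ∧
      ∀ T ⊆ Q, T.card = 2 → r K + 2 ≤ r (K ∪ T) := by
  have hρ := h.lift.bin.rank
  have hρe : ρ {e} = 1 := by simpa using h.simpleA {e} (by simpa using he) (by simp)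
  obtain ⟨a, ha⟩ : (A.erase e).Nonempty := by
    rw [← Finset.card_pos, Finset.card_erase_of_mem he]
    have := h.three_le_card
    omega
  rw [Finset.mem_erase] at ha
  have hae : ρ {e, a} = 2 := by
    rw [h.simpleA {e, a} (by clear * - he ha; grind) Finset.card_le_two, Finset.card_pair ha.1.symm]
  -- the points parallel to `a` after contracting `e`, and the others
  let Z := (A.erase e).filter fun b => ρ (insert b {e, a}) = ρ {e, a}
  have hZA : Z ⊆ A.erase e := Finset.filter_subset _ _
  have hZρ : ρ (Z ∪ {e}) ≤ 2 := by
    have h1 := hρ.cl_union (X := {e, a}) (Y := Z) fun b hb => (Finset.mem_filter.1 hb).2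
    have h2 := hρ.mono (Z ∪ {e}) ({e, a} ∪ Z) (by clear * -; grind)
    omega
  have haZ : a ∈ Z := by
    refine Finset.mem_filter.2 ⟨Finset.mem_erase.2 ha, ?_⟩
    congr 1
    clear * -; grind
  have hAe : A \ {e} = A.erase e := Finset.sdiff_singleton_eq_erase _ _
  have hne : ((A \ {e}) \ Z).Nonempty := by
    by_contra hcon
    rw [Finset.not_nonempty_iff_eq_empty, Finset.sdiff_eq_empty_iff_subset] at hcon
    have h1 := hρ.mono A (Z ∪ {e}) (by clear * - hcon; grind)
    omega
  have h1 := hc Z (by rw [hAe]; exact hZA) ⟨a, haZ⟩ hne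
  have h2 : A \ Z = (A \ {e}) \ Z ∪ {e} := by
    have : e ∉ Z := fun h => by have := hZA h; simp at this
    clear * - this he; grind
  rw [h2, hρe] at h1
  set W := (A \ {e}) \ Z with hW
  have hWA : W ⊆ A := Finset.sdiff_subset.trans Finset.sdiff_subset
  obtain ⟨K, Q, hK0, hK, hQ, hcard, hk1, hk2⟩ := u24_lift (r := r) (E := E.erase x) (F := {e})
    (Z := W) (a := a) hρ h.three h.lift.trunc h.lift.top (by simpa using h.sub he) (by simp [hρe])
    (by simp) (hWA.trans h.sub) (h.sub ha.2) (by
      have h4 := hρ.mono (insert a (W ∪ {e})) A (by clear * - hWA ha he; grind)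
      have h5 := hρ.mono _ _ (Finset.subset_insert a (W ∪ {e}))
      omega) (by
      rw [show insert a {e} = ({e, a} : Finset α) by clear * -; grind]
      omega) (by
      intro b hb heq
      have hbA := hWA hb
      have hb' := Finset.mem_sdiff.1 hb
      apply hb'.2
      refine Finset.mem_filter.2 ⟨by rw [← hAe]; exact hb'.1, ?_⟩
      have hbe : b ≠ e := by
        have := hb'.1
        clear * - this; grind
      have h4 : ρ (insert b {e}) = 2 := by
        rw [h.simpleA {b, e} (by clear * - he hbA; grind) Finset.card_le_two, Finset.card_pair hbe]
      rw [show ({b, e, a} : Finset α) = insert a (insert b {e}) by clear * -; grind, heq, h4, hae])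
  exact ⟨K, Q, hK0 (by simp), hK.trans (Finset.erase_subset _ _),
    hQ.trans (Finset.erase_subset _ _), hcard, hk1, hk2⟩

/-- If two elements `a₁`, `a₂` meet all triangles of the lift through `e`, then the triangles of
`r` through `e` are met by `x`, `a₁` and `a₂`. -/
lemma goal3 (h : Setup r E x s t ρ A) {e a₁ a₂ : α} (he : e ∈ A)
    (ha : ∀ S, Cut s t A S → S.card = 3 → e ∈ S → a₁ ∈ S ∨ a₂ ∈ S) (h1 : a₁ ≠ e) (h2 : a₂ ≠ e) :
    ∃ R ⊆ E.erase e, E.card ≤ R.card + 4 ∧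
      ∀ a ∈ R, ∀ b ∈ R, a ≠ b → 3 ≤ r {e, a, b} := by
  refine ⟨E \ {e, x, a₁, a₂}, by clear * -; grind, ?_, ?_⟩
  · have h3 := Finset.le_card_sdiff {e, x, a₁, a₂} E
    have h4 := Finset.card_le_four (a := e) (b := x) (c := a₁) (d := a₂)
    omega
  · intro a haR b hbR hab
    simp only [Finset.mem_sdiff, Finset.mem_insert, Finset.mem_singleton, not_or] at haR hbR
    by_contra hlt
    have h3 : ({e, a, b} : Finset α).card = 3 :=
      Finset.card_eq_three.2 ⟨e, a, b, Ne.symm haR.2.1, Ne.symm hbR.2.1, hab, rfl⟩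
    have h4 := h.triangle (T := {e, a, b}) (by
      have := h.sub he
      clear * - this haR hbR; grind) h3 (by omega)
    have h5 := ha _ h4 h3 (by simp)
    simp only [Finset.mem_insert, Finset.mem_singleton] at h5
    have := haR.2
    have := hbR.2
    clear * - h5 h1 h2 haR hbR
    grind

end Setup
end

/-! ### Existence of the element -/

section
variable {V α : Type u} [DecidableEq α] {r ρ : Finset α → ℕ} {E A : Finset α} {x : α}
  {s t : α → V}

/-- The three properties of an element `e` of the dual which make the simplification of the
contraction by `e` 3-connected with a `U₂,₄`-minor and few elements lost. -/
def Works (r : Finset α → ℕ) (E : Finset α) (e : α) : Prop :=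
  (∀ X Y, X ∪ Y = E.erase e → Disjoint X Y → r (insert e X) + r (insert e Y) ≤ r E + 2 →
    r (insert e X) ≤ 2 ∨ r (insert e Y) ≤ 2) ∧
  (∃ K Q, e ∈ K ∧ K ⊆ E ∧ Q ⊆ E ∧ Q.card = 4 ∧ r (K ∪ Q) ≤ r K + 2 ∧
    ∀ T ⊆ Q, T.card = 2 → r K + 2 ≤ r (K ∪ T)) ∧
  (∃ R ⊆ E.erase e, E.card ≤ R.card + 4 ∧ ∀ a ∈ R, ∀ b ∈ R, a ≠ b → 3 ≤ r {e, a, b})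

namespace Setup

/-- The case where the component `A` has rank at least three: the element given by
`graph_lemma` works, once the at most one element of `A` spanned by the complement of `A` is
avoided. -/
lemma exists_of_three_le (h : Setup r E x s t ρ A) (h3 : 3 ≤ ρ A) : ∃ e ∈ E, Works r E e := by
  have hr := h.rank
  have hρ := h.lift.bin.rank
  set Q := E.erase x \ A with hQ
  have hQE : Q ⊆ E.erase x := Finset.sdiff_subset
  -- at most one element of `A` is spanned by the complement of `A`
  have huniq : ∀ f ∈ A, ∀ g ∈ A, r (insert f (insert x Q)) = r (insert x Q) →
      r (insert g (insert x Q)) = r (insert x Q) → f = g := by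
    intro f hf g hg hf1 hg1
    by_contra hfg
    have h1 := hr.cl_union (X := insert x Q) (Y := {f, g}) (by
      intro y hy
      simp only [Finset.mem_insert, Finset.mem_singleton] at hy
      rcases hy with rfl | rfl <;> assumption)
    have hfgA : {f, g} ⊆ A := by clear * - hf hg; grind
    have h2 := h.skew (P := {f, g}) (D := Q) hfgA subset_rfl
    rw [h.simpleA _ hfgA Finset.card_le_two, Finset.card_pair hfg] at h2
    have h4 := h.lift.trunc ({f, g} ∪ Q) (Finset.union_subset (hfgA.trans h.sub) hQE)
    have h5 := hr.mono ({f, g} ∪ Q) (insert x Q ∪ {f, g}) (by clear * -; grind)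
    have h6 := h.indep
    have h7 := h.sep
    rw [← hQ] at h6 h7
    omega
  obtain ⟨f₀, hf₀, hf₀'⟩ : ∃ f₀ ∈ A, ∀ e ∈ A, e ≠ f₀ →
      r (insert e (insert x Q)) ≠ r (insert x Q) := by
    by_cases hex : ∃ f ∈ A, r (insert f (insert x Q)) = r (insert x Q)
    · obtain ⟨f, hf, hf1⟩ := hex
      exact ⟨f, hf, fun e he hne heq => hne (huniq e he f hf heq hf1)⟩
    · push Not at hex
      obtain ⟨f, hf⟩ := Finset.card_pos.1 (show 0 < A.card by have := h.three_le_card; omega)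
      exact ⟨f, hf, fun e he _ => hex e he⟩
  obtain ⟨e, he, hef, hc, a₁, a₂, ha₁, ha₂, ha⟩ := graph_lemma h.bin_A h.conn h.simpleA
    (by have := h.three_le_card; omega) hf₀
  have hcl := hf₀' e he hef
  refine ⟨e, h.sub' he, h.goal1 he hc ?_ (Or.inr hcl), h.goal2 he hc h3, h.goal3 he ha ha₁ ha₂⟩
  intro q _ heq
  exact hcl (hr.cl_mono heq (Finset.insert_subset_insert _ (Finset.erase_subset _ _)))

/-- A simple matroid of rank two stays connected when an element is contracted. -/
lemma conn_of_two (h : Setup r E x s t ρ A) (h2 : ρ A = 2) {e : α} (he : e ∈ A) :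
    Conn ρ {e} A := by
  have pair : ∀ y ∈ A, y ≠ e → ∀ D : Finset α, y ∈ D → e ∈ D → 2 ≤ ρ D := by
    intro y hy hye D hyD heD
    have h1 := h.simpleA {y, e} (by clear * - hy he; grind) Finset.card_le_two
    rw [Finset.card_pair hye] at h1
    have h3 := h.lift.bin.rank.mono {y, e} D (by clear * - hyD heD; grind)
    omega
  have hρe : ρ {e} = 1 := by simpa using h.simpleA {e} (by simpa using he) (by simp)
  intro X hX hne hne'
  obtain ⟨y, hy⟩ := hne
  obtain ⟨z, hz⟩ := hne'
  have hy' := hX hy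
  have hz' := (Finset.mem_sdiff.1 hz).1
  rw [Finset.mem_sdiff, Finset.mem_singleton] at hy' hz'
  have h3 := pair y hy'.1 hy'.2 (X ∪ {e}) (by simp [hy]) (by simp)
  have heX : e ∉ X := fun h => by have := hX h; simp at this
  have h4 := pair z hz'.1 hz'.2 (A \ X)
    (Finset.mem_sdiff.2 ⟨hz'.1, (Finset.mem_sdiff.1 hz).2⟩) (Finset.mem_sdiff.2 ⟨he, heX⟩)
  omega

/-- A component of rank two is a triangle, since a simple binary matroid of rank two has at most
three elements. -/
lemma card_of_two (h : Setup r E x s t ρ A) (h2 : ρ A = 2) : A.card = 3 := by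
  by_contra hne
  have h3 := h.three_le_card
  obtain ⟨Q, hQ, hQ4⟩ := Finset.exists_subset_card_eq (show 4 ≤ A.card by omega)
  have hρ := h.lift.bin.rank
  refine h.bin_A.not_u24 ⟨∅, Q, by simp, hQ, hQ4, ?_, ?_⟩
  · rw [Finset.empty_union, hρ.empty]
    have := hρ.mono Q A hQ
    omega
  · intro T hT hT2
    rw [Finset.empty_union, hρ.empty, h.simpleA T (hT.trans hQ) (by omega)]
    omega

set_option maxHeartbeats 1000000 in
/-- The case where the component `A` has rank two, and so is a triangle: some element of `A` avoids
the spans excluded in `goal1`, and every such element works. -/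
lemma exists_of_two (h : Setup r E x s t ρ A) (h2 : ρ A = 2)
    (hstar : ∀ x ∈ E, U24R r (E.erase x) → ∃ (V : Type u) (s t : α → V) (ρ : Finset α → ℕ),
      Lift r E x s t ρ) : ∃ e ∈ E, Works r E e := by
  have hr := h.rank
  have hρ := h.lift.bin.rank
  have hn := h.three
  have hA3 := h.card_of_two h2
  set Q := E.erase x \ A with hQ
  have hQE : Q ⊆ E.erase x := Finset.sdiff_subset
  have hQE' : Q ⊆ E := hQE.trans (Finset.erase_subset _ _)
  have hxQ : x ∉ Q := fun hx => by have := hQE hx; simp at this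
  have hsep : Q.card = r E - 1 := by have := h.sep; rw [← hQ] at this; omega
  have hind : r (insert x Q) = (insert x Q).card := by
    rw [Finset.card_insert_of_notMem hxQ]; exact h.indep
  have hcQ : (insert x Q).card = r E := by rw [Finset.card_insert_of_notMem hxQ]; omega
  have hxA : x ∉ A := fun hx => by have := h.sub hx; simp at this
  have hQA : ∀ y ∈ Q, y ∉ A := fun y hy => (Finset.mem_sdiff.1 hy).2
  have hcover : ∀ y ∈ E, y = x ∨ y ∈ Q ∨ y ∈ A := by
    intro y hy
    by_cases hyx : y = x
    · exact Or.inl hyx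
    by_cases hyA : y ∈ A
    · exact Or.inr (Or.inr hyA)
    · exact Or.inr (Or.inl (Finset.mem_sdiff.2 ⟨Finset.mem_erase.2 ⟨hyx, hy⟩, hyA⟩))
  have hAE := h.sub'
  have hxE := h.mem
  -- two elements of `A` and a subset of `Q` are independent in the lift
  have hpairQ : ∀ f ∈ A, ∀ g ∈ A, f ≠ g → ∀ D ⊆ Q, D.card + 2 = r E →
      r (insert f (insert g D)) = r E := by
    intro f hf g hg hfg D hD hc
    have hfgA : {f, g} ⊆ A := by clear * - hf hg; grind
    have h1 := h.skew (P := {f, g}) (D := D) hfgA hD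
    rw [h.simpleA _ hfgA Finset.card_le_two, Finset.card_pair hfg] at h1
    rw [show insert f (insert g D) = {f, g} ∪ D by clear * -; grind,
      h.lift.trunc _ (Finset.union_subset (hfgA.trans h.sub) (hD.trans hQE))]
    omega
  have hsingQ : ∀ f ∈ A, r (insert f Q) = r E := by
    intro f hf
    have h1 := h.skew (P := {f}) (D := Q) (by simpa using hf) subset_rfl
    rw [h.simpleA {f} (by simpa using hf) (by simp), Finset.singleton_union] at h1
    rw [h.lift.trunc _ (Finset.insert_subset (h.sub hf) hQE), h1]
    simp only [Finset.card_singleton]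
    omega
  -- at most one element of `A` is spanned by `insert x (Q.erase q)`
  have huniq : ∀ q ∈ Q, ∀ f ∈ A, ∀ g ∈ A, f ≠ g →
      r (insert f (insert x (Q.erase q))) = r (insert x (Q.erase q)) →
      r (insert g (insert x (Q.erase q))) = r (insert x (Q.erase q)) → False := by
    intro q hq f hf g hg hfg hf1 hg1
    have h1 := hr.cl_union (X := insert x (Q.erase q)) (Y := {f, g}) (by
      intro y hy
      simp only [Finset.mem_insert, Finset.mem_singleton] at hy
      rcases hy with rfl | rfl <;> assumption)
    have hc := Finset.card_erase_of_mem hq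
    have h3 := hpairQ f hf g hg hfg (Q.erase q) (Finset.erase_subset _ _) (by omega)
    have h4 := hr.mono (insert f (insert g (Q.erase q))) (insert x (Q.erase q) ∪ {f, g})
      (by clear * -; grind)
    have h5 := hr.le_card (insert x (Q.erase q))
    have h6 := Finset.card_insert_le x (Q.erase q)
    omega
  -- if all three elements `e`, `f`, `g` of `A` were bad, then deleting `e` would keep a `U₂,₄`-minor,
  -- while the two spans containing `f` and `g` would be too small for a lift of `E - e`
  have key : ∃ e ∈ A, ∀ q ∈ Q, r (insert e (insert x (Q.erase q))) ≠ r (insert x (Q.erase q)) := by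
    by_contra! hcon
    obtain ⟨e, f, g, hef, heg, hfg, hA⟩ := Finset.card_eq_three.1 hA3
    have heA : e ∈ A := by rw [hA]; simp
    have hfA : f ∈ A := by rw [hA]; simp
    have hgA : g ∈ A := by rw [hA]; simp
    obtain ⟨q₁, hq₁, hq₁'⟩ := hcon e heA
    obtain ⟨q₂, hq₂, hq₂'⟩ := hcon f hfA
    obtain ⟨q₃, hq₃, hq₃'⟩ := hcon g hgA
    have hq23 : q₂ ≠ q₃ := fun heq => huniq q₂ hq₂ f hfA g hgA hfg hq₂' (heq ▸ hq₃')
    have hf1 := fun heq => huniq q₁ hq₁ e heA f hfA hef hq₁' heq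
    have hg1 := fun heq => huniq q₁ hq₁ e heA g hgA heg hq₁' heq
    have hsubE : ∀ y ∈ Q, y ∈ E.erase e := fun y hy =>
      Finset.mem_erase.2 ⟨fun heq => hQA y hy (heq ▸ heA), hQE' hy⟩
    have hxe : x ∈ E.erase e := Finset.mem_erase.2 ⟨fun heq => hxA (heq ▸ heA), hxE⟩
    have hfe : f ∈ E.erase e := Finset.mem_erase.2 ⟨hef.symm, hAE hfA⟩
    have hge : g ∈ E.erase e := Finset.mem_erase.2 ⟨heg.symm, hAE hgA⟩
    have hxf : x ≠ f := fun heq => hxA (heq ▸ hfA)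
    have hxg : x ≠ g := fun heq => hxA (heq ▸ hgA)
    have hqf : q₁ ≠ f := fun heq => hQA _ hq₁ (heq ▸ hfA)
    have hqg : q₁ ≠ g := fun heq => hQA _ hq₁ (heq ▸ hgA)
    have hqx : q₁ ≠ x := fun heq => hxQ (heq ▸ hq₁)
    have hc1 := Finset.card_erase_of_mem hq₁
    have hU : U24R r (E.erase e) := by
      have hQe : ({q₁, x, f, g} : Finset α) ⊆ E.erase e := by
        have := hsubE q₁ hq₁
        clear * - this hxe hfe hge
        grind
      have hKr : r (Q.erase q₁) = r E - 2 := by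
        rw [hr.indep_subset hind ((Finset.erase_subset _ _).trans (Finset.subset_insert _ _))]
        omega
      have hKE : Q.erase q₁ ⊆ E.erase e := fun y hy => hsubE y (Finset.mem_of_mem_erase hy)
      have hxK : r (insert x (Q.erase q₁)) = r E - 1 := by
        rw [hr.indep_subset hind (Finset.insert_subset_insert _ (Finset.erase_subset _ _)),
          Finset.card_insert_of_notMem (fun h => hxQ (Finset.mem_of_mem_erase h))]
        omega
      have e1 : r E ≤ r (insert q₁ (insert x (Q.erase q₁))) := by
        rw [Finset.insert_comm, Finset.insert_erase hq₁]; omega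
      have e2 : r E ≤ r (insert q₁ (insert f (Q.erase q₁))) := by
        rw [Finset.insert_comm, Finset.insert_erase hq₁, hsingQ f hfA]
      have e3 : r E ≤ r (insert q₁ (insert g (Q.erase q₁))) := by
        rw [Finset.insert_comm, Finset.insert_erase hq₁, hsingQ g hgA]
      have e4 : r E ≤ r (insert f (insert x (Q.erase q₁))) := by
        have h3 := hr.mono _ _ (Finset.subset_insert f (insert x (Q.erase q₁)))
        by_contra hlt
        exact hf1 (by omega)
      have e5 : r E ≤ r (insert g (insert x (Q.erase q₁))) := by
        have h3 := hr.mono _ _ (Finset.subset_insert g (insert x (Q.erase q₁)))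
        by_contra hlt
        exact hg1 (by omega)
      have e6 : r E ≤ r (insert f (insert g (Q.erase q₁))) := by
        rw [hpairQ f hfA g hgA hfg _ (Finset.erase_subset _ _) (by omega)]
      refine ⟨Q.erase q₁, {q₁, x, f, g}, hKE, hQe, ?_, ?_, ?_⟩
      · exact Finset.card_eq_four.2 ⟨q₁, x, f, g, hqx, hqf, hqg, hxf, hxg, hfg, rfl⟩
      · have := hr.mono (Q.erase q₁ ∪ {q₁, x, f, g}) E (Finset.union_subset
          (hKE.trans (Finset.erase_subset _ _)) (hQe.trans (Finset.erase_subset _ _)))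
        omega
      · intro T hT hT2
        rw [hKr]
        obtain ⟨y, z, hyz, rfl⟩ := Finset.card_eq_two.1 hT2
        have hy : y ∈ ({q₁, x, f, g} : Finset α) := hT (by simp)
        have hz : z ∈ ({q₁, x, f, g} : Finset α) := hT (by simp)
        suffices hsuff : r E ≤ r (insert y (insert z (Q.erase q₁))) by
          rw [show Q.erase q₁ ∪ {y, z} = insert y (insert z (Q.erase q₁)) by clear * -; grind]
          omega
        simp only [Finset.mem_insert, Finset.mem_singleton] at hy hz
        rcases hy with rfl | rfl | rfl | rfl <;> rcases hz with rfl | rfl | rfl | rfl <;>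
          first
          | exact absurd rfl hyz
          | assumption
          | (rw [Finset.insert_comm]; assumption)
    obtain ⟨V', s', t', ρ', hL⟩ := hstar e (hAE heA) hU
    have hρ' := hL.bin.rank
    have side : ∀ y ∈ E.erase e, ∀ q ∈ Q,
        r (insert y (insert x (Q.erase q))) = r (insert x (Q.erase q)) →
        ρ' (insert y (insert x (Q.erase q))) ≤ r E - 1 := by
      intro y hy q hq heq
      have hc := Finset.card_erase_of_mem hq
      have h5 := hr.le_card (insert x (Q.erase q))
      have h6 := Finset.card_insert_le x (Q.erase q)
      rw [hL.eq_of_lt (Finset.insert_subset hy (Finset.insert_subset hxe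
        fun z hz => hsubE z (Finset.mem_of_mem_erase hz))) (by omega)]
      omega
    have s1 := side f hfe q₂ hq₂ hq₂'
    have s2 := side g hge q₃ hq₃ hq₃'
    have hmem : q₃ ∈ Q.erase q₂ := Finset.mem_erase.2 ⟨hq23.symm, hq₃⟩
    have hc2 := Finset.card_erase_of_mem hq₂
    have hc3 := Finset.card_erase_of_mem hmem
    have hDQ : (Q.erase q₂).erase q₃ ⊆ Q := (Finset.erase_subset _ _).trans (Finset.erase_subset _ _)
    have hDr : r (insert x ((Q.erase q₂).erase q₃)) = r E - 2 := by
      rw [hr.indep_subset hind (Finset.insert_subset_insert _ hDQ),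
        Finset.card_insert_of_notMem (fun h => hxQ (hDQ h))]
      have := Finset.card_pos.2 ⟨_, hmem⟩
      omega
    have hDρ : ρ' (insert x ((Q.erase q₂).erase q₃)) = r E - 2 := by
      rw [hL.eq_of_lt (Finset.insert_subset hxe fun z hz => hsubE z (hDQ hz)) (by omega), hDr]
    have hsub := hρ'.sub (A := E.erase e) (B := insert x ((Q.erase q₂).erase q₃))
      (X := insert f (insert x (Q.erase q₂))) (Y := insert g (insert x (Q.erase q₃))) (by
        intro y hy
        rw [Finset.mem_erase] at hy
        have h1 := hcover y hy.2
        rw [hA] at h1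
        clear * - hy h1 hq23
        grind) (by clear * -; grind)
    rw [hL.top, hDρ] at hsub
    omega
  obtain ⟨e, he, hq⟩ := key
  have hc := h.conn_of_two h2 he
  obtain ⟨f, hf⟩ : (A.erase e).Nonempty := by
    rw [← Finset.card_pos, Finset.card_erase_of_mem he]; omega
  rw [Finset.mem_erase] at hf
  refine ⟨e, hAE he, h.goal1 he hc hq (Or.inl h2.le), ?_,
    h.goal3 (a₁ := f) (a₂ := f) he ?_ hf.1 hf.1⟩
  · -- contract `e` and all but two elements `q`, `q'` of `Q`
    obtain ⟨q, hqQ, q', hqQ', hqq⟩ := Finset.one_lt_card.1 (show 1 < Q.card by omega)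
    have hmem : q' ∈ Q.erase q := Finset.mem_erase.2 ⟨hqq.symm, hqQ'⟩
    have hc1 := Finset.card_erase_of_mem hqQ
    have hc2 := Finset.card_erase_of_mem hmem
    have hDQ : (Q.erase q).erase q' ⊆ Q := (Finset.erase_subset _ _).trans (Finset.erase_subset _ _)
    have hfx : f ≠ x := fun heq => hxA (heq ▸ hf.2)
    have hxq : x ≠ q := fun heq => hxQ (heq ▸ hqQ)
    have hxq' : x ≠ q' := fun heq => hxQ (heq ▸ hqQ')
    have hqf : q ≠ f := fun heq => hQA _ hqQ (heq ▸ hf.2)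
    have hqf' : q' ≠ f := fun heq => hQA _ hqQ' (heq ▸ hf.2)
    have heQ : e ∉ Q := fun h => hQA e h he
    have hfE := hAE hf.2
    have heE := hAE he
    have hQ'E : ({x, q, q', f} : Finset α) ⊆ E := by
      have h1 := hQE' hqQ
      have h2 := hQE' hqQ'
      clear * - h1 h2 hxE hfE
      grind
    set D := (Q.erase q).erase q' with hD
    have hKE : insert e D ⊆ E := Finset.insert_subset heE (hDQ.trans hQE')
    have hKr : r (insert e D) ≤ r E - 2 := by
      have h3 := hr.le_card (insert e D)
      have h4 := Finset.card_insert_le e D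
      omega
    have hxq1 : ∀ p ∈ Q, r E ≤ r (insert e (insert x (Q.erase p))) := by
      intro p hp
      have h3 := hq p hp
      have h4 := hr.mono _ _ (Finset.subset_insert e (insert x (Q.erase p)))
      have h5 := hr.indep_subset hind (Finset.insert_subset_insert x (Finset.erase_subset p Q))
      rw [Finset.card_insert_of_notMem (fun h => hxQ (Finset.mem_of_mem_erase h)),
        Finset.card_erase_of_mem hp] at h5
      omega
    have e1 : r E ≤ r (insert x (insert q (insert e D))) := by
      have h3 := hxq1 q' hqQ'
      rwa [show insert e (insert x (Q.erase q')) = insert x (insert q (insert e D)) by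
        rw [hD]; clear * - hqQ hqq; grind] at h3
    have e2 : r E ≤ r (insert x (insert q' (insert e D))) := by
      have h3 := hxq1 q hqQ
      rwa [show insert e (insert x (Q.erase q)) = insert x (insert q' (insert e D)) by
        rw [hD]; clear * - hqQ' hqq; grind] at h3
    have e3 : r E ≤ r (insert q (insert q' (insert e D))) := by
      rw [show insert q (insert q' (insert e D)) = insert e Q by
        rw [hD]; clear * - hqQ hqQ' hqq; grind, hsingQ e he]
    have e4 : r E ≤ r (insert q (insert f (insert e D))) := by
      rw [show insert q (insert f (insert e D)) = insert e (insert f (Q.erase q')) by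
        rw [hD]; clear * - hqQ hqQ' hqq; grind, hpairQ e he f hf.2 hf.1.symm _
          (Finset.erase_subset _ _) (by rw [Finset.card_erase_of_mem hqQ']; omega)]
    have e5 : r E ≤ r (insert q' (insert f (insert e D))) := by
      rw [show insert q' (insert f (insert e D)) = insert e (insert f (Q.erase q)) by
        rw [hD]; clear * - hqQ hqQ' hqq; grind, hpairQ e he f hf.2 hf.1.symm _
          (Finset.erase_subset _ _) (by omega)]
    have e6 : r E ≤ r (insert x (insert f (insert e D))) := by
      have hefA : {e, f} ⊆ A := by clear * - he hf; grind
      have h3 : ∀ y ∈ A, r (insert y {e, f}) = r {e, f} := by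
        intro y hy
        have h4 := h.simple {e, f} (hefA.trans hAE) Finset.card_le_two
        rw [Finset.card_pair hf.1.symm] at h4
        have h5 := hr.mono (insert y {e, f}) A (Finset.insert_subset hy hefA)
        have h6 := h.lift.trunc A h.sub
        have h7 := hr.mono _ _ (Finset.subset_insert y {e, f})
        omega
      have h4 := hr.cl_union (X := insert x (insert f (insert e D))) (Y := A) fun y hy =>
        hr.cl_mono (h3 y hy) (by clear * -; grind)
      have h5 := h.tc.2 {q, q'} (by
        have h6 := hQE' hqQ
        have h7 := hQE' hqQ'
        clear * - h6 h7; grind) (by rw [Finset.card_pair hqq]) (by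
        have h6 : A ⊆ E \ {q, q'} := by
          have h6 := hQA q hqQ
          have h7 := hQA q' hqQ'
          clear * - h6 h7 hAE; grind
        have := Finset.card_le_card h6
        omega)
      have h6 := hr.le_card {q, q'}
      rw [Finset.card_pair hqq] at h6
      have h7 := hr.mono (E \ {q, q'}) (insert x (insert f (insert e D)) ∪ A) (by
        intro y hy
        rw [Finset.mem_sdiff] at hy
        have h8 := hcover y hy.1
        rw [hD]
        clear * - hy h8; grind)
      omega
    refine ⟨insert e D, {x, q, q', f}, by simp, hKE, hQ'E, ?_, ?_, ?_⟩
    · exact Finset.card_eq_four.2 ⟨x, q, q', f, hxq, hxq', hfx.symm, hqq, hqf, hqf', rfl⟩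
    · have h3 := hr.mono (insert e D ∪ {x, q, q', f}) E (Finset.union_subset hKE hQ'E)
      have h4 := hr.unit x (insert q (insert e D))
      have h5 := hr.unit q (insert e D)
      omega
    · intro T hT hT2
      obtain ⟨y, z, hyz, rfl⟩ := Finset.card_eq_two.1 hT2
      have hy : y ∈ ({x, q, q', f} : Finset α) := hT (by simp)
      have hz : z ∈ ({x, q, q', f} : Finset α) := hT (by simp)
      suffices hsuff : r E ≤ r (insert y (insert z (insert e D))) by
        rw [show insert e D ∪ {y, z} = insert y (insert z (insert e D)) by clear * -; grind]
        omega
      simp only [Finset.mem_insert, Finset.mem_singleton] at hy hz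
      clear_value D
      rcases hy with rfl | rfl | rfl | rfl <;> rcases hz with rfl | rfl | rfl | rfl <;>
        first
        | exact absurd rfl hyz
        | assumption
        | (rw [Finset.insert_comm]; assumption)
  · intro S hS hS3 _
    have h3 : S = A := Finset.eq_of_subset_of_card_le (h.bin_A.sub S hS) (by omega)
    left
    rw [h3]
    exact hf.2

end Setup
end

/-! ### Small corank and existence of the lift -/

section
variable {α : Type u} [DecidableEq α] {r : Finset α → ℕ} {E : Finset α}

/-- A 3-connected matroid of corank two is uniform, and then every element has the required
properties. -/
lemma works_of_card_eq (hr : RankFn r) (htc : TC r E) (h3 : 3 ≤ r E) (hcard : E.card = r E + 2)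
    {e : α} (he : e ∈ E) : Works r E e := by
  have hbase : ∀ X ⊆ E, X.card = r E → r X = X.card := by
    intro X hX hc
    have h1 : (E \ X).card = 2 := by rw [Finset.card_sdiff_of_subset hX]; omega
    have h2 := htc.2 X hX (by omega) (by omega)
    have h4 := hr.le_card (E \ X)
    have h5 := hr.le_card X
    omega
  have hunif : ∀ X ⊆ E, r X = min X.card (r E) := by
    intro X hX
    rcases le_total X.card (r E) with hle | hle
    · obtain ⟨B, hXB, hBE, hB⟩ := Finset.exists_subsuperset_card_eq hX hle (by omega)
      rw [hr.indep_subset (hbase B hBE hB) hXB]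
      omega
    · obtain ⟨B, hBX, hB⟩ := Finset.exists_subset_card_eq hle
      have h1 := hbase B (hBX.trans hX) hB
      have h2 := hr.mono B X hBX
      have h4 := hr.mono X E hX
      omega
  refine ⟨?_, ?_, ?_⟩
  · intro X Y hXY hd hle
    have hc : X.card + Y.card + 1 = E.card := by
      rw [← Finset.card_union_of_disjoint hd, hXY, Finset.card_erase_add_one he]
    have hX : X ⊆ E.erase e := hXY ▸ Finset.subset_union_left
    have hY : Y ⊆ E.erase e := hXY ▸ Finset.subset_union_right
    have heX : e ∉ X := fun h => by simpa using hX h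
    have heY : e ∉ Y := fun h => by simpa using hY h
    have h1 := hunif (insert e X) (Finset.insert_subset he (hX.trans (Finset.erase_subset _ _)))
    have h2 := hunif (insert e Y) (Finset.insert_subset he (hY.trans (Finset.erase_subset _ _)))
    rw [Finset.card_insert_of_notMem heX] at h1
    rw [Finset.card_insert_of_notMem heY] at h2
    omega
  · obtain ⟨K, heK, hKE, hK⟩ := Finset.exists_subsuperset_card_eq (s := {e}) (t := E)
      (n := r E - 2) (by simpa using he) (by simp; omega) (by omega)
    have hrK := hunif K hKE
    refine ⟨K, E \ K, by simpa using heK, hKE, Finset.sdiff_subset, ?_, ?_, ?_⟩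
    · rw [Finset.card_sdiff_of_subset hKE]; omega
    · rw [Finset.union_sdiff_of_subset hKE]; omega
    · intro T hT hc
      have hd : Disjoint K T := Finset.disjoint_of_subset_right hT Finset.disjoint_sdiff
      rw [hunif (K ∪ T) (Finset.union_subset hKE (hT.trans Finset.sdiff_subset)),
        Finset.card_union_of_disjoint hd]
      omega
  · refine ⟨E.erase e, subset_rfl, ?_, ?_⟩
    · rw [Finset.card_erase_of_mem he]; omega
    · intro a ha b hb hab
      simp only [Finset.mem_erase] at ha hb
      rw [hunif {e, a, b} (by clear * - he ha hb; grind),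
        Finset.card_eq_three.2 ⟨e, a, b, ha.1.symm, hb.1.symm, hab, rfl⟩]
      omega

lemma U24R.card_ge (hr : RankFn r) (h : U24R r E) : r E + 2 ≤ E.card := by
  obtain ⟨K, Q, hd, hK, hQ, hc, h1, -⟩ := h.mk_disjoint hr
  have hKQ := Finset.union_subset hK hQ
  have h2 := hr.union_le_card (K ∪ Q) (E \ (K ∪ Q))
  rw [Finset.union_sdiff_of_subset hKQ, Finset.card_sdiff_of_subset hKQ,
    Finset.card_union_of_disjoint hd] at h2
  have h3 := Finset.card_le_card hKQ
  rw [Finset.card_union_of_disjoint hd] at h3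
  have h4 := hr.le_card K
  omega

/-- A `U₂,₄`-minor survives some deletion as soon as the corank exceeds two: the contracted set
may be taken independent. -/
lemma U24R.exists_erase (hr : RankFn r) (h : U24R r E) (hcard : r E + 3 ≤ E.card) :
    ∃ x ∈ E, U24R r (E.erase x) := by
  obtain ⟨K, Q, hd, hK, hQ, hc, h1, h2⟩ := h.mk_disjoint hr
  obtain ⟨B, -, hBK, hB, hBr⟩ := hr.exists_basis (I := ∅) (X := K) (by simp [hr.empty]) (by simp)
  have hcl : ∀ T, r (B ∪ T) = r (K ∪ T) := by
    intro T
    have h3 := hr.sub (A := K ∪ T) (B := B) (X := K) (Y := B ∪ T) (by clear * - hBK; grind)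
      (by clear * - hBK; grind)
    have h4 := hr.mono (B ∪ T) (K ∪ T) (Finset.union_subset_union_left hBK)
    omega
  have hBQ : B ∪ Q ⊆ E := Finset.union_subset (hBK.trans hK) hQ
  obtain ⟨x, hxE, hx⟩ : ∃ x ∈ E, x ∉ B ∪ Q := by
    by_contra! hcon
    have h3 : (B ∪ Q) = E := hBQ.antisymm hcon
    have h4 := Finset.card_union_of_disjoint (Finset.disjoint_of_subset_left hBK hd)
    obtain ⟨T, hT, hTc⟩ := Finset.exists_subset_card_eq (s := Q) (n := 2) (by omega)
    have h6 := h2 T hT hTc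
    have h7 := hr.mono (K ∪ T) E (Finset.union_subset hK (hT.trans hQ))
    rw [h3] at h4
    omega
  refine ⟨x, hxE, B, Q, ?_, ?_, hc, ?_, ?_⟩
  · clear * - hBQ hx; grind
  · clear * - hBQ hx; grind
  · rw [hcl, hBr]; exact h1
  · intro T hT hTc
    rw [hcl, hBr]; exact h2 T hT hTc

lemma TC.erase (hr : RankFn r) (htc : TC r E) (hc : 5 ≤ E.card) {x : α} (hx : x ∈ E) :
    r (E.erase x) = r E := by
  have hcx := Finset.card_erase_of_mem hx
  have h1 := htc.1 {x} (by simpa using hx) (by simp)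
    (by rw [Finset.sdiff_singleton_eq_erase]; omega)
  have h2 := hr.le_card {x}
  have h3 := hr.mono _ _ (Finset.erase_subset x E)
  rw [Finset.sdiff_singleton_eq_erase] at h1
  rw [Finset.card_singleton] at h2
  omega

lemma TC.simple (hr : RankFn r) (htc : TC r E) (hc : 5 ≤ E.card) :
    ∀ X ⊆ E, X.card ≤ 2 → r X = X.card := by
  have hpair : ∀ X ⊆ E, X.card = 2 → r X = X.card := by
    intro X hX hXc
    have h0 := Finset.card_sdiff_of_subset hX
    have h1 := htc.2 X hX (by omega) (by omega)
    have h2 := hr.le_card X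
    have h3 := hr.mono (E \ X) E Finset.sdiff_subset
    omega
  intro X hX hXc
  obtain ⟨B, hXB, hBE, hB⟩ := Finset.exists_subsuperset_card_eq hX hXc (by omega)
  exact hr.indep_subset (hpair B hBE hB) hXB

end

theorem statement_14 {α : Type u} (M : Matroid α) (h3 : ThreeConnected M)
    (hex : ExcludedMinorBL M) (hU : HasU24Minor M) (hcr : 3 ≤ eRank M✶) :
    ∃ e ∈ M.E, ∀ N', IsCosimplification (del M {e}) N' →
      eRank M ≤ eRank N' + 3 ∧ ThreeConnected N' ∧ HasU24Minor N' := by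
  classical
  obtain ⟨E, hE⟩ := hex.finite.exists_finset_coe
  replace hE := hE.symm
  have hr := rk_rankFn M✶
  have htc : TC (rk M✶) E :=
    ((threeConnected_iff hE).1 h3).dual (rk_rankFn M) fun X hX => rk_dual hE hX
  have hU' : U24R (rk M✶) E :=
    ((hasU24_iff hE).1 hU).dual (rk_rankFn M) fun X hX => rk_dual hE hX
  have hr3 : 3 ≤ rk M✶ E := by
    rw [eRank_eq, ← rk_ground (P := M✶) (E := E) (by simpa using hE)] at hcr
    exact_mod_cast hcr
  have hc2 := hU'.card_ge hr
  have hs := htc.simple hr (by omega)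
  obtain ⟨e, he, hw⟩ : ∃ e ∈ E, Works (rk M✶) E e := by
    rcases Nat.lt_or_ge (rk M✶ E + 2) E.card with hlt | hge
    · have hstar : ∀ x ∈ E, U24R (rk M✶) (E.erase x) →
          ∃ (V : Type u) (s t : α → V) (ρ : Finset α → ℕ), Lift (rk M✶) E x s t ρ := by
        intro x hx hUx
        obtain ⟨V, s, t, ρ, h1, h2, h4⟩ := star hE
          (hex.2 _ (con_strict (by rw [hE]; exact_mod_cast hx))) hUx (by omega)
          (htc.erase hr (by omega) hx)
        exact ⟨V, s, t, ρ, h1, h2, h4⟩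
      obtain ⟨x, A, V, s, t, ρ, hset⟩ :=
        exists_setup hr htc hs hr3 (by omega) hstar (hU'.exists_erase hr (by omega))
      rcases hset.two_le.eq_or_lt with h2 | h2
      · exact hset.exists_of_two h2.symm hstar
      · exact hset.exists_of_three_le h2
    · have hne : E.Nonempty := Finset.card_pos.1 (by omega)
      obtain ⟨e, he⟩ := hne
      exact ⟨e, he, works_of_card_eq hr htc hr3 (by omega) he⟩
  refine ⟨e, by rw [hE]; exact_mod_cast he, fun N' hN' => ?_⟩
  refine transfer hE he (fun a ha b hb hab => ?_) htc (by omega) hw.1 hw.2.1 hw.2.2 hN'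
  rw [hs {a, b} (by clear * - ha hb; grind) Finset.card_le_two, Finset.card_pair hab]

end BLFormal
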